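/- Fix a positive integer m, an integer s with gcd(s, m) = 1, and B > 0. There exist constants C > 0 and C' > 0 such that for all real x ≥ 2, all positive integers q ≤ (log x)^B, and all integers r with gcd(r, q) = 1, writing d = gcd(q, m) and q₀ = q/d: |ϑ_s(x; q, r) − δ·x/φ(q₀m)| ≤ C'·x·exp(−C·(log x)^{1/2}), where δ = 1 if r ≡ s (mod d) and δ = 0 otherwise. -/

import Mathlib

/-- `ϑ_s(x; q, r) = ∑_{p ≤ x, p prime, p ≡ r (mod q), p ≡ s (mod m)} log p`. -/
noncomputable def thetaSum (m : ℕ) (s : ℤ) (x : ℝ) (q : ℕ) (r : ℤ) : ℝ :=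
  ∑ p ∈ (Finset.range (⌊x⌋₊ + 1)).filter
      (fun p => Nat.Prime p ∧ (p : ℤ) ≡ r [ZMOD (q : ℤ)] ∧ (p : ℤ) ≡ s [ZMOD (m : ℤ)]),
    Real.log p

/-!
If `r ≡ s (mod d)`, the two congruences on `p` amount to a single reduced residue class modulo
`lcm(q, m) = q₀ m ≤ m (log x)^B`, and otherwise no prime satisfies both; so the claim is the
Siegel–Walfisz theorem for a modulus `N ≤ M (log x)^B`.

A character modulo `N` has no zeros near `re s = 1` up to height `exp(c √(log x))`: the inequality
`3 + 4 cos θ + cos 2θ ≥ 0` excludes all but a real zero of a quadratic character, and Siegel's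
theorem keeps that zero away from `1`. The latter follows Estermann: at `s = 2` the product
`L(s, 1) L(s, χ₁) L(s, χ₂) L(s, χ₁ χ₂)` has derivatives of alternating sign, so a zero of `L(s, χ₁)`
close to `1` bounds `L(1, χ₂)` from below, and hence repels the real zeros of `L(s, χ₂)`.

Shifting the contour in Perron's formula with the weight `1 - n / X`, whose Mellin transform
`1 / (s (s + 1))` makes all integrals absolutely convergent, estimates the Cesàro sums of
`χ(n) Λ(n)`. Orthogonality of characters isolates the residue class, differencing the Cesàro sums
gives `ψ(x; N, a)`, and discarding the prime powers gives `θ(x; N, a)`.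
-/

namespace SiegelWalfisz

open Complex Metric Set MeasureTheory Filter Topology DirichletCharacter

section LogDerivBounds

lemma exists_eq_mul_exp_of_ne_zero_on_ball {f : ℂ → ℂ} {c : ℂ} {R : ℝ} (hR : 0 < R)
    (hf : DifferentiableOn ℂ f (ball c R)) (hne : ∀ z ∈ ball c R, f z ≠ 0) :
    ∃ F : ℂ → ℂ, F c = 0 ∧ (∀ z ∈ ball c R, HasDerivAt F (logDeriv f z) z) ∧
      ∀ z ∈ ball c R, f z = f c * cexp (F z) := by
  have hc : c ∈ ball c R := mem_ball_self hR
  obtain ⟨F, hFc, hF⟩ :=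
    ((hf.deriv isOpen_ball).div hf hne).isExactOn_ball.with_val_at c 0
  have hexp : ∀ z ∈ ball c R, HasDerivAt (cexp ∘ F) (cexp (F z) * logDeriv f z) z :=
    fun z hz ↦ (hF z hz).cexp
  have hlog : EqOn (logDeriv f) (logDeriv (cexp ∘ F)) (ball c R) := fun z hz ↦ by
    rw [logDeriv_apply (cexp ∘ F), (hexp z hz).deriv, Function.comp_apply,
      mul_div_cancel_left₀ _ (Complex.exp_ne_zero _)]
  obtain ⟨a, -, ha⟩ := (logDeriv_eqOn_iff hf
    (fun z hz ↦ (hexp z hz).differentiableAt.differentiableWithinAt) isOpen_ball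
    (convex_ball c R).isPreconnected (fun z _ ↦ Complex.exp_ne_zero _) hne).mp hlog
  have hac : f c = a := by simpa [hFc] using ha hc
  exact ⟨F, hFc, hF, fun z hz ↦ by simpa [hac] using ha hz⟩

lemma norm_deriv_le_of_re_le {F : ℂ → ℂ} {c z : ℂ} {R M : ℝ} (hM : 0 < M)
    (hF : DifferentiableOn ℂ F (ball c R)) (hFc : F c = 0) (hre : ∀ w ∈ ball c R, (F w).re ≤ M)
    (hR : 0 < R) (hz : ‖z - c‖ ≤ 3 / 4 * R) : ‖deriv F z‖ ≤ 126 * M / R := by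
  have hbound : ∀ w ∈ ball c (7 / 8 * R), ‖F w‖ ≤ 14 * M := by
    intro w hw
    have hw' : ‖w - c‖ < 7 / 8 * R := by simpa [dist_eq_norm] using hw
    have hmaps : MapsTo (fun u ↦ c + u) (ball 0 R) (ball c R) := fun u hu ↦ by
      simpa [dist_eq_norm] using hu
    have := borelCaratheodory_zero (f := fun u ↦ F (c + u)) (z := w - c) hM
      (hF.comp (by fun_prop) hmaps) (fun u hu ↦ hre _ (hmaps hu)) hR
      (by simp only [mem_ball_zero_iff]; linarith) (by simpa using hFc)
    rw [add_sub_cancel] at this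
    refine this.trans ?_
    rw [div_le_iff₀ (by linarith)]
    nlinarith
  have hsub : closedBall z (R / 9) ⊆ ball c (7 / 8 * R) :=
    closedBall_subset_ball' (by rw [dist_eq_norm]; linarith)
  have hdiff : DiffContOnCl ℂ F (ball z (R / 9)) := by
    refine DifferentiableOn.diffContOnCl ?_
    rw [closure_ball _ (by positivity)]
    exact hF.mono (hsub.trans (ball_subset_ball (by linarith)))
  calc ‖deriv F z‖ ≤ 14 * M / (R / 9) :=
        norm_deriv_le_of_forall_mem_sphere_norm_le (by positivity) hdiff
          fun w hw ↦ hbound w (hsub (sphere_subset_closedBall hw))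
    _ = 126 * M / R := by field_simp; norm_num

lemma norm_logDeriv_le_of_ne_zero_on_ball {f : ℂ → ℂ} {c z : ℂ} {R A : ℝ} (hR : 0 < R)
    (hf : DifferentiableOn ℂ f (ball c R)) (hA : ∀ w ∈ ball c R, ‖f w‖ ≤ A)
    (hne : ∀ w ∈ ball c R, f w ≠ 0) (hz : ‖z - c‖ ≤ 3 / 4 * R) :
    ‖logDeriv f z‖ ≤ 126 * Real.log (A / ‖f c‖) / R := by
  have hc : c ∈ ball c R := mem_ball_self hR
  have hfc : 0 < ‖f c‖ := norm_pos_iff.mpr (hne c hc)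
  obtain ⟨F, hFc, hF, hexp⟩ := exists_eq_mul_exp_of_ne_zero_on_ball hR hf hne
  have hre : ∀ w ∈ ball c R, (F w).re ≤ Real.log (A / ‖f c‖) := fun w hw ↦ by
    have hw' := hA w hw
    rw [hexp w hw, norm_mul, Complex.norm_exp, mul_comm, ← le_div_iff₀ hfc] at hw'
    simpa using Real.log_le_log (Real.exp_pos _) hw'
  have hzc : z ∈ ball c R := by rw [mem_ball, dist_eq_norm]; linarith
  have hlog : 0 ≤ Real.log (A / ‖f c‖) :=
    Real.log_nonneg ((one_le_div hfc).mpr (hA c hc))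
  -- Borel–Carathéodory needs a positive bound, whereas the logarithm may vanish.
  have key : ∀ ε > 0, ‖logDeriv f z‖ ≤ 126 * (Real.log (A / ‖f c‖) + ε) / R := fun ε hε ↦ by
    rw [← (hF z hzc).deriv]
    exact norm_deriv_le_of_re_le (by positivity)
      (fun w hw ↦ (hF w hw).differentiableAt.differentiableWithinAt) hFc
      (fun w hw ↦ (hre w hw).trans (by linarith)) hR hz
  refine le_of_forall_pos_le_add fun ε hε ↦ ?_
  refine (key (R / 126 * ε) (by positivity)).trans (le_of_eq ?_)
  field_simp

/-- The function `f` with one zero at `ρ` divided out by the Blaschke factor of the disc of radius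
`R` about the origin. Writing it with `dslope` removes the singularity at `ρ`. -/
noncomputable def blaschkeQuotient (R : ℝ) (ρ : ℂ) (f : ℂ → ℂ) (z : ℂ) : ℂ :=
  (R ^ 2 - (starRingEnd ℂ) ρ * z) / R * dslope f ρ z

section BlaschkeQuotient

variable {f : ℂ → ℂ} {R A : ℝ} {ρ z : ℂ}

lemma blaschkeQuotient_of_ne (hfρ : f ρ = 0) (hz : z ≠ ρ) :
    blaschkeQuotient R ρ f z = canonicalFactor R ρ z * f z := by
  rw [blaschkeQuotient, dslope_of_ne _ hz, slope_def_field, hfρ, sub_zero, canonicalFactor_apply,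
    ← div_div, div_mul_eq_mul_div _ (z - ρ), mul_div_assoc]

lemma differentiableOn_blaschkeQuotient (hf : DifferentiableOn ℂ f (closedBall 0 R))
    (hρ : ρ ∈ ball 0 R) : DifferentiableOn ℂ (blaschkeQuotient R ρ f) (closedBall 0 R) :=
  DifferentiableOn.mul (by fun_prop) ((differentiableOn_dslope
    (mem_of_superset (isOpen_ball.mem_nhds hρ) ball_subset_closedBall)).mpr hf)

lemma norm_blaschkeQuotient_le (hf : DifferentiableOn ℂ f (closedBall 0 R))
    (hA : ∀ w ∈ closedBall (0 : ℂ) R, ‖f w‖ ≤ A) (hρ : ρ ∈ ball 0 R) (hfρ : f ρ = 0)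
    (hz : z ∈ closedBall 0 R) : ‖blaschkeQuotient R ρ f z‖ ≤ A := by
  have hR : R ≠ 0 := (pos_of_mem_ball hρ).ne'
  refine norm_le_of_forall_mem_frontier_norm_le (U := ball (0 : ℂ) R) isBounded_ball
    (DifferentiableOn.diffContOnCl ?_) (fun w hw ↦ ?_) (by rwa [closure_ball _ hR])
  · rw [closure_ball _ hR]
    exact differentiableOn_blaschkeQuotient hf hρ
  · rw [frontier_ball _ hR] at hw
    have hwρ : w ≠ ρ := by rintro rfl; exact sphere_disjoint_ball.ne_of_mem hw hρ rfl
    rw [blaschkeQuotient_of_ne hfρ hwρ, norm_mul,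
      norm_canonicalFactor_eval_circle_eq_one hρ hw, one_mul]
    exact hA w (sphere_subset_closedBall hw)

lemma eq_zero_of_blaschkeQuotient_eq_zero (hρ : ρ ∈ ball 0 R) (hfρ : f ρ = 0)
    (hz : z ∈ ball 0 R) (h : blaschkeQuotient R ρ f z = 0) : f z = 0 := by
  rcases eq_or_ne z ρ with rfl | hzρ
  · exact hfρ
  · rw [blaschkeQuotient_of_ne hfρ hzρ] at h
    exact (mul_eq_zero.mp h).resolve_left
      (canonicalFactor_ne_zero hρ (ball_subset_closedBall hz) hzρ)

lemma two_mul_norm_le_norm_blaschkeQuotient_zero (hR : 0 < R) (hfρ : f ρ = 0)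
    (hρ0 : ρ ≠ 0) (hρ : ‖ρ‖ ≤ R / 2) : 2 * ‖f 0‖ ≤ ‖blaschkeQuotient R ρ f 0‖ := by
  have hfactor : ‖canonicalFactor R ρ 0‖ = R / ‖ρ‖ := by
    simp only [canonicalFactor_apply, mul_zero, sub_zero, zero_sub, norm_div, norm_pow, norm_mul,
      norm_neg, norm_real, Real.norm_of_nonneg hR.le]
    field_simp
  rw [blaschkeQuotient_of_ne hfρ hρ0.symm, norm_mul, hfactor]
  gcongr
  rw [le_div_iff₀ (norm_pos_iff.mpr hρ0)]
  linarith

/-- The real part of the contribution of a zero `ρ` to `logDeriv f c`, corrected by the Blaschke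
factor of the disc of radius `R` about `c`: it is `Re (1 / (c - ρ))` up to the factor
`1 - ‖ρ - c‖ ^ 2 / R ^ 2`. -/
noncomputable def zeroTerm (R : ℝ) (c ρ : ℂ) : ℝ :=
  (c.re - ρ.re) / ‖ρ - c‖ ^ 2 * (1 - ‖ρ - c‖ ^ 2 / R ^ 2)

lemma zeroTerm_nonneg {c : ℂ} (hR : 0 < R) (hρ : ‖ρ - c‖ ≤ R) (hre : ρ.re ≤ c.re) :
    0 ≤ zeroTerm R c ρ := by
  refine mul_nonneg (div_nonneg (by linarith) (by positivity)) ?_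
  rw [sub_nonneg, div_le_one (by positivity)]
  gcongr

lemma logDeriv_canonicalFactor_zero (hR : R ≠ 0) (hρ0 : ρ ≠ 0) :
    logDeriv (canonicalFactor R ρ) 0 = 1 / ρ - (starRingEnd ℂ) ρ / R ^ 2 := by
  have hRC : (R : ℂ) ≠ 0 := by exact_mod_cast hR
  have hnum : HasDerivAt (fun z : ℂ ↦ (R : ℂ) ^ 2 - (starRingEnd ℂ) ρ * z)
      (-(starRingEnd ℂ) ρ) 0 := by
    simpa using ((hasDerivAt_id (0 : ℂ)).const_mul ((starRingEnd ℂ) ρ)).const_sub ((R : ℂ) ^ 2)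
  have hden : HasDerivAt (fun z : ℂ ↦ (R : ℂ) * (z - ρ)) R 0 := by
    simpa using ((hasDerivAt_id (0 : ℂ)).sub_const ρ).const_mul (R : ℂ)
  rw [canonicalFactor_def, logDeriv_div _ (by simpa using hR) (by simp [hR, hρ0])
    hnum.differentiableAt hden.differentiableAt, logDeriv_apply, logDeriv_apply, hnum.deriv,
    hden.deriv]
  field_simp
  ring

lemma re_logDeriv_zero_eq_add_zeroTerm (hR : 0 < R) (hf : DifferentiableAt ℂ f 0) (h0 : f 0 ≠ 0)
    (hρ : ρ ∈ ball 0 R) (hfρ : f ρ = 0) :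
    (logDeriv f 0).re = (logDeriv (blaschkeQuotient R ρ f) 0).re + zeroTerm R 0 ρ := by
  have hρ0 : ρ ≠ 0 := by rintro rfl; exact h0 hfρ
  have heq : blaschkeQuotient R ρ f =ᶠ[𝓝 0] fun z ↦ canonicalFactor R ρ z * f z :=
    (isOpen_ne.eventually_mem hρ0.symm).mono fun z hz ↦ blaschkeQuotient_of_ne hfρ hz
  have hmul : logDeriv (blaschkeQuotient R ρ f) 0 =
      1 / ρ - (starRingEnd ℂ) ρ / R ^ 2 + logDeriv f 0 := by
    rw [(logDeriv_congr_nhds heq).eq_of_nhds, logDeriv_mul _ (canonicalFactor_ne_zero hρ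
      (by simp [hR.le]) hρ0.symm) h0 (analyticOnNhd_canonicalFactor R ρ 0
      hρ0.symm).differentiableAt hf, logDeriv_canonicalFactor_zero hR.ne' hρ0]
  have hconj : ((starRingEnd ℂ) ρ / (R : ℂ) ^ 2).re = ρ.re / R ^ 2 := by
    rw [← Complex.ofReal_pow, Complex.div_ofReal_re, Complex.conj_re]
  have hnorm : ‖ρ‖ ≠ 0 := norm_ne_zero_iff.mpr hρ0
  rw [hmul, add_re, sub_re, hconj, one_div, inv_re, normSq_eq_norm_sq, zeroTerm]
  simp only [zero_re, zero_sub, sub_zero]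
  field_simp
  ring

end BlaschkeQuotient

lemma log_div_norm_blaschkeQuotient_le {f : ℂ → ℂ} {R A : ℝ} {ρ : ℂ} (hR : 0 < R)
    (hA : ‖f 0‖ ≤ A) (h0 : f 0 ≠ 0) (hρ : ‖ρ‖ ≤ R / 2) (hfρ : f ρ = 0) :
    Real.log (A / ‖blaschkeQuotient R ρ f 0‖) ≤ Real.log (A / ‖f 0‖) := by
  have hf0 : 0 < ‖f 0‖ := norm_pos_iff.mpr h0
  have hg0 := two_mul_norm_le_norm_blaschkeQuotient_zero hR hfρ (by rintro rfl; exact h0 hfρ) hρ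
  have hg0' : 0 < ‖blaschkeQuotient R ρ f 0‖ := by linarith
  have hA0 : 0 < A := hf0.trans_le hA
  gcongr
  linarith

lemma neg_le_re_logDeriv_zero {f : ℂ → ℂ} {R A : ℝ} (hR : 0 < R)
    (hf : DifferentiableOn ℂ f (closedBall 0 R)) (hA : ∀ z ∈ closedBall (0 : ℂ) R, ‖f z‖ ≤ A)
    (h0 : f 0 ≠ 0) (hre : ∀ z ∈ ball (0 : ℂ) R, f z = 0 → z.re ≤ 0) :
    -(252 * Real.log (A / ‖f 0‖) / R) ≤ (logDeriv f 0).re := by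
  obtain ⟨n, hn⟩ := pow_unbounded_of_one_lt (A / ‖f 0‖) one_lt_two
  rw [div_lt_iff₀ (norm_pos_iff.mpr h0)] at hn
  -- Dividing out a zero at least doubles `‖f 0‖` without increasing the bound `A`, so fewer
  -- than `n` divisions are possible.
  induction n generalizing f with
  | zero => linarith [hA 0 (by simp [hR.le])]
  | succ n ih =>
    by_cases hz : ∃ ρ : ℂ, ‖ρ‖ ≤ R / 2 ∧ f ρ = 0
    · obtain ⟨ρ, hρ, hfρ⟩ := hz
      have hρR : ρ ∈ ball 0 R := by rw [mem_ball_zero_iff]; linarith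
      have hρ0 : ρ ≠ 0 := by rintro rfl; exact h0 hfρ
      have hg0 := two_mul_norm_le_norm_blaschkeQuotient_zero hR hfρ hρ0 hρ
      have hlog := log_div_norm_blaschkeQuotient_le hR (hA 0 (by simp [hR.le])) h0 hρ hfρ
      have hterm : 0 ≤ zeroTerm R 0 ρ :=
        zeroTerm_nonneg hR (by rw [sub_zero]; linarith) (hre ρ hρR hfρ)
      rw [re_logDeriv_zero_eq_add_zeroTerm hR (hf.differentiableAt (closedBall_mem_nhds 0 hR)) h0
        hρR hfρ]
      refine le_add_of_le_of_nonneg (le_trans ?_ (ih (differentiableOn_blaschkeQuotient hf hρR)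
        (fun z hz ↦ norm_blaschkeQuotient_le hf hA hρR hfρ hz)
        (norm_pos_iff.mp (by linarith [norm_pos_iff.mpr h0]))
        (fun z hz h ↦ hre z hz (eq_zero_of_blaschkeQuotient_eq_zero hρR hfρ hz h)) ?_)) hterm
      · gcongr
      · calc A < 2 ^ n * (2 * ‖f 0‖) := by rwa [pow_succ, mul_assoc] at hn
          _ ≤ _ := by gcongr
    · push Not at hz
      have hsub : ball (0 : ℂ) (R / 2) ⊆ closedBall 0 R :=
        (ball_subset_ball (by linarith)).trans ball_subset_closedBall
      have hlog := norm_logDeriv_le_of_ne_zero_on_ball (z := 0) (by positivity) (hf.mono hsub)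
        (fun z hz ↦ hA z (hsub hz)) (fun z hz' ↦ hz z (mem_ball_zero_iff.mp hz').le)
        (by rw [sub_zero, norm_zero]; positivity)
      calc -(252 * Real.log (A / ‖f 0‖) / R) = -(126 * Real.log (A / ‖f 0‖) / (R / 2)) := by
            field_simp; ring
        _ ≤ _ := (abs_le.mp ((abs_re_le_norm _).trans hlog)).1

lemma sum_zeroTerm_le_re_logDeriv_zero {f : ℂ → ℂ} {R A : ℝ} (hR : 0 < R) (S : Finset ℂ)
    (hf : DifferentiableOn ℂ f (closedBall 0 R)) (hA : ∀ z ∈ closedBall (0 : ℂ) R, ‖f z‖ ≤ A)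
    (h0 : f 0 ≠ 0) (hre : ∀ z ∈ ball (0 : ℂ) R, f z = 0 → z.re ≤ 0)
    (hS : ∀ ρ ∈ S, ‖ρ‖ ≤ R / 2 ∧ f ρ = 0) :
    ∑ ρ ∈ S, zeroTerm R 0 ρ - 252 * Real.log (A / ‖f 0‖) / R ≤ (logDeriv f 0).re := by
  induction S using Finset.induction_on generalizing f with
  | empty => simpa using neg_le_re_logDeriv_zero hR hf hA h0 hre
  | insert ρ S hρS ih =>
    obtain ⟨hρ, hfρ⟩ := hS ρ (Finset.mem_insert_self ρ S)
    have hρR : ρ ∈ ball 0 R := by rw [mem_ball_zero_iff]; linarith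
    have hρ0 : ρ ≠ 0 := by rintro rfl; exact h0 hfρ
    have hg0 := two_mul_norm_le_norm_blaschkeQuotient_zero hR hfρ hρ0 hρ
    have hlog := log_div_norm_blaschkeQuotient_le hR (hA 0 (by simp [hR.le])) h0 hρ hfρ
    have hquot := ih (differentiableOn_blaschkeQuotient hf hρR)
      (fun z hz ↦ norm_blaschkeQuotient_le hf hA hρR hfρ hz)
      (norm_pos_iff.mp (by linarith [norm_pos_iff.mpr h0]))
      (fun z hz h ↦ hre z hz (eq_zero_of_blaschkeQuotient_eq_zero hρR hfρ hz h))
      (fun ρ' hρ' ↦ by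
        obtain ⟨hρ'R, hfρ'⟩ := hS ρ' (Finset.mem_insert_of_mem hρ')
        have hne : ρ' ≠ ρ := by rintro rfl; exact hρS hρ'
        exact ⟨hρ'R, by rw [blaschkeQuotient_of_ne hfρ hne, hfρ', mul_zero]⟩)
    have hlog' : 252 * Real.log (A / ‖blaschkeQuotient R ρ f 0‖) / R ≤
        252 * Real.log (A / ‖f 0‖) / R := by gcongr
    rw [Finset.sum_insert hρS, re_logDeriv_zero_eq_add_zeroTerm hR
      (hf.differentiableAt (closedBall_mem_nhds 0 hR)) h0 hρR hfρ]
    linarith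

lemma sum_zeroTerm_le_re_logDeriv {f : ℂ → ℂ} {c : ℂ} {R A : ℝ} (hR : 0 < R) (S : Finset ℂ)
    (hf : DifferentiableOn ℂ f (closedBall c R)) (hA : ∀ z ∈ closedBall c R, ‖f z‖ ≤ A)
    (h0 : f c ≠ 0) (hre : ∀ z ∈ ball c R, f z = 0 → z.re ≤ c.re)
    (hS : ∀ ρ ∈ S, ‖ρ - c‖ ≤ R / 2 ∧ f ρ = 0) :
    ∑ ρ ∈ S, zeroTerm R c ρ - 252 * Real.log (A / ‖f c‖) / R ≤ (logDeriv f c).re := by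
  classical
  have hmaps : MapsTo (fun z ↦ z + c) (closedBall 0 R) (closedBall c R) := fun z hz ↦ by
    simpa [dist_eq_norm] using hz
  have h := sum_zeroTerm_le_re_logDeriv_zero hR (S.image (· - c)) (f := fun z ↦ f (z + c))
    (hf.comp (by fun_prop) hmaps) (fun z hz ↦ hA _ (hmaps hz)) (by simpa using h0)
    (fun z hz h ↦ by simpa using hre (z + c) (by simpa [dist_eq_norm] using hz) h)
    (fun ρ hρ ↦ by
      obtain ⟨ρ', hρ', rfl⟩ := Finset.mem_image.mp hρ
      simpa using hS ρ' hρ')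
  rw [Finset.sum_image fun a _ b _ h ↦ by simpa using h] at h
  simpa [zeroTerm, logDeriv_apply, deriv_comp_add_const] using h

end LogDerivBounds

section MellinTail

/-- The tail `∫₁^∞ E(t) t^(-(s+1)) dt` of the Mellin transform of `E` at `-s`; partial summation
writes Dirichlet series in this form. -/
noncomputable def mellinTail (E : ℝ → ℂ) (s : ℂ) : ℂ :=
  ∫ t in Ioi (1 : ℝ), E t * (t : ℂ) ^ (-(s + 1))

variable {E : ℝ → ℂ} {K : ℝ} {s : ℂ}

lemma norm_mul_cpow_neg_add_one_le (hK : ∀ t > 1, ‖E t‖ ≤ K) (s : ℂ) {t : ℝ} (ht : 1 < t) :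
    ‖E t * (t : ℂ) ^ (-(s + 1))‖ ≤ K * t ^ (-s.re - 1) := by
  have ht0 : (0 : ℝ) < t := zero_lt_one.trans ht
  rw [norm_mul, norm_cpow_eq_rpow_re_of_pos ht0, neg_re, add_re, one_re, neg_add']
  gcongr
  exact hK t ht

lemma integrableOn_const_mul_rpow (hs : 0 < s.re) :
    IntegrableOn (fun t : ℝ ↦ K * t ^ (-s.re - 1)) (Ioi 1) :=
  (integrableOn_Ioi_rpow_of_lt (by linarith) one_pos).const_mul K

lemma norm_mellinTail_le (hK : ∀ t > 1, ‖E t‖ ≤ K) (hs : 0 < s.re) :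
    ‖mellinTail E s‖ ≤ K / s.re := by
  calc ‖mellinTail E s‖ ≤ ∫ t in Ioi (1 : ℝ), K * t ^ (-s.re - 1) :=
        norm_integral_le_of_norm_le (integrableOn_const_mul_rpow hs)
          ((ae_restrict_iff' measurableSet_Ioi).mpr
            (ae_of_all _ fun t ht ↦ norm_mul_cpow_neg_add_one_le hK s ht))
    _ = K / s.re := by
        rw [integral_const_mul, integral_Ioi_rpow_of_lt (by linarith) one_pos, Real.one_rpow,
          sub_add_cancel, neg_div_neg_eq, mul_one_div]

lemma integrableOn_mellinTail (hE : Measurable E) (hK : ∀ t > 1, ‖E t‖ ≤ K) (hs : 0 < s.re) :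
    IntegrableOn (fun t : ℝ ↦ E t * (t : ℂ) ^ (-(s + 1))) (Ioi 1) :=
  Integrable.mono' (integrableOn_const_mul_rpow hs)
    (hE.mul (by fun_prop)).aestronglyMeasurable
    ((ae_restrict_iff' measurableSet_Ioi).mpr
      (ae_of_all _ fun t ht ↦ norm_mul_cpow_neg_add_one_le hK s ht))

lemma mellinTail_eq_mellin (E : ℝ → ℂ) (s : ℂ) :
    mellinTail E s = mellin ((Ioi (1 : ℝ)).indicator E) (-s) := by
  have hind : ∀ t : ℝ, (t : ℂ) ^ (-s - 1) • (Ioi (1 : ℝ)).indicator E t =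
      (Ioi (1 : ℝ)).indicator (fun t : ℝ ↦ E t * (t : ℂ) ^ (-(s + 1))) t := fun t ↦ by
    rw [← indicator_const_smul_apply]
    simp only [indicator_apply, smul_eq_mul, mul_comm, neg_add']
  rw [mellinTail, mellin]
  simp only [hind]
  rw [setIntegral_indicator measurableSet_Ioi, inter_eq_right.mpr (Ioi_subset_Ioi zero_le_one)]

lemma differentiableAt_mellinTail (hE : Measurable E) (hK : ∀ t > 1, ‖E t‖ ≤ K) (hs : 0 < s.re) :
    DifferentiableAt ℂ (mellinTail E) s := by
  set f : ℝ → ℂ := (Ioi (1 : ℝ)).indicator E with hf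
  have hK0 : 0 ≤ K := (norm_nonneg _).trans (hK 2 one_lt_two)
  have hbound : ∀ t, ‖f t‖ ≤ K := fun t ↦ by
    rw [hf, norm_indicator_eq_indicator_norm]
    exact indicator_apply_le' (fun ht ↦ hK t ht) fun _ ↦ hK0
  have hloc : LocallyIntegrable f := fun x ↦
    ⟨Icc (x - 1) (x + 1), Icc_mem_nhds (by linarith) (by linarith),
      Measure.integrableOn_of_bounded (M := K) (by simp)
        (hE.indicator measurableSet_Ioi).aestronglyMeasurable (ae_of_all _ hbound)⟩
  have hzero : f =ᶠ[𝓝[>] 0] fun _ ↦ 0 := by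
    filter_upwards [mem_nhdsWithin_of_mem_nhds (Iio_mem_nhds one_pos)] with t ht
    exact indicator_of_notMem (notMem_Ioi.mpr ht.le) _
  have hmellin : DifferentiableAt ℂ (mellin f) (-s) :=
    mellin_differentiableAt_of_isBigO_rpow (a := 0) (b := -s.re - 1)
      (hloc.locallyIntegrableOn _)
      (Asymptotics.IsBigO.of_bound K (Eventually.of_forall fun t ↦ by simpa using hbound t))
      (by simpa) (hzero.trans_isBigO (Asymptotics.isBigO_zero _ _)) (by simp)
  rw [funext (mellinTail_eq_mellin E)]
  exact hmellin.comp s differentiableAt_id.neg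

lemma mellinTail_conj (hE : ∀ t, (starRingEnd ℂ) (E t) = E t) (s : ℂ) :
    mellinTail E ((starRingEnd ℂ) s) = (starRingEnd ℂ) (mellinTail E s) := by
  rw [mellinTail, mellinTail, ← integral_conj]
  refine setIntegral_congr_fun measurableSet_Ioi fun t ht ↦ ?_
  have harg : (t : ℂ).arg ≠ Real.pi := by
    rw [arg_ofReal_of_nonneg (zero_lt_one.trans ht).le]
    exact Real.pi_ne_zero.symm
  have hexp : -((starRingEnd ℂ) s + 1) = (starRingEnd ℂ) (-(s + 1)) := by simp
  simp only [map_mul, hE, hexp, cpow_conj _ _ harg, conj_ofReal]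

end MellinTail

lemma eqOn_re_pos_of_eqOn_one_lt_re {f g : ℂ → ℂ} (hf : DifferentiableOn ℂ f {s | 0 < s.re})
    (hg : DifferentiableOn ℂ g {s | 0 < s.re}) (h : EqOn f g {s | 1 < s.re}) :
    EqOn f g {s | 0 < s.re} := by
  have hopen : IsOpen {s : ℂ | 0 < s.re} := isOpen_lt continuous_const continuous_re
  exact (hf.analyticOnNhd hopen).eqOn_of_preconnected_of_eventuallyEq (hg.analyticOnNhd hopen)
    (convex_halfSpace_re_gt 0).isPreconnected (z₀ := 2) (by simp)
    (h.eventuallyEq_of_mem ((isOpen_lt continuous_const continuous_re).mem_nhds (by simp)))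

section PartialSums

/-- The summatory function `t ↦ ∑_{1 ≤ k ≤ t} a k`. -/
noncomputable def partialSum (a : ℕ → ℂ) (t : ℝ) : ℂ := ∑ k ∈ Finset.Icc 1 ⌊t⌋₊, a k

lemma measurable_partialSum (a : ℕ → ℂ) : Measurable (partialSum a) :=
  (measurable_from_nat (f := fun n ↦ ∑ k ∈ Finset.Icc 1 n, a k)).comp Nat.measurable_floor

lemma norm_partialSum_le_self {a : ℕ → ℂ} (ha : ∀ n, ‖a n‖ ≤ 1) {t : ℝ} (ht : 0 ≤ t) :
    ‖partialSum a t‖ ≤ t :=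
  calc ‖partialSum a t‖ ≤ ∑ _k ∈ Finset.Icc 1 ⌊t⌋₊, (1 : ℝ) := norm_sum_le_of_le _ fun k _ ↦ ha k
    _ = ⌊t⌋₊ := by simp
    _ ≤ t := Nat.floor_le ht

lemma LSeries_eq_mul_mellinTail {a : ℕ → ℂ} (ha : ∀ n, ‖a n‖ ≤ 1) {s : ℂ} (hs : 1 < s.re) :
    LSeries a s = s * mellinTail (partialSum a) s := by
  refine LSeries_eq_mul_integral a zero_le_one hs
    (LSeriesSummable_of_le_const_mul_rpow (x := 1) hs ⟨1, fun n _ ↦ by simpa using ha n⟩)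
    (Asymptotics.IsBigO.of_bound 1 (Eventually.of_forall fun n ↦ ?_))
  simpa [partialSum] using norm_partialSum_le_self ha n.cast_nonneg

end PartialSums

section CharacterSums

variable {q : ℕ} [NeZero q] {χ : DirichletCharacter ℂ q}

lemma sum_range_modulus_eq_zero (hχ : χ ≠ 1) : ∑ k ∈ Finset.range q, χ (k : ZMod q) = 0 := by
  rw [← χ.sum_eq_zero_of_ne_one hχ]
  refine Finset.sum_bij (fun k _ ↦ (k : ZMod q)) (fun _ _ ↦ Finset.mem_univ _)
    (fun a ha b hb h ↦ ?_) (fun b _ ↦ ⟨b.val, Finset.mem_range.mpr (ZMod.val_lt b), by simp⟩)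
    fun _ _ ↦ rfl
  rwa [ZMod.natCast_eq_natCast_iff', Nat.mod_eq_of_lt (Finset.mem_range.mp ha),
    Nat.mod_eq_of_lt (Finset.mem_range.mp hb)] at h

lemma norm_sum_range_le_modulus (hχ : χ ≠ 1) (n : ℕ) :
    ‖∑ k ∈ Finset.range n, χ (k : ZMod q)‖ ≤ q := by
  induction n using Nat.strong_induction_on with
  | _ n ih =>
    rcases le_or_gt n q with hn | hn
    · calc ‖∑ k ∈ Finset.range n, χ (k : ZMod q)‖ ≤ ∑ _k ∈ Finset.range n, (1 : ℝ) :=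
            norm_sum_le_of_le _ fun k _ ↦ χ.norm_le_one _
        _ = n := by simp
        _ ≤ q := by exact_mod_cast hn
    · obtain ⟨m, rfl⟩ := Nat.exists_eq_add_of_le hn.le
      simpa [Finset.sum_range_add, sum_range_modulus_eq_zero hχ] using
        ih m (lt_add_of_pos_left m (NeZero.pos q))

lemma norm_partialSum_char_le (hχ : χ ≠ 1) (t : ℝ) :
    ‖partialSum (fun n ↦ χ n) t‖ ≤ q := by
  have hq : q ≠ 1 := by rintro rfl; exact hχ (Subsingleton.elim _ _)
  have : Nontrivial (ZMod q) := ZMod.nontrivial_iff.mpr hq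
  have h := norm_sum_range_le_modulus hχ (⌊t⌋₊ + 1)
  rwa [Finset.range_eq_Ico, Finset.sum_eq_sum_Ico_succ_bot (by lia), Nat.cast_zero,
    χ.map_nonunit not_isUnit_zero, zero_add] at h

lemma LFunction_eq_mul_mellinTail (hχ : χ ≠ 1) {s : ℂ} (hs : 0 < s.re) :
    LFunction χ s = s * mellinTail (partialSum fun n ↦ χ n) s := by
  refine eqOn_re_pos_of_eqOn_one_lt_re (differentiable_LFunction hχ).differentiableOn
    (fun s hs ↦ (differentiableAt_id.mul (differentiableAt_mellinTail (measurable_partialSum _)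
      (fun t _ ↦ norm_partialSum_char_le hχ t) hs)).differentiableWithinAt) (fun s hs ↦ ?_) hs
  rw [LFunction_eq_LSeries χ hs]
  exact LSeries_eq_mul_mellinTail (fun n ↦ χ.norm_le_one _) hs

lemma norm_LFunction_le (hχ : χ ≠ 1) {s : ℂ} (hs : 0 < s.re) :
    ‖LFunction χ s‖ ≤ q * ‖s‖ / s.re := by
  rw [LFunction_eq_mul_mellinTail hχ hs, norm_mul, mul_comm (q : ℝ), mul_div_assoc]
  gcongr
  exact norm_mellinTail_le (fun t _ ↦ norm_partialSum_char_le hχ t) hs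

end CharacterSums

section Zeta

/-- `⌊t⌋ - t`, the error term in counting the integers up to `t`. -/
noncomputable def floorError (t : ℝ) : ℂ := ((⌊t⌋₊ - t : ℝ) : ℂ)

lemma norm_floorError_le_one {t : ℝ} (ht : 0 ≤ t) : ‖floorError t‖ ≤ 1 := by
  rw [floorError, norm_real, Real.norm_eq_abs, abs_le]
  constructor <;> linarith [Nat.floor_le ht, Nat.lt_floor_add_one t]

lemma norm_floorError_le_one_of_one_lt : ∀ t > 1, ‖floorError t‖ ≤ 1 :=
  fun _ ht ↦ norm_floorError_le_one (zero_le_one.trans ht.le)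

lemma measurable_floorError : Measurable floorError := by
  unfold floorError; fun_prop

variable {s : ℂ}

lemma ofReal_mul_cpow_neg_add_one {t : ℝ} (ht : 0 < t) (s : ℂ) :
    (t : ℂ) * (t : ℂ) ^ (-(s + 1)) = (t : ℂ) ^ (-s) := by
  have ht0 : (t : ℂ) ≠ 0 := ofReal_ne_zero.mpr ht.ne'
  rw [show -s = 1 + -(s + 1) by ring, cpow_add _ _ ht0, cpow_one]

lemma riemannZeta_eq_add_mul_mellinTail (hs : 1 < s.re) :
    riemannZeta s = s / (s - 1) + s * mellinTail floorError s := by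
  have hs' : (-s).re < -1 := by simpa using hs
  have hcongr : EqOn (fun t : ℝ ↦ (t : ℂ) * (t : ℂ) ^ (-(s + 1))) (fun t : ℝ ↦ (t : ℂ) ^ (-s))
      (Ioi 1) := fun t ht ↦ ofReal_mul_cpow_neg_add_one (zero_lt_one.trans ht) s
  have hintegrable : IntegrableOn (fun t : ℝ ↦ (t : ℂ) * (t : ℂ) ^ (-(s + 1))) (Ioi 1) :=
    (integrableOn_congr_fun hcongr measurableSet_Ioi).mpr
      (integrableOn_Ioi_cpow_of_lt hs' one_pos)
  have hmain : ∫ t in Ioi (1 : ℝ), (t : ℂ) * (t : ℂ) ^ (-(s + 1)) = 1 / (s - 1) := by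
    rw [setIntegral_congr_fun measurableSet_Ioi hcongr, integral_Ioi_cpow_of_lt hs' one_pos,
      ofReal_one, one_cpow, ← neg_div_neg_eq, neg_neg, neg_add', neg_neg]
  have hsplit : mellinTail (partialSum 1) s = 1 / (s - 1) + mellinTail floorError s := by
    rw [← hmain, mellinTail, mellinTail, ← integral_add hintegrable (integrableOn_mellinTail
      measurable_floorError norm_floorError_le_one_of_one_lt (by linarith))]
    congr with t
    simp only [partialSum, floorError, Pi.one_apply, Finset.sum_const, Nat.card_Icc, nsmul_eq_mul,
      ofReal_sub, ofReal_natCast, add_tsub_cancel_right]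
    ring
  rw [← LSeries_one_eq_riemannZeta hs, LSeries_eq_mul_mellinTail (by simp) hs, hsplit]
  ring

lemma LFunctionTrivChar₁_one_eq (hs : 0 < s.re) :
    LFunctionTrivChar₁ 1 s = s + (s - 1) * s * mellinTail floorError s := by
  refine eqOn_re_pos_of_eqOn_one_lt_re (g := fun s ↦ s + (s - 1) * s * mellinTail floorError s)
    (differentiable_LFunctionTrivChar₁ 1).differentiableOn (fun s hs ↦ ?_) (fun s hs ↦ ?_) hs
  · have := differentiableAt_mellinTail measurable_floorError norm_floorError_le_one_of_one_lt hs
    exact DifferentiableAt.differentiableWithinAt (by fun_prop)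
  · have hs1 : s ≠ 1 := by rintro rfl; simp at hs
    rw [LFunctionTrivChar₁, Function.update_of_ne hs1, LFunctionTrivChar, LFunction_modOne_eq,
      riemannZeta_eq_add_mul_mellinTail hs]
    have := sub_ne_zero.mpr hs1
    field_simp

lemma tsum_one_div_rpow_le {σ : ℝ} (h1 : 1 < σ) (h2 : σ ≤ 2) :
    ∑' n : ℕ, 1 / (n : ℝ) ^ σ ≤ 3 / (σ - 1) := by
  have hσ : 1 < (σ : ℂ).re := by simpa
  have hcast : riemannZeta σ = ((∑' n : ℕ, 1 / (n : ℝ) ^ σ : ℝ) : ℂ) := by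
    rw [zeta_eq_tsum_one_div_nat_cpow hσ, ofReal_tsum]
    congr with n
    rw [ofReal_div, ofReal_one, ofReal_cpow n.cast_nonneg, ofReal_natCast]
  have hnorm : ‖riemannZeta σ‖ = ∑' n : ℕ, 1 / (n : ℝ) ^ σ := by
    rw [hcast, norm_real, Real.norm_of_nonneg (tsum_nonneg fun n ↦ by positivity)]
  have htail : ‖mellinTail floorError σ‖ ≤ 1 / σ := by
    simpa using norm_mellinTail_le (s := (σ : ℂ)) norm_floorError_le_one_of_one_lt
      (zero_lt_one.trans hσ)
  have hσ1 : ‖(σ : ℂ) - 1‖ = σ - 1 := by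
    rw [← ofReal_one, ← ofReal_sub, norm_real, Real.norm_of_nonneg (by linarith)]
  have hσ0 : ‖(σ : ℂ)‖ = σ := by rw [norm_real, Real.norm_of_nonneg (by linarith)]
  calc ∑' n : ℕ, 1 / (n : ℝ) ^ σ
      ≤ ‖(σ : ℂ) / (σ - 1)‖ + ‖(σ : ℂ) * mellinTail floorError σ‖ := by
        rw [← hnorm, riemannZeta_eq_add_mul_mellinTail hσ]; exact norm_add_le _ _
    _ ≤ σ / (σ - 1) + σ * (1 / σ) := by
        rw [norm_div, norm_mul, hσ0, hσ1]; gcongr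
    _ = (2 * σ - 1) / (σ - 1) := by
        have : σ - 1 ≠ 0 := by linarith
        have : σ ≠ 0 := by linarith
        field_simp; ring
    _ ≤ 3 / (σ - 1) := by gcongr; linarith

lemma norm_LSeries_le {f : ℕ → ℂ} (hf : ∀ n, ‖f n‖ ≤ 1) (h1 : 1 < s.re) (h2 : s.re ≤ 2) :
    ‖LSeries f s‖ ≤ 3 / (s.re - 1) := by
  have hsum : Summable fun n : ℕ ↦ 1 / (n : ℝ) ^ s.re := Real.summable_one_div_nat_rpow.mpr h1
  refine (tsum_of_norm_bounded hsum.hasSum fun n ↦ ?_).trans (tsum_one_div_rpow_le h1 h2)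
  rw [LSeries.norm_term_eq]
  split_ifs
  · positivity
  · gcongr; exact hf n

end Zeta

section EntireLFunction

/-- The Dirichlet series `∑ χ(n) Λ(n) n^(-s)`, which is `-L'/L(s, χ)` for `1 < re s`. -/
noncomputable def vonMangoldtLSeries {q : ℕ} (χ : DirichletCharacter ℂ q) (s : ℂ) : ℂ :=
  LSeries (fun n ↦ χ n * (ArithmeticFunction.vonMangoldt n : ℂ)) s

open Classical in
/-- The order of the pole of `L(s, χ)` at `s = 1`: one for the principal character, zero otherwise.
Real-valued because it occurs as a coefficient. -/
noncomputable def poleOrder {q : ℕ} (χ : DirichletCharacter ℂ q) : ℝ := if χ = 1 then 1 else 0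

lemma poleOrder_one {q : ℕ} : poleOrder (1 : DirichletCharacter ℂ q) = 1 := if_pos rfl

lemma poleOrder_of_ne_one {q : ℕ} {χ : DirichletCharacter ℂ q} (hχ : χ ≠ 1) : poleOrder χ = 0 :=
  if_neg hχ

lemma poleOrder_nonneg {q : ℕ} (χ : DirichletCharacter ℂ q) : 0 ≤ poleOrder χ := by
  unfold poleOrder; positivity

lemma poleOrder_le_one {q : ℕ} (χ : DirichletCharacter ℂ q) : poleOrder χ ≤ 1 := by
  unfold poleOrder; split_ifs <;> norm_num

variable {q : ℕ} [NeZero q]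

open Classical in
/-- The entire function attached to a character: `(s - 1) L(s, χ)` if `χ` is principal and
`L(s, χ)` otherwise. -/
noncomputable def entireLFunction (χ : DirichletCharacter ℂ q) : ℂ → ℂ :=
  if χ = 1 then LFunctionTrivChar₁ q else LFunction χ

lemma entireLFunction_one : entireLFunction (1 : DirichletCharacter ℂ q) = LFunctionTrivChar₁ q :=
  if_pos rfl

lemma entireLFunction_of_ne_one {χ : DirichletCharacter ℂ q} (hχ : χ ≠ 1) :
    entireLFunction χ = LFunction χ := if_neg hχ

lemma entireLFunction_one_apply_of_ne {s : ℂ} (hs : s ≠ 1) :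
    entireLFunction (1 : DirichletCharacter ℂ q) s = (s - 1) * LFunctionTrivChar q s := by
  rw [entireLFunction_one, LFunctionTrivChar₁, Function.update_of_ne hs]

lemma differentiable_entireLFunction (χ : DirichletCharacter ℂ q) :
    Differentiable ℂ (entireLFunction χ) := by
  by_cases hχ : χ = 1
  · rw [hχ, entireLFunction_one]; exact differentiable_LFunctionTrivChar₁ q
  · rw [entireLFunction_of_ne_one hχ]; exact differentiable_LFunction hχ

lemma entireLFunction_ne_zero (χ : DirichletCharacter ℂ q) {s : ℂ} (hs : 1 ≤ s.re) :
    entireLFunction χ s ≠ 0 := by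
  by_cases hχ : χ = 1
  · subst hχ
    rcases eq_or_ne s 1 with rfl | hs1
    · rw [entireLFunction_one]; exact LFunctionTrivChar₁_apply_one_ne_zero q
    · rw [entireLFunction_one_apply_of_ne hs1]
      exact mul_ne_zero (sub_ne_zero.mpr hs1) (LFunction_ne_zero_of_one_le_re _ (Or.inr hs1) hs)
  · rw [entireLFunction_of_ne_one hχ]; exact LFunction_ne_zero_of_one_le_re _ (Or.inl hχ) hs

lemma entireLFunction_one_eq_prod_mul (s : ℂ) : entireLFunction (1 : DirichletCharacter ℂ q) s =
    (∏ p ∈ q.primeFactors, (1 - (p : ℂ) ^ (-s))) * LFunctionTrivChar₁ 1 s := by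
  rcases eq_or_ne s 1 with rfl | hs
  · simp [entireLFunction_one, LFunctionTrivChar₁, cpow_neg_one]
  · rw [entireLFunction_one_apply_of_ne hs, LFunctionTrivChar₁, Function.update_of_ne hs,
      LFunctionTrivChar_eq_mul_riemannZeta hs, LFunctionTrivChar_eq_mul_riemannZeta hs,
      Nat.primeFactors_one, Finset.prod_empty, one_mul]
    ring

omit [NeZero q] in
lemma norm_prime_cpow_neg_lt_one {p : ℕ} (hp : p ∈ q.primeFactors) {s : ℂ} (hs : 0 < s.re) :
    ‖(p : ℂ) ^ (-s)‖ < 1 := by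
  have hp1 := (Nat.prime_of_mem_primeFactors hp).one_lt
  rw [norm_natCast_cpow_of_pos (by lia)]
  exact Real.rpow_lt_one_of_one_lt_of_neg (by exact_mod_cast hp1) (by simpa)

lemma norm_prod_one_sub_prime_cpow_le {s : ℂ} (hs : 0 < s.re) :
    ‖∏ p ∈ q.primeFactors, (1 - (p : ℂ) ^ (-s))‖ ≤ q := by
  rw [norm_prod]
  calc ∏ p ∈ q.primeFactors, ‖1 - (p : ℂ) ^ (-s)‖ ≤ ∏ p ∈ q.primeFactors, (p : ℝ) := by
        refine Finset.prod_le_prod (fun _ _ ↦ norm_nonneg _) fun p hp ↦ ?_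
        calc ‖1 - (p : ℂ) ^ (-s)‖ ≤ ‖(1 : ℂ)‖ + ‖(p : ℂ) ^ (-s)‖ := norm_sub_le _ _
          _ ≤ 2 := by rw [norm_one]; linarith [norm_prime_cpow_neg_lt_one hp hs]
          _ ≤ p := by exact_mod_cast (Nat.prime_of_mem_primeFactors hp).two_le
    _ = ((∏ p ∈ q.primeFactors, p : ℕ) : ℝ) := (Nat.cast_prod _ _).symm
    _ ≤ q := by exact_mod_cast Nat.le_of_dvd (NeZero.pos q) (Nat.prod_primeFactors_dvd q)

omit [NeZero q] in
lemma prod_one_sub_prime_cpow_ne_zero {s : ℂ} (hs : 0 < s.re) :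
    ∏ p ∈ q.primeFactors, (1 - (p : ℂ) ^ (-s)) ≠ 0 := by
  refine Finset.prod_ne_zero_iff.mpr fun p hp h ↦ ?_
  have hlt := norm_prime_cpow_neg_lt_one hp hs
  rw [← sub_eq_zero.mp h, norm_one] at hlt
  exact hlt.false

lemma norm_LFunctionTrivChar₁_one_le {s : ℂ} (hs : 1 / 2 ≤ s.re) :
    ‖LFunctionTrivChar₁ 1 s‖ ≤ 4 * (‖s‖ + 1) ^ 2 := by
  have htail : ‖mellinTail floorError s‖ ≤ 2 := by
    refine (norm_mellinTail_le norm_floorError_le_one_of_one_lt (by linarith)).trans ?_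
    rw [div_le_iff₀ (by linarith)]
    linarith
  have hsub : ‖s - 1‖ ≤ ‖s‖ + 1 := by simpa using norm_sub_le s 1
  calc ‖LFunctionTrivChar₁ 1 s‖ ≤ ‖s‖ + ‖s - 1‖ * ‖s‖ * ‖mellinTail floorError s‖ := by
        rw [LFunctionTrivChar₁_one_eq (by linarith), ← norm_mul, ← norm_mul]
        exact norm_add_le _ _
    _ ≤ ‖s‖ + (‖s‖ + 1) * ‖s‖ * 2 := by gcongr
    _ ≤ 4 * (‖s‖ + 1) ^ 2 := by nlinarith [norm_nonneg s]

lemma norm_entireLFunction_le (χ : DirichletCharacter ℂ q) {s : ℂ} (hs : 1 / 2 ≤ s.re) :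
    ‖entireLFunction χ s‖ ≤ 4 * q * (‖s‖ + 1) ^ 2 := by
  by_cases hχ : χ = 1
  · rw [hχ, entireLFunction_one_eq_prod_mul, norm_mul, mul_comm 4, mul_assoc]
    gcongr
    · exact norm_prod_one_sub_prime_cpow_le (by linarith)
    · exact norm_LFunctionTrivChar₁_one_le hs
  · rw [entireLFunction_of_ne_one hχ]
    refine (norm_LFunction_le hχ (by linarith)).trans ?_
    rw [div_le_iff₀ (by linarith)]
    calc (q : ℝ) * ‖s‖ ≤ q * (2 * (‖s‖ + 1) ^ 2) := by gcongr; nlinarith [norm_nonneg s]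
      _ = 4 * q * (‖s‖ + 1) ^ 2 * (1 / 2) := by ring
      _ ≤ 4 * q * (‖s‖ + 1) ^ 2 * s.re := by gcongr

lemma le_norm_LFunction (χ : DirichletCharacter ℂ q) {s : ℂ} (h1 : 1 < s.re) (h2 : s.re ≤ 2) :
    (s.re - 1) / 3 ≤ ‖LFunction χ s‖ := by
  have hmu : ∀ n : ℕ, ‖χ n * ((ArithmeticFunction.moebius n : ℤ) : ℂ)‖ ≤ 1 := fun n ↦ by
    rw [norm_mul]
    refine mul_le_one₀ (χ.norm_le_one _) (norm_nonneg _) ?_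
    rw [norm_intCast]
    exact_mod_cast ArithmeticFunction.abs_moebius_le_one
  have hinv := congrArg norm (LSeries.mul_mu_eq_one χ h1)
  rw [← LFunction_eq_LSeries χ h1, norm_mul, norm_one] at hinv
  have hle : 1 ≤ ‖LFunction χ s‖ * (3 / (s.re - 1)) :=
    hinv.symm.trans_le (by gcongr; exact norm_LSeries_le hmu h1 h2)
  rw [← mul_div_assoc, le_div_iff₀ (by linarith)] at hle
  linarith

lemma le_norm_entireLFunction (χ : DirichletCharacter ℂ q) {s : ℂ} (h1 : 1 < s.re)
    (h2 : s.re ≤ 2) : (s.re - 1) ^ 2 / 3 ≤ ‖entireLFunction χ s‖ := by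
  have h := le_norm_LFunction χ h1 h2
  by_cases hχ : χ = 1
  · subst hχ
    have hs : s ≠ 1 := by rintro rfl; simp at h1
    have hre : s.re - 1 ≤ ‖s - 1‖ := by simpa using re_le_norm (s - 1)
    rw [entireLFunction_one_apply_of_ne hs, norm_mul]
    calc (s.re - 1) ^ 2 / 3 = (s.re - 1) * ((s.re - 1) / 3) := by ring
      _ ≤ _ := by gcongr
  · rw [entireLFunction_of_ne_one hχ]
    refine le_trans ?_ h
    nlinarith

lemma vonMangoldtLSeries_eq_neg_logDeriv_LFunction (χ : DirichletCharacter ℂ q) {s : ℂ}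
    (hs : 1 < s.re) : vonMangoldtLSeries χ s = -logDeriv (LFunction χ) s := by
  rw [logDeriv_apply, deriv_LFunction_eq_deriv_LSeries χ hs, LFunction_eq_LSeries χ hs,
    ← neg_div, ← LSeries_twist_vonMangoldt_eq χ hs]
  rfl

lemma vonMangoldtLSeries_eq (χ : DirichletCharacter ℂ q) {s : ℂ} (hs : 1 < s.re) :
    vonMangoldtLSeries χ s = -logDeriv (entireLFunction χ) s + poleOrder χ / (s - 1) := by
  have hs1 : s ≠ 1 := by rintro rfl; simp at hs
  have h0 : LFunction χ s ≠ 0 := LFunction_ne_zero_of_one_le_re χ (Or.inr hs1) hs.le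
  have hsub := sub_ne_zero.mpr hs1
  rw [vonMangoldtLSeries_eq_neg_logDeriv_LFunction χ hs]
  by_cases hχ : χ = 1
  · subst hχ
    rw [logDeriv_apply, logDeriv_apply, entireLFunction_one_apply_of_ne hs1, entireLFunction_one,
      deriv_LFunctionTrivChar₁_apply_of_ne_one q hs1, poleOrder_one, ofReal_one, LFunctionTrivChar]
    field_simp
    ring
  · rw [entireLFunction_of_ne_one hχ, poleOrder_of_ne_one hχ, ofReal_zero, zero_div, add_zero]

end EntireLFunction

section TrigonometricPositivity

variable {q : ℕ}

lemma term_vonMangoldt_re (χ : DirichletCharacter ℂ q) (s : ℂ) (n : ℕ) :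
    (LSeries.term (fun n ↦ χ n * (ArithmeticFunction.vonMangoldt n : ℂ)) s n).re =
      (χ n * (n : ℂ) ^ (-(s.im * I))).re * (ArithmeticFunction.vonMangoldt n / (n : ℝ) ^ s.re) := by
  rcases eq_or_ne n 0 with rfl | hn
  · simp
  have hn0 : (n : ℂ) ≠ 0 := Nat.cast_ne_zero.mpr hn
  have hpow (w : ℂ) : (n : ℂ) ^ w ≠ 0 := by simp [cpow_eq_zero_iff, hn0]
  have hsplit : χ n * (ArithmeticFunction.vonMangoldt n : ℂ) / (n : ℂ) ^ s =
      χ n * (n : ℂ) ^ (-(s.im * I)) *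
        (ArithmeticFunction.vonMangoldt n / (n : ℝ) ^ s.re : ℝ) := by
    conv_lhs => rw [← re_add_im s, cpow_add _ _ hn0]
    rw [cpow_neg, ofReal_div, ofReal_cpow n.cast_nonneg, ofReal_natCast]
    field_simp [hpow]
  rw [LSeries.term_of_ne_zero hn, hsplit, re_mul_ofReal]

lemma hasSum_re_vonMangoldtLSeries (χ : DirichletCharacter ℂ q) {s : ℂ} (hs : 1 < s.re) :
    HasSum (fun n : ℕ ↦ (χ n * (n : ℂ) ^ (-(s.im * I))).re *
      (ArithmeticFunction.vonMangoldt n / (n : ℝ) ^ s.re)) (vonMangoldtLSeries χ s).re := by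
  simp only [← term_vonMangoldt_re]
  exact reCLM.hasSum (LSeriesSummable_twist_vonMangoldt χ hs).LSeriesHasSum

lemma norm_char_mul_cpow_eq_one (χ : DirichletCharacter ℂ q) {n : ℕ} (hn : n ≠ 0)
    (hu : IsUnit (n : ZMod q)) (t : ℝ) : ‖χ n * (n : ℂ) ^ (-(t * I))‖ = 1 := by
  have hχ : ‖χ (n : ZMod q)‖ = 1 := by simpa using χ.unit_norm_eq_one hu.unit
  rw [norm_mul, hχ, norm_natCast_cpow_of_pos hn.bot_lt]
  simp

lemma re_vonMangoldtLSeries_combination_nonneg (χ : DirichletCharacter ℂ q) {σ : ℝ} (hσ : 1 < σ)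
    (t : ℝ) {a b c : ℝ} (habc : ∀ u : ℂ, ‖u‖ = 1 → 0 ≤ a + b * u.re + c * (u ^ 2).re) :
    0 ≤ a * (vonMangoldtLSeries (1 : DirichletCharacter ℂ q) ⟨σ, 0⟩).re +
      b * (vonMangoldtLSeries χ ⟨σ, t⟩).re + c * (vonMangoldtLSeries (χ ^ 2) ⟨σ, 2 * t⟩).re := by
  refine HasSum.nonneg (fun n ↦ ?_)
    ((((hasSum_re_vonMangoldtLSeries 1 (s := ⟨σ, 0⟩) hσ).mul_left a).add
      ((hasSum_re_vonMangoldtLSeries χ (s := ⟨σ, t⟩) hσ).mul_left b)).add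
      ((hasSum_re_vonMangoldtLSeries (χ ^ 2) (s := ⟨σ, 2 * t⟩) hσ).mul_left c))
  rcases eq_or_ne n 0 with rfl | hn
  · simp
  rw [← mul_assoc, ← mul_assoc, ← mul_assoc, ← add_mul, ← add_mul]
  refine mul_nonneg ?_ (div_nonneg ArithmeticFunction.vonMangoldt_nonneg (by positivity))
  by_cases hu : IsUnit (n : ZMod q)
  · have hsq : (χ ^ 2) n * (n : ℂ) ^ (-((2 * t : ℝ) * I)) = (χ n * (n : ℂ) ^ (-(t * I))) ^ 2 := by
      rw [mul_pow, ← cpow_nat_mul, MulChar.pow_apply' χ two_ne_zero]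
      push_cast
      ring_nf
    have h := habc _ (norm_char_mul_cpow_eq_one χ hn hu t)
    rw [← hsq] at h
    simpa [MulChar.one_apply hu] using h
  · simp [MulChar.map_nonunit _ hu]

lemma three_four_one_vonMangoldtLSeries (χ : DirichletCharacter ℂ q) {σ : ℝ} (hσ : 1 < σ) (t : ℝ) :
    0 ≤ 3 * (vonMangoldtLSeries (1 : DirichletCharacter ℂ q) ⟨σ, 0⟩).re +
      4 * (vonMangoldtLSeries χ ⟨σ, t⟩).re + (vonMangoldtLSeries (χ ^ 2) ⟨σ, 2 * t⟩).re := by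
  have hu (u : ℂ) (hu : ‖u‖ = 1) : 0 ≤ 3 + 4 * u.re + 1 * (u ^ 2).re := by
    have hcircle : u.re * u.re + u.im * u.im = 1 := by
      rw [← normSq_apply, normSq_eq_norm_sq, hu, one_pow]
    rw [sq, mul_re]
    nlinarith [sq_nonneg (1 + u.re)]
  simpa using re_vonMangoldtLSeries_combination_nonneg χ hσ t hu

lemma one_one_vonMangoldtLSeries (χ : DirichletCharacter ℂ q) {σ : ℝ} (hσ : 1 < σ) (t : ℝ) :
    0 ≤ (vonMangoldtLSeries (1 : DirichletCharacter ℂ q) ⟨σ, 0⟩).re +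
      (vonMangoldtLSeries χ ⟨σ, t⟩).re := by
  have hu (u : ℂ) (hu : ‖u‖ = 1) : 0 ≤ 1 + 1 * u.re + 0 * (u ^ 2).re := by
    linarith [(abs_le.mp (abs_re_le_norm u)).1]
  simpa using re_vonMangoldtLSeries_combination_nonneg χ hσ t hu

end TrigonometricPositivity

section LogConductor

variable {q : ℕ} [NeZero q]

/-- The logarithm of the analytic conductor of a character modulo `q` at height `t`. The shift by
`3` keeps it at least `1`. -/
noncomputable def logConductor (q : ℕ) (t : ℝ) : ℝ := Real.log (q * (|t| + 3))

lemma one_le_cast_of_neZero : (1 : ℝ) ≤ q := Nat.one_le_cast.mpr (NeZero.pos q)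

lemma one_le_logConductor (t : ℝ) : 1 ≤ logConductor q t := by
  have hq : (1 : ℝ) ≤ q := one_le_cast_of_neZero
  rw [logConductor, Real.le_log_iff_exp_le (by positivity)]
  nlinarith [abs_nonneg t, Real.exp_one_lt_d9]

lemma logConductor_two_mul_le (t : ℝ) : logConductor q (2 * t) ≤ 2 * logConductor q t := by
  have hq : (1 : ℝ) ≤ q := one_le_cast_of_neZero
  have ht := abs_nonneg t
  calc logConductor q (2 * t) ≤ Real.log ((q * (|t| + 3)) ^ 2) := by
        refine Real.log_le_log (by positivity) ?_
        rw [abs_mul, abs_two, mul_pow]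
        gcongr <;> nlinarith
    _ = 2 * logConductor q t := by simp [logConductor]

lemma logConductor_zero_le (t : ℝ) : logConductor q 0 ≤ logConductor q t := by
  have hq : (1 : ℝ) ≤ q := one_le_cast_of_neZero
  refine Real.log_le_log (by positivity) ?_
  rw [abs_zero]
  gcongr
  exact abs_nonneg t

lemma mul_log_inv_le_two_mul_sqrt {η : ℝ} (hη : 0 < η) : η * Real.log (1 / η) ≤ 2 * √η := by
  have hlog : Real.log (1 / √η) ≤ 1 / √η :=
    (Real.log_le_sub_one_of_pos (by positivity)).trans (by linarith)
  calc η * Real.log (1 / η) = √η * √η * (2 * Real.log (1 / √η)) := by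
        rw [one_div, one_div, Real.log_inv, Real.log_inv, Real.log_sqrt hη.le,
          Real.mul_self_sqrt hη.le]
        ring
    _ ≤ √η * √η * (2 * (1 / √η)) := by gcongr
    _ = 2 * √η := by field_simp

lemma log_div_norm_entireLFunction_le (χ : DirichletCharacter ℂ q) {η : ℝ} (h0 : 0 < η)
    (h1 : η ≤ 1) (t : ℝ) :
    Real.log (4 * q * (|t| + 3) ^ 2 / ‖entireLFunction χ ⟨1 + η, t⟩‖) ≤
      5 * logConductor q t + 2 * Real.log (1 / η) := by
  have hq : (1 : ℝ) ≤ q := one_le_cast_of_neZero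
  have ht := abs_nonneg t
  have hlower : η ^ 2 / 3 ≤ ‖entireLFunction χ ⟨1 + η, t⟩‖ := by
    simpa using le_norm_entireLFunction χ (s := ⟨1 + η, t⟩) (by simpa) (by dsimp only; linarith)
  have hpos : 0 < ‖entireLFunction χ ⟨1 + η, t⟩‖ := lt_of_lt_of_le (by positivity) hlower
  have hY : 3 ≤ q * (|t| + 3) := by nlinarith
  have hrhs : 5 * logConductor q t + 2 * Real.log (1 / η) =
      Real.log ((q * (|t| + 3)) ^ 5 * (1 / η) ^ 2) := by
    rw [Real.log_mul (by positivity) (by positivity), Real.log_pow, Real.log_pow, logConductor]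
    norm_num
  rw [hrhs]
  refine Real.log_le_log (by positivity) ((div_le_iff₀ hpos).mpr ?_)
  calc 4 * q * (|t| + 3) ^ 2 ≤ 9 * q ^ 2 * (|t| + 3) ^ 2 := by gcongr ?_ * _; nlinarith
    _ = (q * (|t| + 3)) ^ 2 * 3 ^ 3 * (1 / 3) := by ring
    _ ≤ (q * (|t| + 3)) ^ 2 * (q * (|t| + 3)) ^ 3 * (1 / 3) := by gcongr
    _ = (q * (|t| + 3)) ^ 5 * (1 / η) ^ 2 * (η ^ 2 / 3) := by field_simp
    _ ≤ (q * (|t| + 3)) ^ 5 * (1 / η) ^ 2 * ‖entireLFunction χ ⟨1 + η, t⟩‖ := by gcongr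

lemma log_div_norm_entireLFunction_le_div (χ : DirichletCharacter ℂ q) {η t : ℝ} (h0 : 0 < η)
    (h1 : η * logConductor q t ≤ 1 / 10 ^ 12) :
    252 * Real.log (4 * q * (|t| + 3) ^ 2 / ‖entireLFunction χ ⟨1 + η, t⟩‖) / (1 / 2) ≤
      1 / 100 * η⁻¹ := by
  have hL := one_le_logConductor (q := q) t
  have hη : η ≤ 1 / 10 ^ 12 := by nlinarith
  have hsqrt : √η ≤ 1 / 10 ^ 6 := by
    rw [Real.sqrt_le_iff]
    exact ⟨by norm_num, hη.trans (by norm_num)⟩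
  have hlog := mul_log_inv_le_two_mul_sqrt h0
  have hratio := log_div_norm_entireLFunction_le χ h0 (hη.trans (by norm_num)) t
  rw [← div_eq_mul_inv, le_div_iff₀ h0]
  nlinarith

lemma norm_entireLFunction_le_of_mem_closedBall (χ : DirichletCharacter ℂ q) {η : ℝ} (h0 : 0 ≤ η)
    (h1 : η ≤ 1 / 2) (t : ℝ) {z : ℂ} (hz : z ∈ closedBall (⟨1 + η, t⟩ : ℂ) (1 / 2)) :
    ‖entireLFunction χ z‖ ≤ 4 * q * (|t| + 3) ^ 2 := by
  rw [mem_closedBall, dist_eq_norm] at hz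
  have hre := (abs_le.mp ((abs_re_le_norm _).trans hz)).1
  have hcenter : ‖(⟨1 + η, t⟩ : ℂ)‖ ≤ 1 + η + |t| := by
    refine (norm_le_abs_re_add_abs_im _).trans ?_
    rw [abs_of_nonneg (by positivity)]
  have hnorm : ‖z‖ + 1 ≤ |t| + 3 := by linarith [norm_sub_norm_le z ⟨1 + η, t⟩]
  rw [sub_re] at hre
  refine (norm_entireLFunction_le χ (by dsimp only at hre; linarith)).trans ?_
  gcongr

lemma re_one_div_mk_sub_one (η t : ℝ) : (1 / ((⟨1 + η, t⟩ : ℂ) - 1)).re = η / (η ^ 2 + t ^ 2) := by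
  rw [one_div, inv_re, normSq_apply]
  simp [sq]

lemma re_vonMangoldtLSeries_le (χ : DirichletCharacter ℂ q) {η t : ℝ} (h0 : 0 < η)
    (h1 : η * logConductor q t ≤ 1 / 10 ^ 12) (S : Finset ℂ)
    (hS : ∀ ρ ∈ S, ‖ρ - ⟨1 + η, t⟩‖ ≤ 1 / 4 ∧ entireLFunction χ ρ = 0) :
    (vonMangoldtLSeries χ ⟨1 + η, t⟩).re ≤ poleOrder χ * (η / (η ^ 2 + t ^ 2)) + 1 / 100 * η⁻¹
      - ∑ ρ ∈ S, zeroTerm (1 / 2) ⟨1 + η, t⟩ ρ := by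
  have hL := one_le_logConductor (q := q) t
  have hη : η ≤ 1 / 2 := by norm_num at h1; nlinarith
  have hs : 1 < (⟨1 + η, t⟩ : ℂ).re := by simpa
  have hzeros := sum_zeroTerm_le_re_logDeriv (R := 1 / 2) (by norm_num) S
    (differentiable_entireLFunction χ).differentiableOn
    (fun z hz ↦ norm_entireLFunction_le_of_mem_closedBall χ h0.le hη t hz)
    (entireLFunction_ne_zero χ hs.le)
    (fun z _ hz ↦ by
      by_contra! hc
      exact entireLFunction_ne_zero χ (hs.trans hc).le hz)
    (fun ρ hρ ↦ ⟨(hS ρ hρ).1.trans (by norm_num), (hS ρ hρ).2⟩)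
  have hpole : (poleOrder χ / ((⟨1 + η, t⟩ : ℂ) - 1)).re = poleOrder χ * (η / (η ^ 2 + t ^ 2)) := by
    rw [div_eq_mul_one_div, re_ofReal_mul, re_one_div_mk_sub_one]
  rw [vonMangoldtLSeries_eq χ hs, add_re, neg_re, hpole]
  linarith [log_div_norm_entireLFunction_le_div χ h0 h1]

end LogConductor

section ZeroFreeRegion

variable {q : ℕ}

lemma conj_apply_of_sq_eq_one {χ : DirichletCharacter ℂ q} (h2 : χ ^ 2 = 1) (a : ZMod q) :
    (starRingEnd ℂ) (χ a) = χ a := by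
  rcases MulChar.isQuadratic_iff_sq_eq_one.mpr h2 a with h | h | h <;> simp [h]

variable [NeZero q]

lemma LFunction_conj {χ : DirichletCharacter ℂ q} (h2 : χ ^ 2 = 1) (hχ : χ ≠ 1) {s : ℂ}
    (hs : 0 < s.re) :
    LFunction χ ((starRingEnd ℂ) s) = (starRingEnd ℂ) (LFunction χ s) := by
  have hsum (t : ℝ) :
      (starRingEnd ℂ) (partialSum (fun n ↦ χ n) t) = partialSum (fun n ↦ χ n) t := by
    rw [partialSum, map_sum]
    exact Finset.sum_congr rfl fun k _ ↦ conj_apply_of_sq_eq_one h2 _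
  rw [LFunction_eq_mul_mellinTail hχ hs, LFunction_eq_mul_mellinTail hχ (by simpa), map_mul,
    mellinTail_conj hsum]

lemma LFunctionTrivChar₁_one_ne_zero_of_near {s : ℂ} (h : ‖s - 1‖ ≤ 1 / 8) :
    LFunctionTrivChar₁ 1 s ≠ 0 := by
  have hre := (abs_le.mp ((abs_re_le_norm (s - 1)).trans h)).1
  rw [sub_re, one_re] at hre
  have htail : ‖mellinTail floorError s‖ ≤ 2 := by
    refine (norm_mellinTail_le norm_floorError_le_one_of_one_lt (by linarith)).trans ?_
    rw [div_le_iff₀ (by linarith)]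
    linarith
  have hs : ‖s‖ ≤ 9 / 8 := by linarith [norm_sub_norm_le s 1, norm_one (α := ℂ)]
  have hsmall : ‖(s - 1) + (s - 1) * s * mellinTail floorError s‖ < 1 := by
    calc ‖(s - 1) + (s - 1) * s * mellinTail floorError s‖
        ≤ ‖s - 1‖ + ‖s - 1‖ * ‖s‖ * ‖mellinTail floorError s‖ := by
          rw [← norm_mul, ← norm_mul]; exact norm_add_le _ _
      _ ≤ 1 / 8 + 1 / 8 * (9 / 8) * 2 := by gcongr
      _ < 1 := by norm_num
  intro h0
  rw [LFunctionTrivChar₁_one_eq (by linarith)] at h0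
  have hneg : (s - 1) + (s - 1) * s * mellinTail floorError s = -1 := by linear_combination h0
  rw [hneg, norm_neg, norm_one] at hsmall
  exact lt_irrefl _ hsmall

lemma entireLFunction_one_ne_zero_of_near {s : ℂ} (h : ‖s - 1‖ ≤ 1 / 8) :
    entireLFunction (1 : DirichletCharacter ℂ q) s ≠ 0 := by
  have hre := (abs_le.mp ((abs_re_le_norm (s - 1)).trans h)).1
  rw [sub_re, one_re] at hre
  rw [entireLFunction_one_eq_prod_mul]
  exact mul_ne_zero (prod_one_sub_prime_cpow_ne_zero (by linarith))
    (LFunctionTrivChar₁_one_ne_zero_of_near h)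

omit [NeZero q] in
lemma norm_sq_mk_sub_mk (a b c d : ℝ) :
    ‖(⟨a, b⟩ : ℂ) - ⟨c, d⟩‖ ^ 2 = (c - a) ^ 2 + (b - d) ^ 2 := by
  rw [← normSq_eq_norm_sq, normSq_apply]
  simp only [sub_re, sub_im]
  ring

omit [NeZero q] in
lemma le_zeroTerm_half {c ρ : ℂ} (hre : ρ.re ≤ c.re) (h : ‖ρ - c‖ ≤ 1 / 20) :
    99 / 100 * ((c.re - ρ.re) / ‖ρ - c‖ ^ 2) ≤ zeroTerm (1 / 2) c ρ := by
  have hsq : ‖ρ - c‖ ^ 2 ≤ (1 / 20) ^ 2 := by gcongr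
  have hdiv : ‖ρ - c‖ ^ 2 / (1 / 2) ^ 2 = 4 * ‖ρ - c‖ ^ 2 := by ring
  rw [zeroTerm, mul_comm, hdiv]
  refine mul_le_mul_of_nonneg_left ?_ (div_nonneg (sub_nonneg.mpr hre) (by positivity))
  linarith

variable {χ : DirichletCharacter ℂ q} {β γ η : ℝ}

omit [NeZero q] in
lemma norm_mk_sub_mk_le (hη' : η ≤ 1 / 1000) (hβ : 1 - η / 20 ≤ β) (hβ1 : β < 1)
    {g t : ℝ} (hg : |g - t| ≤ η / 2) : ‖(⟨β, g⟩ : ℂ) - ⟨1 + η, t⟩‖ ≤ 1 / 20 := by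
  refine (norm_le_abs_re_add_abs_im _).trans ?_
  simp only [sub_re, sub_im]
  rw [abs_of_neg (by linarith)]
  linarith

omit [NeZero q] in
lemma three_fourths_div_le_zeroTerm (hη : 0 < η) (hη' : η ≤ 1 / 1000) (hβ : 1 - η / 20 ≤ β)
    (hβ1 : β < 1) {g t : ℝ} (hg : |g - t| ≤ η / 2) :
    3 / 4 * η⁻¹ ≤ zeroTerm (1 / 2) ⟨1 + η, t⟩ ⟨β, g⟩ := by
  refine le_trans ?_
    (le_zeroTerm_half (by dsimp only; linarith) (norm_mk_sub_mk_le hη' hβ hβ1 hg))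
  have hsq : (g - t) ^ 2 ≤ (η / 2) ^ 2 := by rw [← sq_abs]; gcongr
  rw [norm_sq_mk_sub_mk, mul_div_assoc', ← div_eq_mul_inv, div_le_div_iff₀ hη (by nlinarith)]
  nlinarith

omit [NeZero q] in
lemma nine_tenths_div_le_zeroTerm (hη : 0 < η) (hη' : η ≤ 1 / 1000) (hβ : 1 - η / 20 ≤ β)
    (hβ1 : β < 1) : 9 / 10 * η⁻¹ ≤ zeroTerm (1 / 2) ⟨1 + η, γ⟩ ⟨β, γ⟩ := by
  refine le_trans ?_ (le_zeroTerm_half (by dsimp only; linarith)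
    (norm_mk_sub_mk_le hη' hβ hβ1 (by rw [sub_self, abs_zero]; positivity)))
  rw [norm_sq_mk_sub_mk, mul_div_assoc', ← div_eq_mul_inv, div_le_div_iff₀ hη (by nlinarith)]
  nlinarith

lemma re_vonMangoldtLSeries_one_le (hη : 0 < η) (hL : η * logConductor q 0 ≤ 1 / 10 ^ 12) :
    (vonMangoldtLSeries (1 : DirichletCharacter ℂ q) ⟨1 + η, 0⟩).re ≤ η⁻¹ + 1 / 100 * η⁻¹ := by
  have h := re_vonMangoldtLSeries_le (1 : DirichletCharacter ℂ q) hη hL ∅ (by simp)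
  have hpole : η / (η ^ 2 + 0 ^ 2) = η⁻¹ := by field_simp; simp
  rwa [poleOrder_one, hpole, one_mul, Finset.sum_empty, sub_zero] at h

lemma three_four_one_of_zero (hη : 0 < η) (hη' : η ≤ 1 / 1000)
    (hL : η * logConductor q γ ≤ 1 / (2 * 10 ^ 12)) (hβ : 1 - η / 20 ≤ β) (hβ1 : β < 1)
    (hρ : entireLFunction χ ⟨β, γ⟩ = 0) :
    13 / 25 * η⁻¹ ≤ 4 * (poleOrder χ * (η / (η ^ 2 + γ ^ 2))) +
      poleOrder (χ ^ 2) * (η / (η ^ 2 + (2 * γ) ^ 2)) := by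
  have hL0 : η * logConductor q 0 ≤ 1 / 10 ^ 12 := by
    nlinarith [logConductor_zero_le (q := q) γ]
  have hL2 : η * logConductor q (2 * γ) ≤ 1 / 10 ^ 12 := by
    nlinarith [logConductor_two_mul_le (q := q) γ]
  have h0 := re_vonMangoldtLSeries_one_le (q := q) hη hL0
  have h1 := re_vonMangoldtLSeries_le χ hη (hL.trans (by norm_num)) {⟨β, γ⟩} (by
    simp only [Finset.mem_singleton, forall_eq]
    refine ⟨(norm_mk_sub_mk_le hη' hβ hβ1 ?_).trans (by norm_num), hρ⟩
    rw [sub_self, abs_zero]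
    positivity)
  have h2 := re_vonMangoldtLSeries_le (χ ^ 2) hη hL2 ∅ (by simp)
  have hzero := nine_tenths_div_le_zeroTerm (γ := γ) hη hη' hβ hβ1
  have hpos := three_four_one_vonMangoldtLSeries χ (σ := 1 + η) (by linarith) γ
  rw [Finset.sum_singleton] at h1
  rw [Finset.sum_empty] at h2
  linarith

omit [NeZero q] in
lemma div_sq_add_sq_le (hη : 0 < η) {k t : ℝ} (hk : 0 ≤ k) (ht : k * η ≤ |t|) :
    η / (η ^ 2 + t ^ 2) ≤ 1 / (1 + k ^ 2) * η⁻¹ := by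
  have hsq : (k * η) ^ 2 ≤ t ^ 2 := by rw [← sq_abs t]; gcongr
  rw [← div_eq_mul_inv, div_div, div_le_div_iff₀ (by positivity) (by positivity)]
  linarith

lemma entireLFunction_one_ne_zero_of_zero_free (hη : 0 < η) (hη' : η ≤ 1 / 1000)
    (hL : η * logConductor q γ ≤ 1 / (2 * 10 ^ 12)) (hβ : 1 - η / 20 ≤ β) (hβ1 : β < 1) :
    entireLFunction (1 : DirichletCharacter ℂ q) ⟨β, γ⟩ ≠ 0 := by
  intro hρ
  rcases le_or_gt (4 * η) |γ| with hγ | hγ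
  · have h := three_four_one_of_zero hη hη' hL hβ hβ1 hρ
    have hpole := div_sq_add_sq_le hη (by norm_num) hγ
    have hpole2 := div_sq_add_sq_le (t := 2 * γ) hη (by norm_num : (0 : ℝ) ≤ 4) (by
      rw [abs_mul, abs_two]; linarith [abs_nonneg γ])
    rw [one_pow, poleOrder_one] at h
    linarith [inv_pos.mpr hη]
  · refine entireLFunction_one_ne_zero_of_near ?_ hρ
    refine (norm_le_abs_re_add_abs_im _).trans ?_
    simp only [sub_re, one_re, sub_im, one_im, sub_zero]
    rw [abs_of_neg (by linarith)]
    linarith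

lemma im_eq_zero_of_abs_im_le (h2 : χ ^ 2 = 1) (hχ : χ ≠ 1) (hη : 0 < η) (hη' : η ≤ 1 / 1000)
    (hL : η * logConductor q 0 ≤ 1 / 10 ^ 12) (hβ : 1 - η / 20 ≤ β) (hβ1 : β < 1)
    (hγ : |γ| ≤ η / 2) (hρ : entireLFunction χ ⟨β, γ⟩ = 0) : γ = 0 := by
  by_contra hγ0
  have hconj : entireLFunction χ ⟨β, -γ⟩ = 0 := by
    rw [entireLFunction_of_ne_one hχ] at hρ ⊢
    have h := LFunction_conj h2 hχ (s := ⟨β, γ⟩) (by dsimp only; linarith)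
    rwa [hρ, map_zero] at h
  have hne : (⟨β, γ⟩ : ℂ) ≠ ⟨β, -γ⟩ := fun h ↦
    hγ0 (self_eq_neg.mp (congrArg im h))
  have hg : |γ - 0| ≤ η / 2 := by rwa [sub_zero]
  have hg' : |-γ - 0| ≤ η / 2 := by rwa [sub_zero, abs_neg]
  have h := re_vonMangoldtLSeries_le χ hη hL {⟨β, γ⟩, ⟨β, -γ⟩} (by
    simp only [Finset.mem_insert, Finset.mem_singleton, forall_eq_or_imp, forall_eq]
    exact ⟨⟨(norm_mk_sub_mk_le hη' hβ hβ1 hg).trans (by norm_num), hρ⟩,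
      (norm_mk_sub_mk_le hη' hβ hβ1 hg').trans (by norm_num), hconj⟩)
  rw [poleOrder_of_ne_one hχ, Finset.sum_pair hne] at h
  have h1 := re_vonMangoldtLSeries_one_le (q := q) hη hL
  have hzero := three_fourths_div_le_zeroTerm hη hη' hβ hβ1 hg
  have hzero' := three_fourths_div_le_zeroTerm hη hη' hβ hβ1 hg'
  have hpos := one_one_vonMangoldtLSeries χ (σ := 1 + η) (by linarith) 0
  linarith [inv_pos.mpr hη]

theorem isQuadratic_and_im_eq_zero_of_zero (hη : 0 < η) (hη' : η ≤ 1 / 1000)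
    (hL : η * logConductor q γ ≤ 1 / (2 * 10 ^ 12)) (hβ : 1 - η / 20 ≤ β) (hβ1 : β < 1)
    (hρ : entireLFunction χ ⟨β, γ⟩ = 0) : χ ^ 2 = 1 ∧ χ ≠ 1 ∧ γ = 0 := by
  have h := three_four_one_of_zero hη hη' hL hβ hβ1 hρ
  have hχ : χ ≠ 1 := by
    rintro rfl
    exact entireLFunction_one_ne_zero_of_zero_free hη hη' hL hβ hβ1 hρ
  rw [poleOrder_of_ne_one hχ] at h
  have h2 : χ ^ 2 = 1 := by
    by_contra h2
    rw [poleOrder_of_ne_one h2] at h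
    linarith [inv_pos.mpr hη]
  refine ⟨h2, hχ, im_eq_zero_of_abs_im_le h2 hχ hη hη' ?_ hβ hβ1 ?_ hρ⟩
  · nlinarith [logConductor_zero_le (q := q) γ]
  · by_contra! hγ
    have hpole := div_sq_add_sq_le (t := 2 * γ) hη zero_le_one (by
      rw [abs_mul, abs_two]; linarith)
    rw [h2, poleOrder_one] at h
    linarith [inv_pos.mpr hη]

theorem zero_free_region {ρ : ℂ} (hρ : entireLFunction χ ρ = 0)
    (hre : 1 - 1 / (4 * 10 ^ 13) / logConductor q ρ.im ≤ ρ.re) :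
    χ ^ 2 = 1 ∧ χ ≠ 1 ∧ ρ.im = 0 := by
  have hβ1 : ρ.re < 1 := by
    by_contra! hc
    exact entireLFunction_ne_zero χ hc hρ
  have hL := one_le_logConductor (q := q) ρ.im
  have hη : 1 / (2 * 10 ^ 12) / logConductor q ρ.im ≤ 1 / 1000 :=
    (div_le_self (by positivity) hL).trans (by norm_num)
  refine isQuadratic_and_im_eq_zero_of_zero (β := ρ.re) (by positivity) hη
    (div_mul_cancel₀ _ (by positivity)).le ?_ hβ1 hρ
  refine le_trans (le_of_eq ?_) hre
  ring

end ZeroFreeRegion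

section CompletelyMonotone

open scoped ComplexOrder

/-- The derivatives of `f` at `c` alternate in sign, starting with a nonnegative value. Dirichlet
series with nonnegative coefficients have this property at real points of absolute convergence. -/
def CompletelyMonotoneAt (f : ℂ → ℂ) (c : ℂ) : Prop := ∀ n : ℕ, 0 ≤ (-1) ^ n * iteratedDeriv n f c

lemma CompletelyMonotoneAt.congr {f g : ℂ → ℂ} {c : ℂ} (hf : CompletelyMonotoneAt f c)
    (h : g =ᶠ[𝓝 c] f) : CompletelyMonotoneAt g c := fun n ↦ by
  rw [h.iteratedDeriv_eq n]
  exact hf n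

lemma completelyMonotoneAt_of_deriv_eq_neg_mul {F D : ℂ → ℂ} {c : ℂ} (hF : AnalyticAt ℂ F c)
    (hD : AnalyticAt ℂ D c) (hderiv : deriv F =ᶠ[𝓝 c] fun s ↦ -(D s * F s))
    (hDc : CompletelyMonotoneAt D c) (hFc : 0 ≤ F c) : CompletelyMonotoneAt F c := by
  intro n
  induction n using Nat.strong_induction_on with
  | _ n ih =>
    rcases n with _ | n
    · simpa using hFc
    rw [iteratedDeriv_succ', hderiv.iteratedDeriv_eq n, iteratedDeriv_fun_neg,
      iteratedDeriv_fun_mul hD.contDiffAt hF.contDiffAt, pow_succ, mul_assoc, neg_one_mul, neg_neg,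
      Finset.mul_sum]
    refine Finset.sum_nonneg fun i hi ↦ ?_
    have hin : i ≤ n := Nat.lt_succ_iff.mp (Finset.mem_range.mp hi)
    have hterm : (-1 : ℂ) ^ n * (n.choose i * iteratedDeriv i D c * iteratedDeriv (n - i) F c) =
        n.choose i * (((-1) ^ i * iteratedDeriv i D c) *
          ((-1) ^ (n - i) * iteratedDeriv (n - i) F c)) := by
      rw [← Nat.add_sub_cancel' hin, pow_add, Nat.add_sub_cancel_left]
      ring
    rw [hterm]
    exact mul_nonneg (by positivity) (mul_nonneg (hDc i) (ih (n - i) (by lia)))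

end CompletelyMonotone

section Estermann

variable {E : ℂ → ℂ} {Q : ℝ}

/-- The coefficient of `(2 - s) ^ m` in the Taylor expansion of `(E s - E 1) / (s - 1)` at `2`. -/
noncomputable def slopeCoeff (E : ℂ → ℂ) (m : ℕ) : ℝ :=
  ((-1) ^ m * iteratedDeriv m (dslope E 1) 2 / (m.factorial : ℂ)).re

lemma differentiable_dslope (hE : Differentiable ℂ E) (c : ℂ) : Differentiable ℂ (dslope E c) := by
  rw [← differentiableOn_univ] at hE ⊢
  exact (differentiableOn_dslope univ_mem).mpr hE

lemma dslope_one_of_ne {s : ℂ} (hs : s ≠ 1) : dslope E 1 s = (E s - E 1) / (s - 1) := by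
  rw [dslope_of_ne _ hs, slope_def_field]

lemma norm_dslope_one_le (hQ : ∀ s : ℂ, ‖s - 2‖ ≤ 3 / 2 → ‖E s‖ ≤ Q) {z : ℂ}
    (hz : z ∈ sphere (2 : ℂ) (3 / 2)) : ‖dslope E 1 z‖ ≤ 4 * Q := by
  rw [mem_sphere, dist_eq_norm] at hz
  have hdist : 1 / 2 ≤ ‖z - 1‖ := by
    have h := norm_sub_norm_le (z - 2) (-1)
    rw [norm_neg, norm_one, hz, show z - 2 - -1 = z - 1 by ring] at h
    linarith
  have hz1 : z ≠ 1 := by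
    rintro rfl
    norm_num at hdist
  rw [dslope_one_of_ne hz1, norm_div, div_le_iff₀ (by linarith)]
  have hsub : ‖E z - E 1‖ ≤ Q + Q :=
    (norm_sub_le _ _).trans (add_le_add (hQ z hz.le) (hQ 1 (by norm_num)))
  nlinarith [norm_nonneg (E z - E 1)]

lemma abs_slopeCoeff_le (hE : Differentiable ℂ E) (hQ : ∀ s : ℂ, ‖s - 2‖ ≤ 3 / 2 → ‖E s‖ ≤ Q)
    (m : ℕ) : |slopeCoeff E m| ≤ 4 * Q * (2 / 3) ^ m := by
  have hCauchy := norm_iteratedDeriv_le_of_forall_mem_sphere_norm_le m (by norm_num)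
    (differentiable_dslope hE 1).diffContOnCl fun z hz ↦ norm_dslope_one_le hQ hz
  refine (abs_re_le_norm _).trans ?_
  rw [norm_div, norm_mul, norm_pow, norm_neg, norm_one, one_pow, one_mul, norm_natCast,
    div_le_iff₀ (by positivity)]
  refine hCauchy.trans (le_of_eq ?_)
  rw [show (2 / 3 : ℝ) = (3 / 2)⁻¹ by norm_num, inv_pow]
  ring

lemma neg_one_pow_mul_iteratedDeriv_div_sub_one (hE : Differentiable ℂ E) (m : ℕ) :
    (-1) ^ m * iteratedDeriv m (fun s ↦ E s / (s - 1)) 2 =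
      (-1) ^ m * iteratedDeriv m (dslope E 1) 2 + m.factorial * E 1 := by
  have hsplit : (fun s ↦ E s / (s - 1)) =ᶠ[𝓝 2] dslope E 1 + fun s ↦ E 1 * (1 * s - 1)⁻¹ := by
    filter_upwards [isOpen_ne.mem_nhds (show (2 : ℂ) ≠ 1 by norm_num)] with s hs
    rw [Pi.add_apply, dslope_one_of_ne hs, one_mul]
    ring
  have hpole : ContDiffAt ℂ m (fun s : ℂ ↦ E 1 * (1 * s - 1)⁻¹) 2 :=
    contDiffAt_const.mul (ContDiffAt.inv (by fun_prop) (by norm_num))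
  have hderiv : iteratedDeriv m (fun s : ℂ ↦ (1 * s - 1)⁻¹) 2 = (-1) ^ m * m.factorial := by
    rw [iteratedDeriv_eq_iterate, iter_deriv_inv_linear_sub]
    norm_num
  have hsign : (-1 : ℂ) ^ m * (-1) ^ m = 1 := by rw [← mul_pow]; norm_num
  rw [hsplit.iteratedDeriv_eq m,
    iteratedDeriv_add (differentiable_dslope hE 1).contDiff.contDiffAt hpole,
    iteratedDeriv_const_mul_field, hderiv]
  linear_combination (m.factorial * E 1) * hsign

lemma slopeCoeff_add_re_nonneg (hE : Differentiable ℂ E)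
    (hpos : CompletelyMonotoneAt (fun s ↦ E s / (s - 1)) 2) (m : ℕ) :
    0 ≤ slopeCoeff E m + (E 1).re := by
  have hre := (nonneg_iff.mp (hpos m)).1
  have hfact : (m.factorial : ℂ) ≠ 0 := Nat.cast_ne_zero.mpr m.factorial_ne_zero
  have hscale : (-1) ^ m * iteratedDeriv m (dslope E 1) 2 + m.factorial * E 1 =
      (m.factorial : ℝ) *
        ((-1) ^ m * iteratedDeriv m (dslope E 1) 2 / (m.factorial : ℂ) + E 1) := by
    push_cast
    field_simp
  rw [neg_one_pow_mul_iteratedDeriv_div_sub_one hE, hscale, re_ofReal_mul, add_re] at hre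
  exact nonneg_of_mul_nonneg_right hre (by positivity)

lemma slopeCoeff_zero_add_re : slopeCoeff E 0 + (E 1).re = (E 2).re := by
  rw [slopeCoeff, iteratedDeriv_zero, dslope_one_of_ne (by norm_num), ← add_re]
  norm_num

lemma hasSum_slopeCoeff_of_eq_zero (hE : Differentiable ℂ E) {β : ℝ} (hβ1 : β < 1) (hz : E β = 0) :
    HasSum (fun m ↦ slopeCoeff E m * (2 - β) ^ m) ((E 1).re / (1 - β)) := by
  have hβc : (β : ℂ) ≠ 1 := by exact_mod_cast hβ1.ne
  have hvalue : (dslope E 1 β).re = (E 1).re / (1 - β) := by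
    rw [dslope_one_of_ne hβc, hz, zero_sub, ← neg_sub, neg_div_neg_eq,
      show (1 : ℂ) - β = ((1 - β : ℝ) : ℂ) by push_cast; ring, div_ofReal_re]
  rw [← hvalue]
  refine (reCLM.hasSum (hasSum_taylorSeries_of_entire (differentiable_dslope hE 1) 2 β)).congr_fun
    fun m ↦ ?_
  simp only [reCLM_apply, slopeCoeff, smul_eq_mul]
  rw [← re_mul_ofReal]
  congr 1
  push_cast
  rw [show (β : ℂ) - 2 = (-1) * (2 - β) by ring, mul_pow]
  field_simp

lemma abs_tsum_slopeCoeff_tail_le (hE : Differentiable ℂ E)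
    (hQ : ∀ s : ℂ, ‖s - 2‖ ≤ 3 / 2 → ‖E s‖ ≤ Q) {x : ℝ} (hx : 0 < x) (hx' : x ≤ 9 / 8) (M : ℕ) :
    |∑' i, slopeCoeff E (i + M) * x ^ (i + M)| ≤ 16 * Q * (3 / 4) ^ M := by
  have hQ0 : 0 ≤ Q := (norm_nonneg _).trans (hQ 2 (by norm_num))
  have hgeom : HasSum (fun i : ℕ ↦ 4 * Q * (3 / 4 : ℝ) ^ M * (3 / 4) ^ i)
      (4 * Q * (3 / 4 : ℝ) ^ M * (1 - 3 / 4)⁻¹) :=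
    (hasSum_geometric_of_lt_one (by norm_num) (by norm_num)).mul_left _
  have hterm (i : ℕ) : ‖slopeCoeff E (i + M) * x ^ (i + M)‖ ≤
      4 * Q * (3 / 4 : ℝ) ^ M * (3 / 4) ^ i := by
    rw [Real.norm_eq_abs, abs_mul, abs_of_pos (by positivity : 0 < x ^ (i + M))]
    calc |slopeCoeff E (i + M)| * x ^ (i + M)
        ≤ 4 * Q * (2 / 3) ^ (i + M) * (9 / 8) ^ (i + M) := by
          gcongr; exact abs_slopeCoeff_le hE hQ _
      _ = 4 * Q * (2 / 3 * (9 / 8)) ^ (i + M) := by rw [mul_pow]; ring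
      _ = 4 * Q * (3 / 4 : ℝ) ^ M * (3 / 4) ^ i := by rw [pow_add]; norm_num; ring
  refine (tsum_of_norm_bounded hgeom hterm).trans (le_of_eq ?_)
  ring

lemma sub_le_sum_slopeCoeff (hE : Differentiable ℂ E)
    (hpos : CompletelyMonotoneAt (fun s ↦ E s / (s - 1)) 2) {x : ℝ} (hx : 1 < x) {M : ℕ}
    (hM : 0 < M) :
    (E 2).re - (E 1).re * ((x ^ M - 1) / (x - 1)) ≤
      ∑ i ∈ Finset.range M, slopeCoeff E i * x ^ i := by
  rw [← geom_sum_eq hx.ne', Finset.mul_sum, sub_le_iff_le_add, ← Finset.sum_add_distrib]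
  calc (E 2).re = slopeCoeff E 0 * x ^ 0 + (E 1).re * x ^ 0 := by
        rw [← slopeCoeff_zero_add_re, pow_zero, mul_one, mul_one]
    _ ≤ _ := Finset.single_le_sum (f := fun i ↦ slopeCoeff E i * x ^ i + (E 1).re * x ^ i)
        (fun i _ ↦ by
          rw [← add_mul]
          exact mul_nonneg (slopeCoeff_add_re_nonneg hE hpos i) (by positivity))
        (Finset.mem_range.mpr hM)

lemma estermann_inequality (hE : Differentiable ℂ E)
    (hQ : ∀ s : ℂ, ‖s - 2‖ ≤ 3 / 2 → ‖E s‖ ≤ Q)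
    (hpos : CompletelyMonotoneAt (fun s ↦ E s / (s - 1)) 2) {β : ℝ} (hβ : 7 / 8 ≤ β) (hβ1 : β < 1)
    (hz : E β = 0) {M : ℕ} (hM : 0 < M) :
    ((E 2).re - 16 * Q * (3 / 4) ^ M) * (1 - β) ≤ (E 1).re * (2 - β) ^ M := by
  have hsum := hasSum_slopeCoeff_of_eq_zero hE hβ1 hz
  have hsplit := hsum.summable.sum_add_tsum_nat_add M
  rw [hsum.tsum_eq] at hsplit
  have htail := (abs_le.mp
    (abs_tsum_slopeCoeff_tail_le hE hQ (x := 2 - β) (by linarith) (by linarith) M)).1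
  have hhead := sub_le_sum_slopeCoeff hE hpos (x := 2 - β) (by linarith) hM
  rw [show 2 - β - 1 = 1 - β by ring] at hhead
  rw [← le_div_iff₀ (by linarith)]
  calc (E 2).re - 16 * Q * (3 / 4) ^ M
      ≤ (E 1).re * (((2 - β) ^ M - 1) / (1 - β)) + (E 1).re / (1 - β) := by linarith
    _ = (E 1).re * (2 - β) ^ M / (1 - β) := by ring

lemma three_fourths_pow_le {Y : ℝ} (hY : 0 < Y) {M : ℕ} (hM : 4 * Real.log Y ≤ M) :
    (3 / 4 : ℝ) ^ M ≤ Y⁻¹ := by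
  calc (3 / 4 : ℝ) ^ M ≤ (Real.exp (-(1 / 4))) ^ M := by
        gcongr; linarith [Real.add_one_le_exp (-(1 / 4))]
    _ = Real.exp (-(M / 4)) := by rw [← Real.exp_nat_mul]; congr 1; ring
    _ ≤ Real.exp (-Real.log Y) := by gcongr; linarith
    _ = Y⁻¹ := by rw [Real.exp_neg, Real.exp_log hY]

lemma one_add_pow_le_rpow {Y δ : ℝ} (hY : 0 < Y) (hδ : 0 ≤ δ) (hδ1 : δ ≤ 1) {M : ℕ}
    (hM : (M : ℝ) ≤ 4 * Real.log Y + 1) : (1 + δ) ^ M ≤ 8 * Y ^ (4 * δ) := by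
  calc (1 + δ) ^ M ≤ (Real.exp δ) ^ M := by gcongr; linarith [Real.add_one_le_exp δ]
    _ = Real.exp (M * δ) := by rw [← Real.exp_nat_mul]
    _ ≤ Real.exp ((4 * Real.log Y + 1) * δ) := by gcongr
    _ = Real.exp δ * Y ^ (4 * δ) := by
        rw [Real.rpow_def_of_pos hY, ← Real.exp_add]; congr 1; ring
    _ ≤ 8 * Y ^ (4 * δ) := by
        gcongr
        linarith [Real.exp_le_exp.mpr hδ1, Real.exp_one_lt_d9]

theorem estermann (hE : Differentiable ℂ E) (hQ : ∀ s : ℂ, ‖s - 2‖ ≤ 3 / 2 → ‖E s‖ ≤ Q)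
    (hpos : CompletelyMonotoneAt (fun s ↦ E s / (s - 1)) 2) {b : ℝ} (hb : 0 < b)
    (hb2 : b ≤ (E 2).re) {β : ℝ} (hβ : 7 / 8 ≤ β) (hβ1 : β < 1) (hz : E β = 0) :
    b / 16 * (1 - β) ≤ ‖E 1‖ * (32 * Q / b) ^ (4 * (1 - β)) := by
  have hbQ : b ≤ Q := hb2.trans ((re_le_norm _).trans (hQ 2 (by norm_num)))
  have hQ0 : 0 < Q := hb.trans_le hbQ
  set Y := 32 * Q / b with hY
  have hY1 : 1 < Y := by rw [hY, lt_div_iff₀ hb]; linarith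
  have hlog : 0 < Real.log Y := Real.log_pos hY1
  have hM : 0 < ⌈4 * Real.log Y⌉₊ := Nat.ceil_pos.mpr (by positivity)
  set M := ⌈4 * Real.log Y⌉₊
  have htail : 16 * Q * (3 / 4) ^ M ≤ b / 2 := by
    calc 16 * Q * (3 / 4) ^ M ≤ 16 * Q * Y⁻¹ := by
          gcongr; exact three_fourths_pow_le (by linarith) (Nat.le_ceil _)
      _ = b / 2 := by rw [hY]; field_simp; norm_num
  have hpow : (2 - β) ^ M ≤ 8 * Y ^ (4 * (1 - β)) := by
    have h := one_add_pow_le_rpow (Y := Y) (δ := 1 - β) (by linarith) (by linarith) (by linarith)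
      (Nat.ceil_lt_add_one (by positivity)).le
    rwa [show 1 + (1 - β) = 2 - β by ring] at h
  have hmain : b / 2 * (1 - β) ≤ ‖E 1‖ * (8 * Y ^ (4 * (1 - β))) := by
    calc b / 2 * (1 - β) ≤ ((E 2).re - 16 * Q * (3 / 4) ^ M) * (1 - β) := by gcongr; linarith
      _ ≤ (E 1).re * (2 - β) ^ M := estermann_inequality hE hQ hpos hβ hβ1 hz hM
      _ ≤ ‖E 1‖ * (2 - β) ^ M := by
          have hbase : 0 ≤ 2 - β := by linarith
          gcongr
          exact re_le_norm _
      _ ≤ ‖E 1‖ * (8 * Y ^ (4 * (1 - β))) := by gcongr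
  linarith

end Estermann

section SiegelTheorem

variable {q : ℕ} [NeZero q]

lemma norm_partialSum_char_le_interpolated {χ : DirichletCharacter ℂ q} (hχ : χ ≠ 1) {θ : ℝ}
    (h0 : 0 ≤ θ) (h1 : θ ≤ 1) {t : ℝ} (ht : 0 < t) :
    ‖partialSum (fun n ↦ χ n) t‖ ≤ (q : ℝ) ^ θ * t ^ (1 - θ) := by
  rcases (norm_nonneg (partialSum (fun n ↦ χ n) t)).eq_or_lt with h | h
  · rw [← h]
    positivity
  calc ‖partialSum (fun n ↦ χ n) t‖
      = ‖partialSum (fun n ↦ χ n) t‖ ^ θ * ‖partialSum (fun n ↦ χ n) t‖ ^ (1 - θ) := by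
        rw [← Real.rpow_add h, add_sub_cancel, Real.rpow_one]
    _ ≤ (q : ℝ) ^ θ * t ^ (1 - θ) := by
        gcongr
        · exact norm_partialSum_char_le hχ t
        · exact norm_partialSum_le_self (fun n ↦ χ.norm_le_one n) ht.le

lemma norm_mellinTail_char_le {χ : DirichletCharacter ℂ q} (hχ : χ ≠ 1) {θ : ℝ}
    (h0 : 0 ≤ θ) (h1 : θ ≤ 1) {s : ℂ} (hs : 1 < s.re + θ) :
    ‖mellinTail (partialSum fun n ↦ χ n) s‖ ≤ (q : ℝ) ^ θ / (s.re + θ - 1) := by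
  have hintegrable : IntegrableOn (fun t : ℝ ↦ (q : ℝ) ^ θ * t ^ (-s.re - θ)) (Ioi 1) :=
    (integrableOn_Ioi_rpow_of_lt (by linarith) one_pos).const_mul _
  calc ‖mellinTail (partialSum fun n ↦ χ n) s‖
      ≤ ∫ t in Ioi (1 : ℝ), (q : ℝ) ^ θ * t ^ (-s.re - θ) := by
        refine norm_integral_le_of_norm_le hintegrable
          ((ae_restrict_iff' measurableSet_Ioi).mpr (ae_of_all _ fun t ht ↦ ?_))
        have ht0 : (0 : ℝ) < t := zero_lt_one.trans ht
        have hexp : 1 - θ + (-(s + 1)).re = -s.re - θ := by simp; ring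
        rw [norm_mul, norm_cpow_eq_rpow_re_of_pos ht0, ← hexp, Real.rpow_add ht0, ← mul_assoc]
        gcongr
        exact norm_partialSum_char_le_interpolated hχ h0 h1 ht0
    _ = (q : ℝ) ^ θ / (s.re + θ - 1) := by
        rw [integral_const_mul, integral_Ioi_rpow_of_lt (by linarith) one_pos, Real.one_rpow,
          ← neg_div_neg_eq, neg_neg, mul_one_div]
        congr 1
        ring

lemma norm_LFunction_le_of_near_one {χ : DirichletCharacter ℂ q} (hχ : χ ≠ 1) {δ : ℝ} (h0 : 0 < δ)
    (h1 : δ ≤ 1 / 4) {s : ℂ} (hs : ‖s - 1‖ ≤ δ) :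
    ‖LFunction χ s‖ ≤ 2 * (q : ℝ) ^ (2 * δ) / δ := by
  have hre : 1 - δ ≤ s.re := by
    have := (abs_le.mp ((abs_re_le_norm (s - 1)).trans hs)).1
    rw [sub_re, one_re] at this
    linarith
  have hnorm : ‖s‖ ≤ 2 := by
    have := norm_le_norm_add_norm_sub' s 1
    rw [norm_one] at this
    linarith
  calc ‖LFunction χ s‖ = ‖s‖ * ‖mellinTail (partialSum fun n ↦ χ n) s‖ := by
        rw [LFunction_eq_mul_mellinTail hχ (by linarith), norm_mul]
    _ ≤ 2 * ((q : ℝ) ^ (2 * δ) / (s.re + 2 * δ - 1)) := by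
        gcongr
        exact norm_mellinTail_char_le hχ (by linarith) (by linarith) (by linarith)
    _ ≤ 2 * ((q : ℝ) ^ (2 * δ) / δ) := by
        gcongr
        linarith
    _ = 2 * (q : ℝ) ^ (2 * δ) / δ := by ring

lemma norm_LFunction_one_le_of_zero {χ : DirichletCharacter ℂ q} (hχ : χ ≠ 1) {δ β : ℝ}
    (h0 : 0 < δ) (h1 : δ ≤ 1 / 4) (hβ : 1 - δ < β) (hβ1 : β < 1) (hz : LFunction χ β = 0) :
    ‖LFunction χ 1‖ ≤ 4 * (q : ℝ) ^ (2 * δ) / δ / δ * (1 - β) := by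
  have hdist : dist (β : ℂ) 1 = 1 - β := by
    rw [dist_comm, dist_eq_norm, ← ofReal_one, ← ofReal_sub, norm_real, Real.norm_eq_abs,
      abs_of_pos (by linarith)]
  have hmaps : MapsTo (LFunction χ) (ball 1 δ)
      (closedBall (LFunction χ 1) (4 * (q : ℝ) ^ (2 * δ) / δ)) := fun s hs ↦ by
    rw [mem_closedBall, dist_eq_norm]
    calc ‖LFunction χ s - LFunction χ 1‖ ≤ ‖LFunction χ s‖ + ‖LFunction χ 1‖ := norm_sub_le _ _
      _ ≤ 2 * (q : ℝ) ^ (2 * δ) / δ + 2 * (q : ℝ) ^ (2 * δ) / δ := by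
          gcongr
          · exact norm_LFunction_le_of_near_one hχ h0 h1 (mem_ball_iff_norm.mp hs).le
          · exact norm_LFunction_le_of_near_one hχ h0 h1 (by simpa using h0.le)
      _ = 4 * (q : ℝ) ^ (2 * δ) / δ := by ring
  have hschwarz := dist_le_div_mul_dist_of_mapsTo_ball (z := (β : ℂ))
    (differentiable_LFunction hχ).differentiableOn hmaps (by rw [mem_ball, hdist]; linarith)
  rwa [hz, dist_zero_left, hdist] at hschwarz

open scoped ComplexOrder

lemma hasSum_LFunction_two {χ : DirichletCharacter ℂ q} (h2 : χ ^ 2 = 1) :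
    HasSum (fun n : ℕ ↦ (((χ n).re * (1 / (n : ℝ) ^ 2) : ℝ) : ℂ)) (LFunction χ 2) := by
  have hs : 1 < (2 : ℂ).re := by simp
  have hsum := (LSeriesSummable_of_one_lt_re χ hs).LSeriesHasSum
  rw [LSeriesHasSum, ← LFunction_eq_LSeries χ hs] at hsum
  refine hsum.congr_fun fun n ↦ ?_
  rcases eq_or_ne n 0 with rfl | hn
  · simp
  have hreal : ((χ n).re : ℂ) = χ n := conj_eq_iff_re.mp (conj_apply_of_sq_eq_one h2 _)
  rw [LSeries.term_of_ne_zero hn]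
  push_cast
  simp [hreal, div_eq_mul_inv]

lemma LFunction_two_nonneg {χ : DirichletCharacter ℂ q} (h2 : χ ^ 2 = 1) :
    0 ≤ LFunction χ 2 := by
  have hquad : χ.IsQuadratic := MulChar.isQuadratic_iff_sq_eq_one.mpr h2
  have hre := reCLM.hasSum (hasSum_LFunction_two h2)
  have him := imCLM.hasSum (hasSum_LFunction_two h2)
  simp only [imCLM_apply, reCLM_apply, ofReal_re, ofReal_im] at hre him
  -- Comparison with the first term of `L(2, χ) + ζ(2)`, where `ζ(2) < 2`.
  have hfirst := le_hasSum (hre.add hasSum_zeta_two) 1 fun n _ ↦ by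
    rcases hquad n with h | h | h <;> rw [h] <;> simp
  have hpi : Real.pi ^ 2 / 6 < 2 := by nlinarith [Real.pi_lt_d2, Real.pi_gt_three]
  simp only [Nat.cast_one, map_one, one_re, one_pow, div_one, mul_one] at hfirst
  refine Complex.le_def.mpr ⟨?_, ?_⟩
  · rw [zero_re]
    linarith
  · rw [zero_im, him.unique hasSum_zero]

lemma deriv_LFunction_eq_neg_mul (χ : DirichletCharacter ℂ q) {s : ℂ} (hs : 1 < s.re) :
    deriv (LFunction χ) s = -(vonMangoldtLSeries χ s * LFunction χ s) := by
  have hne : LFunction χ s ≠ 0 := LFunction_ne_zero_of_one_le_re χ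
    (Or.inr (by rintro rfl; simp at hs)) hs.le
  rw [vonMangoldtLSeries_eq_neg_logDeriv_LFunction χ hs, logDeriv_apply, neg_mul, neg_neg,
    div_mul_cancel₀ _ hne]

/-- The product `L(s, 1) L(s, χ₁) L(s, χ₂) L(s, χ₁ χ₂)`. For distinct quadratic `χ₁`, `χ₂` this is,
up to Euler factors, the Dedekind zeta function of a biquadratic field. -/
noncomputable def biquadraticLFunction (χ₁ χ₂ : DirichletCharacter ℂ q) (s : ℂ) : ℂ :=
  LFunction (1 : DirichletCharacter ℂ q) s * LFunction χ₁ s * LFunction χ₂ s *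
    LFunction (χ₁ * χ₂) s

/-- The coefficients of the Dirichlet series `-F'/F` for `F = biquadraticLFunction χ₁ χ₂`. -/
noncomputable def biquadraticVonMangoldt (χ₁ χ₂ : DirichletCharacter ℂ q) : ℕ → ℂ :=
  (fun n : ℕ ↦ (1 : DirichletCharacter ℂ q) n * (ArithmeticFunction.vonMangoldt n : ℂ)) +
    (fun n : ℕ ↦ χ₁ n * (ArithmeticFunction.vonMangoldt n : ℂ)) +
    (fun n : ℕ ↦ χ₂ n * (ArithmeticFunction.vonMangoldt n : ℂ)) +
    (fun n : ℕ ↦ (χ₁ * χ₂) n * (ArithmeticFunction.vonMangoldt n : ℂ))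

section Biquadratic

variable {χ₁ χ₂ : DirichletCharacter ℂ q}

omit [NeZero q] in
lemma biquadraticVonMangoldt_nonneg (h1 : χ₁ ^ 2 = 1) (h2 : χ₂ ^ 2 = 1) :
    0 ≤ biquadraticVonMangoldt χ₁ χ₂ := fun n ↦ by
  have hΛ : (0 : ℂ) ≤ (ArithmeticFunction.vonMangoldt n : ℂ) :=
    zero_le_real.mpr ArithmeticFunction.vonMangoldt_nonneg
  have hquad₁ : χ₁.IsQuadratic := MulChar.isQuadratic_iff_sq_eq_one.mpr h1
  have hquad₂ : χ₂.IsQuadratic := MulChar.isQuadratic_iff_sq_eq_one.mpr h2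
  simp only [biquadraticVonMangoldt, Pi.add_apply, Pi.zero_apply, MulChar.mul_apply, ← add_mul]
  refine mul_nonneg ?_ hΛ
  by_cases hu : IsUnit (n : ZMod q)
  · rw [MulChar.one_apply hu]
    rcases hquad₁ n with h | h | h <;> rcases hquad₂ n with h' | h' | h' <;> rw [h, h'] <;> norm_num
  · simp [MulChar.map_nonunit _ hu]

omit [NeZero q] in
lemma LSeriesHasSum_biquadraticVonMangoldt {s : ℂ} (hs : 1 < s.re) :
    LSeriesHasSum (biquadraticVonMangoldt χ₁ χ₂) s
      (vonMangoldtLSeries (1 : DirichletCharacter ℂ q) s + vonMangoldtLSeries χ₁ s +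
        vonMangoldtLSeries χ₂ s + vonMangoldtLSeries (χ₁ * χ₂) s) := by
  have hsum (χ : DirichletCharacter ℂ q) : LSeriesHasSum
      (fun n : ℕ ↦ χ n * (ArithmeticFunction.vonMangoldt n : ℂ)) s (vonMangoldtLSeries χ s) :=
    (LSeriesSummable_twist_vonMangoldt χ hs).LSeriesHasSum
  exact (((hsum 1).add (hsum χ₁)).add (hsum χ₂)).add (hsum (χ₁ * χ₂))

omit [NeZero q] in
lemma abscissaOfAbsConv_biquadraticVonMangoldt_lt {x : ℝ} (hx : 1 < x) :
    LSeries.abscissaOfAbsConv (biquadraticVonMangoldt χ₁ χ₂) < x :=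
  (LSeries.abscissaOfAbsConv_le_of_forall_lt_LSeriesSummable fun _ hy ↦
    (LSeriesHasSum_biquadraticVonMangoldt (by simpa using hy)).LSeriesSummable).trans_lt
    (EReal.coe_lt_coe_iff.mpr hx)

lemma differentiableAt_biquadraticLFunction {s : ℂ} (hs : s ≠ 1) :
    DifferentiableAt ℂ (biquadraticLFunction χ₁ χ₂) s :=
  have hL (χ : DirichletCharacter ℂ q) := differentiableAt_LFunction χ s (Or.inl hs)
  (((hL 1).mul (hL χ₁)).mul (hL χ₂)).mul (hL (χ₁ * χ₂))

lemma deriv_biquadraticLFunction {s : ℂ} (hs : 1 < s.re) :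
    deriv (biquadraticLFunction χ₁ χ₂) s =
      -(LSeries (biquadraticVonMangoldt χ₁ χ₂) s * biquadraticLFunction χ₁ χ₂ s) := by
  have hs1 : s ≠ 1 := by rintro rfl; simp at hs
  have hL (χ : DirichletCharacter ℂ q) :
      HasDerivAt (LFunction χ) (-(vonMangoldtLSeries χ s * LFunction χ s)) s := by
    rw [← deriv_LFunction_eq_neg_mul χ hs]
    exact (differentiableAt_LFunction χ s (Or.inl hs1)).hasDerivAt
  refine ((((hL 1).mul (hL χ₁)).mul (hL χ₂)).mul (hL (χ₁ * χ₂))).deriv.trans ?_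
  simp only [(LSeriesHasSum_biquadraticVonMangoldt hs).LSeries_eq, biquadraticLFunction,
    Pi.mul_apply]
  ring

lemma biquadraticLFunction_two_nonneg (h1 : χ₁ ^ 2 = 1) (h2 : χ₂ ^ 2 = 1) :
    0 ≤ biquadraticLFunction χ₁ χ₂ 2 :=
  mul_nonneg (mul_nonneg (mul_nonneg (LFunction_two_nonneg (one_pow 2)) (LFunction_two_nonneg h1))
    (LFunction_two_nonneg h2)) (LFunction_two_nonneg (by rw [mul_pow, h1, h2, one_mul]))

lemma completelyMonotoneAt_biquadraticLFunction (h1 : χ₁ ^ 2 = 1) (h2 : χ₂ ^ 2 = 1) :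
    CompletelyMonotoneAt (biquadraticLFunction χ₁ χ₂) 2 := by
  have hhalf : {s : ℂ | 1 < s.re} ∈ 𝓝 (2 : ℂ) :=
    (isOpen_lt continuous_const continuous_re).mem_nhds (by simp)
  have habs : LSeries.abscissaOfAbsConv (biquadraticVonMangoldt χ₁ χ₂) < (2 : ℝ) :=
    abscissaOfAbsConv_biquadraticVonMangoldt_lt one_lt_two
  refine completelyMonotoneAt_of_deriv_eq_neg_mul
    (D := LSeries (biquadraticVonMangoldt χ₁ χ₂)) ?_ ?_ ?_ ?_
    (biquadraticLFunction_two_nonneg h1 h2)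
  · refine DifferentiableOn.analyticAt (fun s hs ↦ ?_) (isOpen_ne.mem_nhds (OfNat.ofNat_ne_one 2))
    exact (differentiableAt_biquadraticLFunction hs).differentiableWithinAt
  · exact LSeries_analyticOnNhd _ _ (by simpa using habs)
  · filter_upwards [hhalf] with s hs using deriv_biquadraticLFunction hs
  · intro n
    simpa using LSeries.iteratedDeriv_alternating (x := 2) (biquadraticVonMangoldt_nonneg h1 h2)
      habs n

/-- The entire function `(s - 1) L(s, 1) L(s, χ₁) L(s, χ₂) L(s, χ₁ χ₂)`, for nontrivial `χ₁`, `χ₂`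
and `χ₁ χ₂`. -/
noncomputable def entireBiquadraticLFunction (χ₁ χ₂ : DirichletCharacter ℂ q) (s : ℂ) : ℂ :=
  entireLFunction (1 : DirichletCharacter ℂ q) s * entireLFunction χ₁ s * entireLFunction χ₂ s *
    entireLFunction (χ₁ * χ₂) s

lemma differentiable_entireBiquadraticLFunction :
    Differentiable ℂ (entireBiquadraticLFunction χ₁ χ₂) :=
  (((differentiable_entireLFunction 1).mul (differentiable_entireLFunction χ₁)).mul
    (differentiable_entireLFunction χ₂)).mul (differentiable_entireLFunction (χ₁ * χ₂))

lemma norm_entireBiquadraticLFunction_le {s : ℂ} (hs : ‖s - 2‖ ≤ 3 / 2) :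
    ‖entireBiquadraticLFunction χ₁ χ₂ s‖ ≤ (81 * q) ^ 4 := by
  have hre : 1 / 2 ≤ s.re := by
    have := (abs_le.mp ((abs_re_le_norm (s - 2)).trans hs)).1
    rw [sub_re, re_ofNat] at this
    linarith
  have hnorm : ‖s‖ ≤ 7 / 2 := by
    have := norm_le_norm_add_norm_sub' s 2
    rw [RCLike.norm_ofNat] at this
    linarith
  have hfactor (χ : DirichletCharacter ℂ q) : ‖entireLFunction χ s‖ ≤ 81 * q := calc
    _ ≤ 4 * q * (‖s‖ + 1) ^ 2 := norm_entireLFunction_le χ hre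
    _ ≤ 4 * q * (7 / 2 + 1) ^ 2 := by gcongr
    _ = 81 * q := by ring
  simp only [entireBiquadraticLFunction, norm_mul]
  calc _ ≤ (81 * q : ℝ) * (81 * q) * (81 * q) * (81 * q) := by gcongr <;> exact hfactor _
    _ = (81 * q) ^ 4 := by ring

lemma norm_entireLFunction_one_one_le : ‖entireLFunction (1 : DirichletCharacter ℂ q) 1‖ ≤ 1 := by
  rw [entireLFunction_one, LFunctionTrivChar₁, Function.update_self, norm_prod]
  refine Finset.prod_le_one (fun _ _ ↦ norm_nonneg _) fun p hp ↦ ?_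
  have hp1 : (1 : ℝ) ≤ p := Nat.one_le_cast.mpr (Nat.prime_of_mem_primeFactors hp).one_le
  have hinv : (p : ℝ)⁻¹ ≤ 1 := inv_le_one_of_one_le₀ hp1
  have hpos : 0 < (p : ℝ)⁻¹ := by positivity
  rw [← ofReal_natCast, ← ofReal_inv, ← ofReal_one, ← ofReal_sub, norm_real, Real.norm_eq_abs,
    abs_le]
  constructor <;> linarith

lemma entireBiquadraticLFunction_eq (n1 : χ₁ ≠ 1) (n2 : χ₂ ≠ 1) (n12 : χ₁ * χ₂ ≠ 1)
    (s : ℂ) : entireBiquadraticLFunction χ₁ χ₂ s =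
    entireLFunction (1 : DirichletCharacter ℂ q) s * LFunction χ₁ s * LFunction χ₂ s *
      LFunction (χ₁ * χ₂) s := by
  rw [entireBiquadraticLFunction, entireLFunction_of_ne_one n1, entireLFunction_of_ne_one n2,
    entireLFunction_of_ne_one n12]

lemma entireBiquadraticLFunction_div (n1 : χ₁ ≠ 1) (n2 : χ₂ ≠ 1) (n12 : χ₁ * χ₂ ≠ 1)
    {s : ℂ} (hs : s ≠ 1) :
    entireBiquadraticLFunction χ₁ χ₂ s / (s - 1) = biquadraticLFunction χ₁ χ₂ s := by
  have := sub_ne_zero.mpr hs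
  rw [entireBiquadraticLFunction_eq n1 n2 n12, entireLFunction_one_apply_of_ne hs,
    LFunctionTrivChar, biquadraticLFunction]
  field_simp

lemma le_re_entireBiquadraticLFunction_two (n1 : χ₁ ≠ 1) (n2 : χ₂ ≠ 1)
    (n12 : χ₁ * χ₂ ≠ 1) (h1 : χ₁ ^ 2 = 1) (h2 : χ₂ ^ 2 = 1) :
    1 / 81 ≤ (entireBiquadraticLFunction χ₁ χ₂ 2).re := by
  have hL (χ : DirichletCharacter ℂ q) : 1 / 3 ≤ ‖LFunction χ 2‖ := by
    have := le_norm_LFunction χ (s := 2) (by simp) (by simp)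
    norm_num at this ⊢
    exact this
  have heq : entireBiquadraticLFunction χ₁ χ₂ 2 = biquadraticLFunction χ₁ χ₂ 2 := by
    rw [← entireBiquadraticLFunction_div n1 n2 n12 (OfNat.ofNat_ne_one 2)]
    norm_num
  have hre : (biquadraticLFunction χ₁ χ₂ 2).re = ‖biquadraticLFunction χ₁ χ₂ 2‖ := by
    conv_lhs => rw [eq_coe_norm_of_nonneg (biquadraticLFunction_two_nonneg h1 h2), ofReal_re]
  rw [heq, hre, biquadraticLFunction, norm_mul, norm_mul, norm_mul]
  calc (1 / 81 : ℝ) = 1 / 3 * (1 / 3) * (1 / 3) * (1 / 3) := by norm_num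
    _ ≤ _ := by gcongr <;> exact hL _

lemma one_sub_zero_le_mul_norm_LFunction_one (n1 : χ₁ ≠ 1) (n2 : χ₂ ≠ 1)
    (n12 : χ₁ * χ₂ ≠ 1) (h1 : χ₁ ^ 2 = 1) (h2 : χ₂ ^ 2 = 1) {β : ℝ} (hβ : 7 / 8 ≤ β)
    (hβ1 : β < 1) (hz : LFunction χ₁ β = 0) :
    1 / 81 / 16 * (1 - β) ≤ ‖LFunction χ₁ 1‖ * ‖LFunction χ₂ 1‖ * ‖LFunction (χ₁ * χ₂) 1‖ *
      (32 * (81 * q) ^ 4 / (1 / 81)) ^ (4 * (1 - β)) := by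
  have hmono : CompletelyMonotoneAt (fun s ↦ entireBiquadraticLFunction χ₁ χ₂ s / (s - 1)) 2 := by
    refine (completelyMonotoneAt_biquadraticLFunction h1 h2).congr ?_
    filter_upwards [isOpen_ne.mem_nhds (OfNat.ofNat_ne_one 2)] with s hs
    exact entireBiquadraticLFunction_div n1 n2 n12 hs
  have hzero : entireBiquadraticLFunction χ₁ χ₂ β = 0 := by
    rw [entireBiquadraticLFunction_eq n1 n2 n12, hz]
    ring
  refine (estermann differentiable_entireBiquadraticLFunction
    (fun _ ↦ norm_entireBiquadraticLFunction_le) hmono (by norm_num)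
    (le_re_entireBiquadraticLFunction_two n1 n2 n12 h1 h2) hβ hβ1 hzero).trans ?_
  rw [entireBiquadraticLFunction_eq n1 n2 n12, norm_mul, norm_mul, norm_mul]
  gcongr
  exact mul_le_of_le_one_left (norm_nonneg _) norm_entireLFunction_one_one_le

end Biquadratic

lemma estermann_factor_le {ε β : ℝ} (he1 : ε ≤ 1) (hβ : 1 - ε / 32 ≤ β) (hβ1 : β < 1) :
    (32 * (81 * (q : ℝ)) ^ 4 / (1 / 81)) ^ (4 * (1 - β)) ≤ 32 * 81 ^ 5 * (q : ℝ) ^ (ε / 2) := by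
  have hq : (1 : ℝ) ≤ q := one_le_cast_of_neZero
  calc (32 * (81 * (q : ℝ)) ^ 4 / (1 / 81)) ^ (4 * (1 - β))
      = (32 * 81 ^ 5) ^ (4 * (1 - β)) * (q : ℝ) ^ (4 * (4 * (1 - β))) := by
        rw [show 32 * (81 * (q : ℝ)) ^ 4 / (1 / 81) = 32 * 81 ^ 5 * (q : ℝ) ^ (4 : ℝ) by
            norm_cast; push_cast; ring,
          Real.mul_rpow (by positivity) (by positivity), ← Real.rpow_mul (by positivity)]
    _ ≤ (32 * 81 ^ 5) ^ (1 : ℝ) * (q : ℝ) ^ (ε / 2) := by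
        gcongr
        · norm_num
        · linarith
        · linarith
    _ = 32 * 81 ^ 5 * (q : ℝ) ^ (ε / 2) := by rw [Real.rpow_one]

lemma real_zero_lt_one {χ : DirichletCharacter ℂ q} (hχ : χ ≠ 1) {β : ℝ}
    (hz : LFunction χ β = 0) : β < 1 := by
  by_contra! h
  exact LFunction_ne_zero_of_one_le_re χ (Or.inl hχ) (by simpa using h) hz

variable (q) in
lemma rpow_neg_le_one {ε : ℝ} (he0 : 0 < ε) : (q : ℝ) ^ (-ε) ≤ 1 :=
  Real.rpow_le_one_of_one_le_of_nonpos one_le_cast_of_neZero (by linarith)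

section Repulsion

variable {χ₁ χ₂ : DirichletCharacter ℂ q} {ε β₁ β₂ : ℝ}

lemma one_sub_zero_le_mul_one_sub_zero (h1 : χ₁ ^ 2 = 1) (h2 : χ₂ ^ 2 = 1) (n1 : χ₁ ≠ 1)
    (n2 : χ₂ ≠ 1) (n12 : χ₁ * χ₂ ≠ 1) (he0 : 0 < ε) (he1 : ε ≤ 1) (hβ₁ : 1 - ε / 32 ≤ β₁)
    (hz₁ : LFunction χ₁ β₁ = 0) (hβ₂ : 1 - ε / 12 < β₂) (hz₂ : LFunction χ₂ β₂ = 0) :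
    1 / 81 / 16 * (1 - β₁) ≤
      16 * (32 * 81 ^ 5) / (ε / 12) ^ 4 * (q : ℝ) ^ ε * (1 - β₂) := by
  have hq : (0 : ℝ) < q := Nat.cast_pos.mpr (NeZero.pos q)
  have hlt₁ := real_zero_lt_one n1 hz₁
  have hlt₂ := sub_pos.mpr (real_zero_lt_one n2 hz₂)
  set δ := ε / 12 with hδ
  have hδ0 : 0 < δ := by positivity
  have hδ1 : δ ≤ 1 / 4 := by rw [hδ]; linarith
  have hone : ‖(1 : ℂ) - 1‖ ≤ δ := by simpa using hδ0.le
  calc 1 / 81 / 16 * (1 - β₁)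
      ≤ _ := one_sub_zero_le_mul_norm_LFunction_one n1 n2 n12 h1 h2 (by linarith) hlt₁ hz₁
    _ ≤ (2 * (q : ℝ) ^ (2 * δ) / δ) * (4 * (q : ℝ) ^ (2 * δ) / δ / δ * (1 - β₂)) *
          (2 * (q : ℝ) ^ (2 * δ) / δ) * (32 * 81 ^ 5 * (q : ℝ) ^ (ε / 2)) := by
        gcongr
        · exact norm_LFunction_le_of_near_one n1 hδ0 hδ1 hone
        · exact norm_LFunction_one_le_of_zero n2 hδ0 hδ1 hβ₂ (by linarith) hz₂
        · exact norm_LFunction_le_of_near_one n12 hδ0 hδ1 hone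
        · exact estermann_factor_le he1 hβ₁ hlt₁
    _ = 16 * (32 * 81 ^ 5) / δ ^ 4 * ((q : ℝ) ^ (2 * δ) * (q : ℝ) ^ (2 * δ) *
          (q : ℝ) ^ (2 * δ) * (q : ℝ) ^ (ε / 2)) * (1 - β₂) := by
        field_simp
        ring
    _ = _ := by
        rw [← Real.rpow_add hq, ← Real.rpow_add hq, ← Real.rpow_add hq]
        congr 3
        rw [hδ]
        ring

lemma siegel_zero_repulsion (h1 : χ₁ ^ 2 = 1) (h2 : χ₂ ^ 2 = 1) (n1 : χ₁ ≠ 1) (n2 : χ₂ ≠ 1)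
    (n12 : χ₁ * χ₂ ≠ 1) (he0 : 0 < ε) (he1 : ε ≤ 1) (hβ₁ : 1 - ε / 32 ≤ β₁)
    (hz₁ : LFunction χ₁ β₁ = 0) (hz₂ : LFunction χ₂ β₂ = 0) :
    (1 - β₁) * (ε / 12) ^ 4 / (1296 * 16 * (32 * 81 ^ 5)) * (q : ℝ) ^ (-ε) ≤ 1 - β₂ := by
  have hq : (0 : ℝ) < q := Nat.cast_pos.mpr (NeZero.pos q)
  rcases le_or_gt β₂ (1 - ε / 12) with hβ₂ | hβ₂
  · calc (1 - β₁) * (ε / 12) ^ 4 / (1296 * 16 * (32 * 81 ^ 5)) * (q : ℝ) ^ (-ε)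
        ≤ 1 * (ε / 12) ^ 1 / 1 * 1 := by
          gcongr ?_ * ?_ / ?_ * ?_
          · linarith
          · exact pow_le_pow_of_le_one (by positivity) (by linarith) (by norm_num)
          · norm_num
          · exact rpow_neg_le_one q he0
      _ ≤ 1 - β₂ := by linarith
  calc (1 - β₁) * (ε / 12) ^ 4 / (1296 * 16 * (32 * 81 ^ 5)) * (q : ℝ) ^ (-ε)
      = (1 / 81 / 16 * (1 - β₁)) * ((ε / 12) ^ 4 / (16 * (32 * 81 ^ 5)) * (q : ℝ) ^ (-ε)) := by
        ring
    _ ≤ (16 * (32 * 81 ^ 5) / (ε / 12) ^ 4 * (q : ℝ) ^ ε * (1 - β₂)) *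
          ((ε / 12) ^ 4 / (16 * (32 * 81 ^ 5)) * (q : ℝ) ^ (-ε)) := by
        gcongr ?_ * _
        exact one_sub_zero_le_mul_one_sub_zero h1 h2 n1 n2 n12 he0 he1 hβ₁ hz₁ hβ₂ hz₂
    _ = ((q : ℝ) ^ ε * (q : ℝ) ^ (-ε)) * (1 - β₂) := by field_simp
    _ = 1 - β₂ := by rw [← Real.rpow_add hq, add_neg_cancel, Real.rpow_zero, one_mul]

end Repulsion

lemma exists_le_one_sub_of_zero {χ : DirichletCharacter ℂ q} (hχ : χ ≠ 1) :
    ∃ c : ℝ, 0 < c ∧ ∀ β : ℝ, LFunction χ β = 0 → c ≤ 1 - β := by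
  have hcont : ContinuousAt (LFunction χ) 1 := (differentiable_LFunction hχ).continuous.continuousAt
  obtain ⟨r, hr, hne⟩ := Metric.eventually_nhds_iff_ball.mp
    (hcont.eventually_ne (LFunction_apply_one_ne_zero hχ))
  refine ⟨r, hr, fun β hz ↦ ?_⟩
  by_contra! h
  have hβ := real_zero_lt_one hχ hz
  refine hne β ?_ hz
  rw [mem_ball, dist_eq_norm, ← ofReal_one, ← ofReal_sub, norm_real, Real.norm_eq_abs, abs_lt]
  constructor <;> linarith

lemma LFunction_eq_zero_of_changeLevel {N : ℕ} [NeZero N] (hN : q ∣ N)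
    {χ : DirichletCharacter ℂ q} (hχ : χ ≠ 1) {s : ℂ} (hs : 0 < s.re)
    (hz : LFunction (changeLevel hN χ) s = 0) : LFunction χ s = 0 := by
  rw [LFunction_changeLevel _ _ (Or.inl hχ)] at hz
  refine (mul_eq_zero.mp hz).resolve_right (Finset.prod_ne_zero_iff.mpr fun p hp hzero ↦ ?_)
  have hlt : ‖χ p * (p : ℂ) ^ (-s)‖ < 1 := by
    rw [norm_mul]
    exact (mul_le_of_le_one_left (norm_nonneg _) (χ.norm_le_one _)).trans_lt
      (norm_prime_cpow_neg_lt_one hp hs)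
  rw [← sub_eq_zero.mp hzero, norm_one] at hlt
  exact lt_irrefl _ hlt

lemma siegel_zero_repulsion_of_levels {q₁ : ℕ} [NeZero q₁] {χ₁ : DirichletCharacter ℂ q₁}
    {χ : DirichletCharacter ℂ q} {ε β₁ β : ℝ} (h1 : χ₁ ^ 2 = 1) (n1 : χ₁ ≠ 1) (h2 : χ ^ 2 = 1)
    (hχ : χ ≠ 1) (he0 : 0 < ε) (he1 : ε ≤ 1) (hβ₁ : 1 - ε / 32 ≤ β₁) (hz₁ : LFunction χ₁ β₁ = 0)
    (hβ : 0 < β) (hz : LFunction χ β = 0) :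
    LFunction χ₁ β = 0 ∨ (1 - β₁) * (ε / 12) ^ 4 / (1296 * 16 * (32 * 81 ^ 5)) *
      (q₁ : ℝ) ^ (-ε) * (q : ℝ) ^ (-ε) ≤ 1 - β := by
  set ψ₁ := changeLevel (Dvd.intro q rfl : q₁ ∣ q₁ * q) χ₁ with hψ₁
  set ψ := changeLevel (Dvd.intro_left q₁ rfl : q ∣ q₁ * q) χ with hψ
  have hsq₁ : ψ₁ ^ 2 = 1 := by rw [hψ₁, ← map_pow, h1, map_one]
  have hsq : ψ ^ 2 = 1 := by rw [hψ, ← map_pow, h2, map_one]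
  have hzero₁ : LFunction ψ₁ β₁ = 0 := by
    rw [hψ₁, LFunction_changeLevel _ _ (Or.inl n1), hz₁, zero_mul]
  have hzero : LFunction ψ β = 0 := by
    rw [hψ, LFunction_changeLevel _ _ (Or.inl hχ), hz, zero_mul]
  by_cases hmul : ψ₁ * ψ = 1
  · have heq : ψ = ψ₁ := mul_left_cancel (hmul.trans ((pow_two ψ₁).symm.trans hsq₁).symm)
    exact Or.inl (LFunction_eq_zero_of_changeLevel _ n1 (by simpa using hβ) (heq ▸ hzero))
  · right
    have hrep := siegel_zero_repulsion hsq₁ hsq (fun h ↦ n1 ((changeLevel_eq_one_iff _).mp h))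
      (fun h ↦ hχ ((changeLevel_eq_one_iff _).mp h)) hmul he0 he1 hβ₁ hzero₁ hzero
    rwa [Nat.cast_mul, Real.mul_rpow q₁.cast_nonneg q.cast_nonneg, ← mul_assoc] at hrep

lemma siegel_of_le_one {ε : ℝ} (he0 : 0 < ε) (he1 : ε ≤ 1) : ∃ c : ℝ, 0 < c ∧
    ∀ (q : ℕ) [NeZero q] (χ : DirichletCharacter ℂ q), χ ^ 2 = 1 → χ ≠ 1 → ∀ β : ℝ,
      LFunction χ β = 0 → c * (q : ℝ) ^ (-ε) ≤ 1 - β := by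
  by_cases hex : ∃ (q : ℕ) (_ : NeZero q) (χ : DirichletCharacter ℂ q) (β : ℝ), χ ^ 2 = 1 ∧ χ ≠ 1 ∧
      LFunction χ β = 0 ∧ 1 - ε / 32 ≤ β
  · obtain ⟨q₁, _, χ₁, β₁, h1, n1, hz₁, hβ₁⟩ := hex
    obtain ⟨c₁, hc₁, hzero₁⟩ := exists_le_one_sub_of_zero n1
    have hlt₁ := sub_pos.mpr (real_zero_lt_one n1 hz₁)
    set c₂ := (1 - β₁) * (ε / 12) ^ 4 / (1296 * 16 * (32 * 81 ^ 5)) * (q₁ : ℝ) ^ (-ε)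
    have hq₁ : (0 : ℝ) < q₁ := Nat.cast_pos.mpr (NeZero.pos q₁)
    refine ⟨min 1 (min c₁ c₂), by positivity, fun q _ χ h2 hχ β hz ↦ ?_⟩
    have hq0 : 0 ≤ (q : ℝ) ^ (-ε) := by positivity
    have hq1 := rpow_neg_le_one q he0
    rcases le_or_gt β 0 with hβ | hβ
    · exact (mul_le_one₀ (min_le_left _ _) hq0 hq1).trans (by linarith)
    rcases siegel_zero_repulsion_of_levels h1 n1 h2 hχ he0 he1 hβ₁ hz₁ hβ hz with h | h
    · calc min 1 (min c₁ c₂) * (q : ℝ) ^ (-ε) ≤ c₁ * 1 := by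
            gcongr
            exact (min_le_right _ _).trans (min_le_left _ _)
        _ ≤ 1 - β := by linarith [hzero₁ β h]
    · refine le_trans ?_ h
      gcongr
      exact (min_le_right _ _).trans (min_le_right _ _)
  · refine ⟨ε / 32, by positivity, fun q _ χ h2 hχ β hz ↦ ?_⟩
    have hβ : β < 1 - ε / 32 := by
      by_contra! h
      exact hex ⟨q, inferInstance, χ, β, h2, hχ, hz, h⟩
    linarith [mul_le_of_le_one_right (by positivity : 0 ≤ ε / 32) (rpow_neg_le_one q he0)]

theorem siegel {ε : ℝ} (he0 : 0 < ε) : ∃ c : ℝ, 0 < c ∧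
    ∀ (q : ℕ) [NeZero q] (χ : DirichletCharacter ℂ q), χ ^ 2 = 1 → χ ≠ 1 → ∀ β : ℝ,
      LFunction χ β = 0 → c * (q : ℝ) ^ (-ε) ≤ 1 - β := by
  obtain ⟨c, hc, h⟩ := siegel_of_le_one (ε := min ε 1) (by positivity) (min_le_right _ _)
  refine ⟨c, hc, fun q _ χ h2 hχ β hz ↦ le_trans ?_ (h q χ h2 hχ β hz)⟩
  have hq : (1 : ℝ) ≤ q := one_le_cast_of_neZero
  gcongr
  exact min_le_left _ _

end SiegelTheorem

section PerronFormula

/-- The weight `max 0 (1 - t)`, whose Mellin transform is `1 / (s * (s + 1))`. -/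
noncomputable def cesaroWeight (t : ℝ) : ℂ := ((max 0 (1 - t) : ℝ) : ℂ)

lemma cesaroWeight_of_le_one {t : ℝ} (ht : t ≤ 1) : cesaroWeight t = 1 - t := by
  rw [cesaroWeight, max_eq_right (by linarith)]
  push_cast
  rfl

lemma cesaroWeight_of_one_le {t : ℝ} (ht : 1 ≤ t) : cesaroWeight t = 0 := by
  rw [cesaroWeight, max_eq_left (by linarith), ofReal_zero]

lemma mul_add_one_ne_zero_of_re_pos {s : ℂ} (hs : 0 < s.re) : s * (s + 1) ≠ 0 := by
  have h0 : s ≠ 0 := ne_zero_of_re_pos hs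
  have h1 : s + 1 ≠ 0 := ne_zero_of_re_pos (by rw [add_re, one_re]; linarith)
  exact mul_ne_zero h0 h1

lemma hasMellin_cesaroWeight {s : ℂ} (hs : 0 < s.re) :
    HasMellin cesaroWeight s (1 / (s * (s + 1))) := by
  have hone := hasMellin_one_Ioc hs
  have hid := hasMellin_cpow_Ioc (1 : ℂ) (s := s) (by rw [one_re]; linarith)
  have hsub := hasMellin_sub hone.1 hid.1
  have hvalue : 1 / s - 1 / (s + 1) = 1 / (s * (s + 1)) := by
    have := mul_add_one_ne_zero_of_re_pos hs
    have h0 := left_ne_zero_of_mul this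
    have h1 := right_ne_zero_of_mul this
    field_simp
    ring
  rw [hone.2, hid.2, hvalue] at hsub
  have hweight : ∀ t ∈ Ioi (0 : ℝ), (t : ℂ) ^ (s - 1) •
      (indicator (Ioc 0 1) (fun _ ↦ 1 : ℝ → ℂ) t -
        indicator (Ioc 0 1) (fun t ↦ (t : ℂ) ^ (1 : ℂ) : ℝ → ℂ) t) =
      (t : ℂ) ^ (s - 1) • cesaroWeight t := fun t ht ↦ by
    congr 1
    rcases le_or_gt t 1 with h | h
    · have hmem : t ∈ Ioc (0 : ℝ) 1 := ⟨ht, h⟩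
      rw [indicator_of_mem hmem, indicator_of_mem hmem, cesaroWeight_of_le_one h, cpow_one]
    · have hmem : t ∉ Ioc (0 : ℝ) 1 := fun hm ↦ h.not_ge hm.2
      rw [indicator_of_notMem hmem, indicator_of_notMem hmem, cesaroWeight_of_one_le h.le, sub_zero]
  refine ⟨(integrableOn_congr_fun hweight measurableSet_Ioi).mp hsub.1, ?_⟩
  rw [← hsub.2]
  exact (setIntegral_congr_fun measurableSet_Ioi hweight).symm

lemma norm_one_div_mul_add_one_le {s : ℂ} (hs : 1 / 2 ≤ s.re) :
    ‖1 / (s * (s + 1))‖ ≤ 4 * (1 + s.im ^ 2)⁻¹ := by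
  have hsq : ‖s‖ ^ 2 = s.re ^ 2 + s.im ^ 2 := by
    rw [← normSq_eq_norm_sq, normSq_apply]
    ring
  have hsq' : ‖s + 1‖ ^ 2 = (s.re + 1) ^ 2 + s.im ^ 2 := by
    rw [← normSq_eq_norm_sq, normSq_apply, add_re, add_im, one_re, one_im]
    ring
  have hmono : ‖s‖ ≤ ‖s + 1‖ := le_of_sq_le_sq (by nlinarith) (norm_nonneg _)
  have hlow : (1 + s.im ^ 2) / 4 ≤ ‖s * (s + 1)‖ := by
    rw [norm_mul]
    nlinarith [norm_nonneg s]
  rw [norm_div, norm_one]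
  calc 1 / ‖s * (s + 1)‖ ≤ 1 / ((1 + s.im ^ 2) / 4) := by gcongr
    _ = 4 * (1 + s.im ^ 2)⁻¹ := by field_simp

/-- The kernel `X ^ s / (s * (s + 1))` of Perron's formula with the weight `cesaroWeight`. -/
noncomputable def perronKernel (X : ℝ) (s : ℂ) : ℂ := (X : ℂ) ^ s * (1 / (s * (s + 1)))

section Kernel

variable {X κ : ℝ}

lemma norm_perronKernel_le (hX : 0 < X) {s : ℂ} (hs : 1 / 2 ≤ s.re) :
    ‖perronKernel X s‖ ≤ 4 * X ^ s.re * (1 + s.im ^ 2)⁻¹ := by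
  rw [perronKernel, norm_mul, norm_cpow_eq_rpow_re_of_pos hX, mul_right_comm, mul_comm]
  gcongr
  exact norm_one_div_mul_add_one_le hs

lemma norm_perronKernel_vertical_le (hX : 0 < X) (hκ : 1 / 2 ≤ κ) (y : ℝ) :
    ‖perronKernel X (κ + y * I)‖ ≤ 4 * X ^ κ * (1 + y ^ 2)⁻¹ := by
  simpa using norm_perronKernel_le hX (s := κ + y * I) (by simpa using hκ)

lemma differentiableAt_perronKernel (hX : 0 < X) {s : ℂ} (hs : 0 < s.re) :
    DifferentiableAt ℂ (perronKernel X) s := by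
  have hX' : (X : ℂ) ≠ 0 := ofReal_ne_zero.mpr hX.ne'
  exact (differentiableAt_id.const_cpow (Or.inl hX')).mul
    ((differentiableAt_const 1).div (by fun_prop) (mul_add_one_ne_zero_of_re_pos hs))

lemma continuous_perronKernel_vertical (hX : 0 < X) (hκ : 0 < κ) :
    Continuous fun y : ℝ ↦ perronKernel X (κ + y * I) :=
  continuous_iff_continuousAt.mpr fun y ↦
    (differentiableAt_perronKernel hX (s := κ + y * I) (by simpa using hκ)).continuousAt.comp
      (f := fun y : ℝ ↦ (κ : ℂ) + y * I) (by fun_prop)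

lemma integrable_perronKernel_vertical (hX : 0 < X) (hκ : 1 / 2 ≤ κ) :
    Integrable fun y : ℝ ↦ perronKernel X (κ + y * I) :=
  (integrable_inv_one_add_sq.const_mul (4 * X ^ κ)).mono'
    (continuous_perronKernel_vertical hX (by linarith)).aestronglyMeasurable
    (ae_of_all _ (norm_perronKernel_vertical_le hX hκ))

lemma integral_perronKernel_vertical (hX : 0 < X) (hκ : 1 / 2 ≤ κ) :
    ∫ y : ℝ, perronKernel X (κ + y * I) = (2 * Real.pi : ℝ) * cesaroWeight X⁻¹ := by
  have hmellin (y : ℝ) : mellin cesaroWeight (κ + y * I) =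
      1 / (((κ : ℂ) + y * I) * (κ + y * I + 1)) :=
    (hasMellin_cesaroWeight (by simp; linarith)).2
  have hvert : VerticalIntegrable (mellin cesaroWeight) κ := by
    simpa [VerticalIntegrable, hmellin, perronKernel] using
      integrable_perronKernel_vertical (X := 1) one_pos hκ
  have hcont : ContinuousAt cesaroWeight X⁻¹ := by
    unfold cesaroWeight
    fun_prop
  have hconv : MellinConvergent cesaroWeight κ :=
    (hasMellin_cesaroWeight (by rw [ofReal_re]; linarith)).1
  have harg : (X : ℂ).arg ≠ Real.pi := by
    rw [arg_ofReal_of_nonneg hX.le]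
    exact Real.pi_pos.ne
  have hkernel (y : ℝ) : perronKernel X (κ + y * I) =
      ((X⁻¹ : ℝ) : ℂ) ^ (-((κ : ℂ) + y * I)) • mellin cesaroWeight (κ + y * I) := by
    rw [hmellin, smul_eq_mul, perronKernel, ofReal_inv, inv_cpow _ _ harg, cpow_neg, inv_inv]
  have hpi : 2 * Real.pi * (1 / (2 * Real.pi)) = 1 := mul_one_div_cancel Real.two_pi_pos.ne'
  rw [← mellinInv_mellin_eq κ cesaroWeight (inv_pos.mpr hX) hconv hvert hcont, mellinInv,
    real_smul, ← mul_assoc, ← ofReal_mul, hpi, ofReal_one, one_mul]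
  simp only [hkernel]

end Kernel

section Perron

variable {a : ℕ → ℂ} {κ X : ℝ}

lemma term_mul_perronKernel (a : ℕ → ℂ) {n : ℕ} (hn : n ≠ 0) (hX : 0 < X) (s : ℂ) :
    LSeries.term a s n * perronKernel X s = a n * perronKernel (X / n) s := by
  rw [LSeries.term_of_ne_zero hn, perronKernel, perronKernel, ofReal_div,
    div_cpow_ofReal_nonneg hX.le n.cast_nonneg, ofReal_natCast]
  ring

lemma norm_term_vertical (a : ℕ → ℂ) (κ : ℝ) (n : ℕ) (y : ℝ) :
    ‖LSeries.term a (κ + y * I) n‖ = ‖LSeries.term a κ n‖ := by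
  simp [LSeries.norm_term_eq]

lemma integral_term_mul_perronKernel (a : ℕ → ℂ) (n : ℕ) (hX : 0 < X) (hκ : 1 / 2 ≤ κ) :
    ∫ y : ℝ, LSeries.term a (κ + y * I) n * perronKernel X (κ + y * I) =
      (2 * Real.pi : ℝ) * (if n ∈ Finset.Icc 1 ⌊X⌋₊ then a n * (1 - n / X) else 0) := by
  rcases eq_or_ne n 0 with rfl | hn
  · simp
  have hn0 : (0 : ℝ) < n := Nat.cast_pos.mpr (Nat.pos_of_ne_zero hn)
  simp only [term_mul_perronKernel a hn hX, integral_const_mul,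
    integral_perronKernel_vertical (div_pos hX hn0) hκ, inv_div]
  rw [mul_left_comm]
  congr 1
  split_ifs with hmem
  · have hle : (n : ℝ) ≤ X := (Nat.le_floor_iff hX.le).mp (Finset.mem_Icc.mp hmem).2
    rw [cesaroWeight_of_le_one ((div_le_one hX).mpr hle)]
    push_cast
    rfl
  · have hlt : X < n := by
      by_contra! h
      exact hmem (Finset.mem_Icc.mpr ⟨Nat.pos_of_ne_zero hn, Nat.le_floor h⟩)
    rw [cesaroWeight_of_one_le ((one_le_div hX).mpr hlt.le), mul_zero]

lemma integrable_term_mul_perronKernel (a : ℕ → ℂ) (n : ℕ) (hX : 0 < X) (hκ : 1 / 2 ≤ κ) :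
    Integrable fun y : ℝ ↦ LSeries.term a (κ + y * I) n * perronKernel X (κ + y * I) := by
  rcases eq_or_ne n 0 with rfl | hn
  · simp
  have hn0 : (0 : ℝ) < n := Nat.cast_pos.mpr (Nat.pos_of_ne_zero hn)
  simp only [term_mul_perronKernel a hn hX]
  exact (integrable_perronKernel_vertical (div_pos hX hn0) hκ).const_mul _

theorem perron_formula (hκ : 1 / 2 ≤ κ) (hX : 0 < X) (ha : LSeriesSummable a κ) :
    ∑ n ∈ Finset.Icc 1 ⌊X⌋₊, a n * (1 - n / X) =
      (1 / (2 * Real.pi) : ℝ) * ∫ y : ℝ, LSeries a (κ + y * I) * perronKernel X (κ + y * I) := by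
  have hintegral := hasSum_integral_of_summable_integral_norm
    (fun n ↦ integrable_term_mul_perronKernel a n hX hκ) (by
      simp only [norm_mul, norm_term_vertical, integral_const_mul]
      exact ha.norm.mul_right _)
  have hseries (y : ℝ) : ∑' n, LSeries.term a (κ + y * I) n * perronKernel X (κ + y * I) =
      LSeries a (κ + y * I) * perronKernel X (κ + y * I) := tsum_mul_right
  simp only [hseries, integral_term_mul_perronKernel a _ hX hκ] at hintegral
  have hfinite : HasSum (fun n : ℕ ↦ if n ∈ Finset.Icc 1 ⌊X⌋₊ then a n * (1 - (n : ℂ) / X) else 0)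
      (∑ n ∈ Finset.Icc 1 ⌊X⌋₊, a n * (1 - n / X)) := by
    rw [← Finset.sum_congr rfl fun n hn ↦ if_pos hn]
    exact hasSum_sum_of_ne_finset_zero fun n hn ↦ if_neg hn
  have hpi : 1 / (2 * Real.pi) * (2 * Real.pi) = 1 := one_div_mul_cancel Real.two_pi_pos.ne'
  rw [← (hfinite.mul_left _).unique hintegral, ← mul_assoc, ← ofReal_mul, hpi, ofReal_one, one_mul]

end Perron

end PerronFormula

section ContourShift

lemma norm_integral_Ioi_le_of_norm_le_inv_one_add_sq {f : ℝ → ℂ} {M T : ℝ} (hT : 0 < T)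
    (hf : ∀ y, ‖f y‖ ≤ M * (1 + y ^ 2)⁻¹) : ‖∫ y in Ioi T, f y‖ ≤ M / T := by
  have hM : 0 ≤ M := by simpa using (norm_nonneg _).trans (hf 0)
  have hintegrable : IntegrableOn (fun y : ℝ ↦ M * y ^ (-2 : ℝ)) (Ioi T) :=
    (integrableOn_Ioi_rpow_of_lt (by norm_num) hT).const_mul _
  calc ‖∫ y in Ioi T, f y‖ ≤ ∫ y in Ioi T, M * y ^ (-2 : ℝ) := by
        refine norm_integral_le_of_norm_le hintegrable
          ((ae_restrict_iff' measurableSet_Ioi).mpr (ae_of_all _ fun y hy ↦ (hf y).trans ?_))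
        have hy0 : 0 < y := hT.trans hy
        rw [Real.rpow_neg hy0.le, Real.rpow_ofNat]
        gcongr
        linarith
    _ = M / T := by
        rw [integral_const_mul, integral_Ioi_rpow_of_lt (by norm_num) hT]
        norm_num
        rw [Real.rpow_neg_one, div_eq_mul_inv]

lemma norm_integral_le_of_norm_le_inv_one_add_sq {f : ℝ → ℂ} {M T : ℝ} (hT : 0 < T)
    (hmeas : AEStronglyMeasurable f volume) (hf : ∀ y, ‖f y‖ ≤ M * (1 + y ^ 2)⁻¹) :
    ‖∫ y, f y‖ ≤ ‖∫ y in (-T)..T, f y‖ + 2 * (M / T) := by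
  have hintegrable : Integrable f :=
    (integrable_inv_one_add_sq.const_mul M).mono' hmeas (ae_of_all _ hf)
  have hsplit : ∫ y, f y = (∫ y in Ioi T, f (-y)) + (∫ y in (-T)..T, f y) + ∫ y in Ioi T, f y := by
    rw [integral_comp_neg_Ioi,
      ← intervalIntegral.integral_Iic_add_Ioi (b := T) hintegrable.integrableOn
        hintegrable.integrableOn,
      ← intervalIntegral.integral_Iic_sub_Iic (a := -T) (b := T) hintegrable.integrableOn
        hintegrable.integrableOn]
    ring
  have hleft : ‖∫ y in Ioi T, f (-y)‖ ≤ M / T :=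
    norm_integral_Ioi_le_of_norm_le_inv_one_add_sq hT fun y ↦ by simpa using hf (-y)
  have hright : ‖∫ y in Ioi T, f y‖ ≤ M / T :=
    norm_integral_Ioi_le_of_norm_le_inv_one_add_sq hT hf
  rw [hsplit]
  linarith [norm_add₃_le (a := ∫ y in Ioi T, f (-y)) (b := ∫ y in (-T)..T, f y)
    (c := ∫ y in Ioi T, f y)]

section Rectangle

variable {g : ℂ → ℂ} {σ κ T M : ℝ}

lemma add_mul_I_mem_reProdIm_Icc {x y : ℝ} (hx : x ∈ Icc σ κ) (hy : y ∈ Icc (-T) T) :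
    (x + y * I : ℂ) ∈ Icc σ κ ×ℂ Icc (-T) T := by
  rw [mem_reProdIm]
  simpa using ⟨hx, hy⟩

lemma norm_integral_vertical_le_of_differentiableOn (hκ : σ ≤ κ) (hT : 0 ≤ T)
    (hg : DifferentiableOn ℂ g (Icc σ κ ×ℂ Icc (-T) T)) :
    ‖∫ y in (-T)..T, g (κ + y * I)‖ ≤ ‖∫ y in (-T)..T, g (σ + y * I)‖ +
      ‖∫ x in σ..κ, g (x + (-T : ℝ) * I)‖ + ‖∫ x in σ..κ, g (x + T * I)‖ := by
  have hrect := integral_boundary_rect_eq_zero_of_differentiableOn g (σ + (-T : ℝ) * I) (κ + T * I)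
    (by simpa [uIcc_of_le hκ, uIcc_of_le (by linarith : -T ≤ T)] using hg)
  simp only [add_re, mul_re, ofReal_re, I_re, mul_zero, ofReal_im, I_im, mul_one, sub_self,
    add_zero, add_im, mul_im, zero_add] at hrect
  have hsides : I • (∫ y in (-T)..T, g (κ + y * I)) = I • (∫ y in (-T)..T, g (σ + y * I)) -
      (∫ x in σ..κ, g (x + (-T : ℝ) * I)) + ∫ x in σ..κ, g (x + T * I) := by
    linear_combination hrect
  calc ‖∫ y in (-T)..T, g (κ + y * I)‖ = ‖I • (∫ y in (-T)..T, g (κ + y * I))‖ := by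
        rw [norm_smul, norm_I, one_mul]
    _ ≤ ‖I • (∫ y in (-T)..T, g (σ + y * I))‖ + ‖∫ x in σ..κ, g (x + (-T : ℝ) * I)‖ +
          ‖∫ x in σ..κ, g (x + T * I)‖ := by
        rw [hsides]
        exact (norm_add_le _ _).trans (by gcongr; exact norm_sub_le _ _)
    _ = _ := by rw [norm_smul, norm_I, one_mul]

lemma norm_integral_interval_le_of_norm_le_inv_one_add_sq {f : ℝ → ℂ} (hT : 0 ≤ T) (hM : 0 ≤ M)
    (hf : ∀ y ∈ Icc (-T) T, ‖f y‖ ≤ M * (1 + y ^ 2)⁻¹) :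
    ‖∫ y in (-T)..T, f y‖ ≤ M * Real.pi := by
  have hintegrable : Integrable fun y : ℝ ↦ M * (1 + y ^ 2)⁻¹ :=
    integrable_inv_one_add_sq.const_mul _
  calc ‖∫ y in (-T)..T, f y‖ ≤ ∫ y in (-T)..T, M * (1 + y ^ 2)⁻¹ :=
        intervalIntegral.norm_integral_le_of_norm_le (by linarith)
          (ae_of_all _ fun y hy ↦ hf y ⟨hy.1.le, hy.2⟩) hintegrable.intervalIntegrable
    _ ≤ ∫ y : ℝ, M * (1 + y ^ 2)⁻¹ := by
        rw [intervalIntegral.integral_of_le (by linarith)]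
        exact setIntegral_le_integral hintegrable (ae_of_all _ fun y ↦ by positivity)
    _ = M * Real.pi := by rw [integral_const_mul, integral_univ_inv_one_add_sq]

end Rectangle

section KernelBounds

variable {H : ℂ → ℂ} {κ σ X T K K' : ℝ}

lemma norm_mul_perronKernel_le (hX : 0 < X) {s : ℂ} (hs : 1 / 2 ≤ s.re) (hK : ‖H s‖ ≤ K) :
    ‖H s * perronKernel X s‖ ≤ 4 * X ^ s.re * K * (1 + s.im ^ 2)⁻¹ := by
  rw [norm_mul]
  calc ‖H s‖ * ‖perronKernel X s‖ ≤ K * (4 * X ^ s.re * (1 + s.im ^ 2)⁻¹) := by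
        gcongr
        · exact (norm_nonneg _).trans hK
        · exact norm_perronKernel_le hX hs
    _ = 4 * X ^ s.re * K * (1 + s.im ^ 2)⁻¹ := by ring

lemma norm_mul_perronKernel_add_mul_I_le (hX : 0 < X) {x y : ℝ} (hx : 1 / 2 ≤ x)
    (hK : ‖H (x + y * I)‖ ≤ K) :
    ‖H (x + y * I) * perronKernel X (x + y * I)‖ ≤ 4 * X ^ x * K * (1 + y ^ 2)⁻¹ := by
  simpa using norm_mul_perronKernel_le hX (s := x + y * I) (by simpa using hx) hK

lemma norm_integral_horizontal_mul_perronKernel_le (hX : 1 ≤ X) (hκ : σ ≤ κ) (hκ2 : κ ≤ 2)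
    (hσ : 1 / 2 ≤ σ) {τ : ℝ} (hτ : τ ≠ 0) (hK : ∀ x ∈ Icc σ κ, ‖H (x + τ * I)‖ ≤ K) :
    ‖∫ x in σ..κ, H (x + τ * I) * perronKernel X (x + τ * I)‖ ≤ 6 * X ^ κ * K / τ ^ 2 := by
  have hK0 : 0 ≤ K := (norm_nonneg _).trans (hK σ ⟨le_rfl, hκ⟩)
  have hbound : ∀ x ∈ uIoc σ κ,
      ‖H (x + τ * I) * perronKernel X (x + τ * I)‖ ≤ 4 * X ^ κ * K / τ ^ 2 := fun x hx ↦ by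
    rw [uIoc_of_le hκ] at hx
    calc ‖H (x + τ * I) * perronKernel X (x + τ * I)‖ ≤ 4 * X ^ x * K * (1 + τ ^ 2)⁻¹ :=
          norm_mul_perronKernel_add_mul_I_le (by linarith) (by linarith [hx.1])
            (hK x ⟨hx.1.le, hx.2⟩)
      _ ≤ 4 * X ^ κ * K * (τ ^ 2)⁻¹ := by
          gcongr
          · exact hx.2
          · linarith
      _ = 4 * X ^ κ * K / τ ^ 2 := by rw [div_eq_mul_inv]
  calc ‖∫ x in σ..κ, H (x + τ * I) * perronKernel X (x + τ * I)‖
      ≤ 4 * X ^ κ * K / τ ^ 2 * |κ - σ| := intervalIntegral.norm_integral_le_of_norm_le_const hbound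
    _ ≤ 4 * X ^ κ * K / τ ^ 2 * (3 / 2) := by
        rw [abs_of_nonneg (by linarith)]
        gcongr
        linarith
    _ = 6 * X ^ κ * K / τ ^ 2 := by ring

theorem norm_integral_mul_perronKernel_le (hκ : σ ≤ κ) (hκ2 : κ ≤ 2) (hσ : 1 / 2 ≤ σ)
    (hT : 0 < T) (hmeas : AEStronglyMeasurable (fun y : ℝ ↦ H (κ + y * I)) volume)
    (hK' : ∀ y : ℝ, ‖H (κ + y * I)‖ ≤ K') (hd : DifferentiableOn ℂ H (Icc σ κ ×ℂ Icc (-T) T))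
    (hK : ∀ s ∈ Icc σ κ ×ℂ Icc (-T) T, ‖H s‖ ≤ K) (hX : 1 ≤ X) :
    ‖∫ y : ℝ, H (κ + y * I) * perronKernel X (κ + y * I)‖ ≤
      8 * X ^ κ * K' / T + 12 * X ^ κ * K / T ^ 2 + 4 * Real.pi * X ^ σ * K := by
  have hX0 : 0 < X := by linarith
  have hK_apply {x y : ℝ} (hx : x ∈ Icc σ κ) (hy : y ∈ Icc (-T) T) : ‖H (x + y * I)‖ ≤ K :=
    hK _ (add_mul_I_mem_reProdIm_Icc hx hy)
  have hT_mem : T ∈ Icc (-T) T := ⟨by linarith, le_rfl⟩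
  have hnegT_mem : -T ∈ Icc (-T) T := ⟨le_rfl, by linarith⟩
  have hσ_mem : σ ∈ Icc σ κ := ⟨le_rfl, hκ⟩
  have hK0 : 0 ≤ K := (norm_nonneg _).trans (hK_apply hσ_mem hT_mem)
  have hdiff : DifferentiableOn ℂ (fun s ↦ H s * perronKernel X s) (Icc σ κ ×ℂ Icc (-T) T) :=
    hd.mul fun s hs ↦ (differentiableAt_perronKernel hX0
      (by linarith [(mem_reProdIm.mp hs).1.1])).differentiableWithinAt
  have htails := norm_integral_le_of_norm_le_inv_one_add_sq hT
    (f := fun y : ℝ ↦ H (κ + y * I) * perronKernel X (κ + y * I))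
    (hmeas.mul (continuous_perronKernel_vertical hX0 (by linarith)).aestronglyMeasurable)
    fun y ↦ norm_mul_perronKernel_add_mul_I_le hX0 (by linarith) (hK' y)
  have hshift := norm_integral_vertical_le_of_differentiableOn hκ hT.le hdiff
  have hleft := norm_integral_interval_le_of_norm_le_inv_one_add_sq hT.le (by positivity)
    fun y hy ↦ norm_mul_perronKernel_add_mul_I_le hX0 hσ (hK_apply hσ_mem hy)
  have hbottom := norm_integral_horizontal_mul_perronKernel_le hX hκ hκ2 hσ (neg_ne_zero.mpr hT.ne')
    fun x hx ↦ hK_apply hx hnegT_mem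
  have htop := norm_integral_horizontal_mul_perronKernel_le hX hκ hκ2 hσ hT.ne'
    fun x hx ↦ hK_apply hx hT_mem
  rw [neg_sq] at hbottom
  calc _ ≤ _ := htails
    _ ≤ (4 * X ^ σ * K * Real.pi + 6 * X ^ κ * K / T ^ 2 + 6 * X ^ κ * K / T ^ 2) +
          2 * (4 * X ^ κ * K' / T) := by
        gcongr
        linarith
    _ = _ := by ring

end KernelBounds

end ContourShift

section ZeroFreeToHeight

/-- `L(s, χ)` has no zero `ρ` with `1 - η ≤ re ρ` and `|im ρ| ≤ T`. Phrased through
`entireLFunction` so that the value of `LFunction` at a pole plays no role. -/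
def ZeroFreeToHeight {q : ℕ} [NeZero q] (χ : DirichletCharacter ℂ q) (η T : ℝ) : Prop :=
  ∀ ρ, entireLFunction χ ρ = 0 → |ρ.im| ≤ T → ρ.re < 1 - η

lemma ZeroFreeToHeight.mono {q : ℕ} [NeZero q] {χ : DirichletCharacter ℂ q} {η T T' : ℝ}
    (h : ZeroFreeToHeight χ η T) (hT : T' ≤ T) : ZeroFreeToHeight χ η T' :=
  fun ρ hρ him ↦ h ρ hρ (him.trans hT)

variable {M B L : ℝ} {q : ℕ} [NeZero q]

lemma log_le_two_mul_sqrt (hL : 0 < L) : Real.log L ≤ 2 * √L := by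
  have h := Real.log_le_sub_one_of_pos (Real.sqrt_pos.mpr hL)
  rw [Real.log_sqrt hL.le] at h
  linarith

lemma logConductor_le_mul_sqrt (hM : 1 ≤ M) (hB : 0 ≤ B) (hL : 1 ≤ L) (hq : (q : ℝ) ≤ M * L ^ B)
    {t : ℝ} (ht : |t| ≤ Real.exp √L + 1) :
    logConductor q t ≤ (Real.log M + 2 * B + 5) * √L := by
  have hq0 : (0 : ℝ) < q := Nat.cast_pos.mpr (NeZero.pos q)
  have hprod : (q : ℝ) * (|t| + 3) ≤ (M * L ^ B) * (5 * Real.exp √L) := by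
    have := Real.one_le_exp (Real.sqrt_nonneg L)
    gcongr
    linarith
  have hlog : logConductor q t ≤ Real.log M + B * Real.log L + (Real.log 5 + √L) := by
    refine (Real.log_le_log (by positivity) hprod).trans_eq ?_
    rw [Real.log_mul (by positivity) (by positivity), Real.log_mul (by positivity) (by positivity),
      Real.log_mul (by positivity) (by positivity), Real.log_exp, Real.log_rpow (by linarith)]
  have hsqrt : 1 ≤ √L := Real.one_le_sqrt.mpr hL
  have hlogM : 0 ≤ Real.log M := Real.log_nonneg hM
  have hlogL : B * Real.log L ≤ B * (2 * √L) := by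
    gcongr
    exact log_le_two_mul_sqrt (by linarith)
  have hlog5 := Real.log_le_sub_one_of_pos (show (0 : ℝ) < 5 by norm_num)
  nlinarith

lemma rpow_div_sqrt_le_rpow (hM : 0 ≤ M) (hB : 0 < B) (hL : 0 ≤ L) (hq : (q : ℝ) ≤ M * L ^ B) :
    M ^ (-(1 / (2 * B))) / √L ≤ (q : ℝ) ^ (-(1 / (2 * B))) := by
  have hq0 : (0 : ℝ) < q := Nat.cast_pos.mpr (NeZero.pos q)
  calc M ^ (-(1 / (2 * B))) / √L = (M * L ^ B) ^ (-(1 / (2 * B))) := by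
        have hexp : B * -(1 / (2 * B)) = -(1 / 2) := by field_simp
        rw [Real.mul_rpow hM (by positivity), ← Real.rpow_mul hL, hexp, Real.rpow_neg hL,
          ← Real.sqrt_eq_rpow, div_eq_mul_inv]
    _ ≤ (q : ℝ) ^ (-(1 / (2 * B))) :=
        Real.rpow_le_rpow_of_nonpos hq0 hq (neg_nonpos.mpr (by positivity))

theorem exists_zeroFreeToHeight (hM : 1 ≤ M) (hB : 0 < B) : ∃ c : ℝ, 0 < c ∧ c ≤ 1 / 100 ∧
    ∀ L : ℝ, 1 ≤ L → ∀ (q : ℕ) [NeZero q], (q : ℝ) ≤ M * L ^ B →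
      ∀ χ : DirichletCharacter ℂ q, ZeroFreeToHeight χ (c / √L) (Real.exp √L + 1) := by
  obtain ⟨cₛ, hcₛ, hsiegel⟩ := siegel (ε := 1 / (2 * B)) (by positivity)
  have hlogM : 0 ≤ Real.log M := Real.log_nonneg hM
  set D := Real.log M + 2 * B + 5
  set c₁ : ℝ := 1 / (4 * 10 ^ 13) / D with hc₁
  set c₂ : ℝ := cₛ * M ^ (-(1 / (2 * B))) / 2 with hc₂
  have hc₂0 : 0 < c₂ := by positivity
  refine ⟨min (1 / 100) (min c₁ c₂), by positivity, min_le_left _ _, ?_⟩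
  intro L hL q _ hq χ ρ hρ him
  set c := min (1 / 100) (min c₁ c₂)
  have hcc₁ : c ≤ c₁ := (min_le_right _ _).trans (min_le_left _ _)
  have hcc₂ : c ≤ c₂ := (min_le_right _ _).trans (min_le_right _ _)
  have hsqrt : 0 < √L := Real.sqrt_pos.mpr (by linarith)
  by_contra! hre
  have hregion : c / √L ≤ 1 / (4 * 10 ^ 13) / logConductor q ρ.im := by
    have := one_le_logConductor (q := q) ρ.im
    calc c / √L ≤ c₁ / √L := by gcongr
      _ = 1 / (4 * 10 ^ 13) / (D * √L) := by rw [hc₁, div_div]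
      _ ≤ 1 / (4 * 10 ^ 13) / logConductor q ρ.im := by
          gcongr
          exact logConductor_le_mul_sqrt hM hB.le hL hq him
  obtain ⟨hχ2, hχ, hρim⟩ := zero_free_region hρ (by linarith)
  have hρ_real : (ρ.re : ℂ) = ρ := Complex.ext rfl (by rw [ofReal_im, hρim])
  rw [entireLFunction_of_ne_one hχ, ← hρ_real] at hρ
  have hexceptional : 2 * (c₂ / √L) ≤ 1 - ρ.re := by
    calc 2 * (c₂ / √L) = cₛ * (M ^ (-(1 / (2 * B))) / √L) := by rw [hc₂]; ring
      _ ≤ cₛ * (q : ℝ) ^ (-(1 / (2 * B))) := by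
          gcongr
          exact rpow_div_sqrt_le_rpow (by linarith) hB (by linarith) hq
      _ ≤ 1 - ρ.re := hsiegel q χ hχ2 hχ ρ.re hρ
  have hcc₂' : c / √L ≤ c₂ / √L := by gcongr
  have hpos : 0 < c₂ / √L := div_pos hc₂0 hsqrt
  linarith

end ZeroFreeToHeight

section VonMangoldtError

variable {q : ℕ} (χ : DirichletCharacter ℂ q)

/-- The coefficients `χ(n) Λ(n)` with their mean value removed. -/
noncomputable def vonMangoldtError (n : ℕ) : ℂ :=
  χ n * (ArithmeticFunction.vonMangoldt n : ℂ) - poleOrder χ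

lemma norm_char_mul_vonMangoldt_le (n : ℕ) :
    ‖χ n * (ArithmeticFunction.vonMangoldt n : ℂ)‖ ≤ ArithmeticFunction.vonMangoldt n := by
  rw [norm_mul, norm_real, Real.norm_of_nonneg ArithmeticFunction.vonMangoldt_nonneg]
  exact mul_le_of_le_one_left ArithmeticFunction.vonMangoldt_nonneg (χ.norm_le_one _)

lemma norm_vonMangoldtError_le (n : ℕ) : ‖vonMangoldtError χ n‖ ≤ 1 + Real.log n := by
  calc ‖vonMangoldtError χ n‖
      ≤ ‖χ n * (ArithmeticFunction.vonMangoldt n : ℂ)‖ + ‖(poleOrder χ : ℂ)‖ := norm_sub_le _ _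
    _ ≤ Real.log n + 1 := by
        rw [norm_real, Real.norm_of_nonneg (poleOrder_nonneg χ)]
        gcongr
        · exact (norm_char_mul_vonMangoldt_le χ n).trans ArithmeticFunction.vonMangoldt_le_log
        · exact poleOrder_le_one χ
    _ = 1 + Real.log n := add_comm _ _

lemma vonMangoldtError_eq_sub : vonMangoldtError χ =
    (fun n : ℕ ↦ χ n * (ArithmeticFunction.vonMangoldt n : ℂ)) - (poleOrder χ : ℂ) • 1 := by
  ext n
  simp [vonMangoldtError]

lemma LSeriesSummable_vonMangoldtError {s : ℂ} (hs : 1 < s.re) :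
    LSeriesSummable (vonMangoldtError χ) s := by
  rw [vonMangoldtError_eq_sub]
  exact (LSeriesSummable_twist_vonMangoldt χ hs).sub ((LSeriesSummable_one_iff.mpr hs).smul _)

lemma norm_LSeries_vonMangoldtError_le {s : ℂ} {θ : ℝ} (h0 : 0 < θ) (h1 : θ ≤ 1)
    (hs : s.re = 1 + 2 * θ) : ‖LSeries (vonMangoldtError χ) s‖ ≤ 3 / θ ^ 2 := by
  have hsum : Summable fun n : ℕ ↦ 1 / (n : ℝ) ^ (1 + θ) :=
    Real.summable_one_div_nat_rpow.mpr (by linarith)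
  have hterm (n : ℕ) :
      ‖LSeries.term (vonMangoldtError χ) s n‖ ≤ 1 / θ * (1 / (n : ℝ) ^ (1 + θ)) := by
    rw [LSeries.norm_term_eq]
    split_ifs with hn
    · positivity
    have hn0 : (0 : ℝ) < n := Nat.cast_pos.mpr (Nat.pos_of_ne_zero hn)
    have hcoeff : ‖vonMangoldtError χ n‖ ≤ (n : ℝ) ^ θ / θ := by
      have hlog := Real.log_le_sub_one_of_pos (Real.rpow_pos_of_pos hn0 θ)
      rw [Real.log_rpow hn0] at hlog
      rw [le_div_iff₀ h0]
      nlinarith [norm_vonMangoldtError_le χ n]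
    calc ‖vonMangoldtError χ n‖ / (n : ℝ) ^ s.re ≤ ((n : ℝ) ^ θ / θ) / (n : ℝ) ^ s.re := by gcongr
      _ = 1 / θ * (1 / (n : ℝ) ^ (1 + θ)) := by
          rw [hs, show 1 + 2 * θ = (1 + θ) + θ by ring, Real.rpow_add hn0 (1 + θ)]
          field_simp
  calc ‖LSeries (vonMangoldtError χ) s‖ ≤ 1 / θ * ∑' n : ℕ, 1 / (n : ℝ) ^ (1 + θ) :=
        tsum_of_norm_bounded (hsum.hasSum.mul_left _) hterm
    _ ≤ 1 / θ * (3 / (1 + θ - 1)) := by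
        gcongr
        exact tsum_one_div_rpow_le (by linarith) (by linarith)
    _ = 3 / θ ^ 2 := by
        rw [add_sub_cancel_left]
        field_simp

lemma norm_pole_mul_mellinTail_le {s : ℂ} {T : ℝ} (hT : 1 ≤ T) (h1 : 1 / 2 ≤ s.re)
    (h2 : s.re ≤ 2) (him : |s.im| ≤ T) :
    ‖(poleOrder χ : ℂ) * (1 + s * mellinTail floorError s)‖ ≤ 7 * T := by
  have htail : ‖mellinTail floorError s‖ ≤ 2 := by
    refine (norm_mellinTail_le norm_floorError_le_one_of_one_lt (by linarith)).trans ?_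
    rw [div_le_iff₀ (by linarith)]
    linarith
  have hs : ‖s‖ ≤ 2 + T := by
    have := norm_le_abs_re_add_abs_im s
    rw [abs_of_pos (show 0 < s.re by linarith)] at this
    linarith
  calc ‖(poleOrder χ : ℂ) * (1 + s * mellinTail floorError s)‖
      = poleOrder χ * ‖1 + s * mellinTail floorError s‖ := by
        rw [norm_mul, norm_real, Real.norm_of_nonneg (poleOrder_nonneg χ)]
    _ ≤ 1 * (1 + (2 + T) * 2) := by
        gcongr
        · exact poleOrder_le_one χ
        · refine (norm_add_le _ _).trans ?_
          rw [norm_one, norm_mul]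
          gcongr
    _ ≤ 7 * T := by linarith

variable [NeZero q]

/-- The meromorphic continuation to `0 < re s` of the Dirichlet series of `vonMangoldtError χ`,
holomorphic away from the zeros of `entireLFunction χ`. -/
noncomputable def vonMangoldtErrorContinuation (s : ℂ) : ℂ :=
  -logDeriv (entireLFunction χ) s - poleOrder χ * (1 + s * mellinTail floorError s)

lemma LSeries_vonMangoldtError {s : ℂ} (hs : 1 < s.re) :
    LSeries (vonMangoldtError χ) s = vonMangoldtErrorContinuation χ s := by
  have hs1 : s - 1 ≠ 0 := sub_ne_zero.mpr (by rintro rfl; simp at hs)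
  have hone := LSeriesSummable_one_iff.mpr hs
  have hsum : LSeriesSummable (fun n : ℕ ↦ χ n * (ArithmeticFunction.vonMangoldt n : ℂ)) s :=
    LSeriesSummable_twist_vonMangoldt χ hs
  rw [vonMangoldtError_eq_sub, LSeries_sub hsum (hone.smul _), LSeries_smul,
    LSeries_one_eq_riemannZeta hs, riemannZeta_eq_add_mul_mellinTail hs]
  change vonMangoldtLSeries χ s - _ = _
  rw [vonMangoldtLSeries_eq χ hs, vonMangoldtErrorContinuation]
  field_simp
  ring

lemma differentiableAt_vonMangoldtErrorContinuation {s : ℂ} (hs : 0 < s.re)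
    (h : entireLFunction χ s ≠ 0) : DifferentiableAt ℂ (vonMangoldtErrorContinuation χ) s := by
  have hG := differentiable_entireLFunction χ
  have hderiv : DifferentiableAt ℂ (deriv (entireLFunction χ)) s :=
    (hG.differentiableOn.deriv isOpen_univ).differentiableAt univ_mem
  have hlogDeriv : DifferentiableAt ℂ (logDeriv (entireLFunction χ)) s := hderiv.div (hG s) h
  have htail :=
    differentiableAt_mellinTail measurable_floorError norm_floorError_le_one_of_one_lt hs
  unfold vonMangoldtErrorContinuation
  fun_prop

lemma continuous_vonMangoldtErrorContinuation_vertical {κ : ℝ} (hκ : 1 ≤ κ) :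
    Continuous fun y : ℝ ↦ vonMangoldtErrorContinuation χ (κ + y * I) := by
  refine continuous_iff_continuousAt.mpr fun y ↦ ?_
  have hre : (κ + y * I : ℂ).re = κ := by simp
  have hcont : ContinuousAt (vonMangoldtErrorContinuation χ) (κ + y * I) :=
    (differentiableAt_vonMangoldtErrorContinuation χ (by linarith)
      (entireLFunction_ne_zero χ (by linarith))).continuousAt
  exact ContinuousAt.comp (f := fun y : ℝ ↦ (κ + y * I : ℂ)) hcont (by fun_prop)

variable {χ} {η T : ℝ}

lemma re_im_bounds_of_mem_ball (hη : η ≤ 1 / 8) {t : ℝ} (ht : |t| ≤ T) {z : ℂ}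
    (hz : z ∈ ball (⟨1 + η, t⟩ : ℂ) (2 * η)) : 1 - η < z.re ∧ z.re < 2 ∧ |z.im| ≤ T + 1 := by
  rw [mem_ball, dist_eq_norm] at hz
  have hre := (abs_re_le_norm _).trans_lt hz
  have him := (abs_im_le_norm _).trans_lt hz
  simp only [sub_re, sub_im, abs_lt] at hre him
  rw [abs_le] at ht ⊢
  refine ⟨?_, ?_, ?_, ?_⟩ <;> linarith

lemma ZeroFreeToHeight.norm_logDeriv_entireLFunction_le (hz : ZeroFreeToHeight χ η (T + 1))
    (h0 : 0 < η) (h1 : η ≤ 1 / 8) {s : ℂ} (hs1 : 1 - η / 2 ≤ s.re) (hs2 : s.re ≤ 1 + η)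
    (him : |s.im| ≤ T) :
    ‖logDeriv (entireLFunction χ) s‖ ≤ 63 * Real.log (12 * q * (T + 4) ^ 2 / η ^ 2) / η := by
  set c : ℂ := ⟨1 + η, s.im⟩ with hc
  have hq : (0 : ℝ) < q := Nat.cast_pos.mpr (NeZero.pos q)
  have hT : 0 ≤ T := (abs_nonneg _).trans him
  have hball : ∀ z ∈ ball c (2 * η), 1 - η < z.re ∧ z.re < 2 ∧ |z.im| ≤ T + 1 :=
    fun z ↦ re_im_bounds_of_mem_ball h1 him
  have hbound : ∀ z ∈ ball c (2 * η), ‖entireLFunction χ z‖ ≤ 4 * q * (T + 4) ^ 2 := fun z hz ↦ by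
    obtain ⟨hre, hre2, him'⟩ := hball z hz
    refine (norm_entireLFunction_le χ (by linarith)).trans ?_
    have hnorm := norm_le_abs_re_add_abs_im z
    rw [abs_of_pos (show 0 < z.re by linarith)] at hnorm
    gcongr ?_ * ?_ ^ 2
    linarith
  have hne : ∀ z ∈ ball c (2 * η), entireLFunction χ z ≠ 0 := fun z hzc hzero ↦ by
    obtain ⟨hre, _, him'⟩ := hball z hzc
    linarith [hz z hzero him']
  have hsc : ‖s - c‖ ≤ 3 / 4 * (2 * η) := by
    have : s - c = ((s.re - (1 + η) : ℝ) : ℂ) := by apply Complex.ext <;> simp [hc]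
    rw [this, norm_real, Real.norm_eq_abs, abs_le]
    constructor <;> linarith
  have hcentre : η ^ 2 / 3 ≤ ‖entireLFunction χ c‖ := by
    have := le_norm_entireLFunction χ (s := c) (by simp [hc, h0]) (by simp [hc]; linarith)
    rwa [show c.re = 1 + η from rfl, add_sub_cancel_left] at this
  calc ‖logDeriv (entireLFunction χ) s‖
      ≤ 126 * Real.log (4 * q * (T + 4) ^ 2 / ‖entireLFunction χ c‖) / (2 * η) :=
        norm_logDeriv_le_of_ne_zero_on_ball (by positivity)
          (differentiable_entireLFunction χ).differentiableOn hbound hne hsc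
    _ ≤ 126 * Real.log (4 * q * (T + 4) ^ 2 / (η ^ 2 / 3)) / (2 * η) := by
        have : 0 < ‖entireLFunction χ c‖ := lt_of_lt_of_le (by positivity) hcentre
        gcongr
    _ = 63 * Real.log (12 * q * (T + 4) ^ 2 / η ^ 2) / η := by
        rw [show 4 * q * (T + 4) ^ 2 / (η ^ 2 / 3) = 12 * q * (T + 4) ^ 2 / η ^ 2 by
          field_simp; ring]
        field_simp
        ring

lemma ZeroFreeToHeight.norm_vonMangoldtErrorContinuation_le (hz : ZeroFreeToHeight χ η (T + 1))
    (h0 : 0 < η) (h1 : η ≤ 1 / 8) (hT : 1 ≤ T) {s : ℂ} (hs1 : 1 - η / 2 ≤ s.re)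
    (hs2 : s.re ≤ 1 + η) (him : |s.im| ≤ T) :
    ‖vonMangoldtErrorContinuation χ s‖ ≤
      63 * Real.log (12 * q * (T + 4) ^ 2 / η ^ 2) / η + 7 * T := by
  refine (norm_sub_le _ _).trans ?_
  rw [norm_neg]
  exact add_le_add (hz.norm_logDeriv_entireLFunction_le h0 h1 hs1 hs2 him)
    (norm_pole_mul_mellinTail_le χ hT (by linarith) (by linarith) him)

lemma ZeroFreeToHeight.differentiableOn_vonMangoldtErrorContinuation
    (hz : ZeroFreeToHeight χ η T) {σ κ : ℝ} (hσ0 : 0 < σ) (hσ : 1 - η ≤ σ) :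
    DifferentiableOn ℂ (vonMangoldtErrorContinuation χ) (Icc σ κ ×ℂ Icc (-T) T) := by
  intro s hs
  obtain ⟨⟨hre, _⟩, him⟩ := mem_reProdIm.mp hs
  refine (differentiableAt_vonMangoldtErrorContinuation χ (hσ0.trans_le hre)
    fun hzero ↦ ?_).differentiableWithinAt
  linarith [hz s hzero (abs_le.mpr him)]

-- The contour runs along `re s = 1 + η / 16` and is shifted to `re s = 1 - η / 2`.
theorem ZeroFreeToHeight.norm_cesaroSum_vonMangoldtError_le {X : ℝ}
    (hz : ZeroFreeToHeight χ η (T + 1)) (h0 : 0 < η) (h1 : η ≤ 1 / 8) (hT : 1 ≤ T) (hX : 1 ≤ X)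
    {K : ℝ} (hK : 63 * Real.log (12 * q * (T + 4) ^ 2 / η ^ 2) / η + 7 * T ≤ K) :
    ‖∑ n ∈ Finset.Icc 1 ⌊X⌋₊, vonMangoldtError χ n * (1 - n / X)‖ ≤
      8 * X ^ (1 + η / 16) * (3 / (η / 32) ^ 2) / T + 12 * X ^ (1 + η / 16) * K / T ^ 2 +
        4 * Real.pi * X ^ (1 - η / 2) * K := by
  set κ : ℝ := 1 + η / 16 with hκ
  have hre (y : ℝ) : (κ + y * I : ℂ).re = κ := by simp
  have hseries (y : ℝ) : LSeries (vonMangoldtError χ) (κ + y * I) =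
      vonMangoldtErrorContinuation χ (κ + y * I) :=
    LSeries_vonMangoldtError χ (by rw [hre]; linarith)
  have hline (y : ℝ) : ‖vonMangoldtErrorContinuation χ (κ + y * I)‖ ≤ 3 / (η / 32) ^ 2 := by
    rw [← hseries]
    exact norm_LSeries_vonMangoldtError_le χ (by positivity) (by linarith) (by rw [hre]; ring)
  have hrect : ∀ s ∈ Icc (1 - η / 2) κ ×ℂ Icc (-T) T, ‖vonMangoldtErrorContinuation χ s‖ ≤ K :=
    fun s hs ↦ by
      obtain ⟨⟨hre1, hre2⟩, him⟩ := mem_reProdIm.mp hs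
      exact (hz.norm_vonMangoldtErrorContinuation_le h0 h1 hT hre1 (by linarith)
        (abs_le.mpr him)).trans hK
  have hdiff := (hz.mono (by linarith : T ≤ T + 1)).differentiableOn_vonMangoldtErrorContinuation
    (σ := 1 - η / 2) (κ := κ) (by linarith) (by linarith)
  have hcont := continuous_vonMangoldtErrorContinuation_vertical χ (κ := κ) (by linarith)
  have hcontour := norm_integral_mul_perronKernel_le (by linarith) (by linarith) (by linarith)
    (by linarith) hcont.aestronglyMeasurable hline hdiff hrect hX
  have hpi : 1 / (2 * Real.pi) ≤ 1 := by
    rw [div_le_one (by positivity)]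
    linarith [Real.pi_gt_three]
  rw [perron_formula (κ := κ) (by linarith) (by linarith)
    (LSeriesSummable_vonMangoldtError χ (by rw [ofReal_re]; linarith)), norm_mul, norm_real,
    Real.norm_of_nonneg (by positivity)]
  simp only [hseries]
  exact (mul_le_of_le_one_left (norm_nonneg _) hpi).trans hcontour

end VonMangoldtError

section CesaroSum

variable {M B c u : ℝ}

lemma log_zeroFree_parameters_le (hM : 1 ≤ M) (hB : 0 ≤ B) (hc : 0 < c) (hc1 : c ≤ 1) (hu : 1 ≤ u)
    {N : ℝ} (hN0 : 0 < N) (hN : N ≤ M * (u ^ 2) ^ B) :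
    Real.log (12 * N * (Real.exp (c * u / 8) + 4) ^ 2 / (c / u) ^ 2) ≤
      (Real.log M + 2 * B + 38 - 2 * Real.log c) * u := by
  have hu0 : 0 < u := by linarith
  set T := Real.exp (c * u / 8) with hT
  have hT1 : 1 ≤ T := Real.one_le_exp (by positivity)
  have hle : 12 * N * (T + 4) ^ 2 / (c / u) ^ 2 ≤
      12 * (M * (u ^ 2) ^ B) * (5 * T) ^ 2 / (c / u) ^ 2 := by
    gcongr
    linarith
  have hexpand : Real.log (12 * (M * (u ^ 2) ^ B) * (5 * T) ^ 2 / (c / u) ^ 2) =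
      Real.log 12 + Real.log M + 2 * B * Real.log u + 2 * Real.log 5 + c * u / 4
        - 2 * Real.log c + 2 * Real.log u := by
    rw [Real.log_div (by positivity) (by positivity), Real.log_mul (by positivity) (by positivity),
      Real.log_mul (by positivity) (by positivity), Real.log_mul (by positivity) (by positivity),
      Real.log_rpow (by positivity), Real.log_pow, Real.log_pow, Real.log_pow,
      Real.log_mul (by positivity) (by positivity), Real.log_div (by positivity) (by positivity),
      hT, Real.log_exp]
    push_cast
    ring
  have hlogu := Real.log_le_sub_one_of_pos hu0
  have hlog12 := Real.log_le_sub_one_of_pos (show (0 : ℝ) < 12 by norm_num)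
  have hlog5 := Real.log_le_sub_one_of_pos (show (0 : ℝ) < 5 by norm_num)
  have hlogM := Real.log_nonneg hM
  have hlogc : Real.log c ≤ 0 := Real.log_nonpos hc.le hc1
  have hBlogu : 2 * B * Real.log u ≤ 2 * B * u := by gcongr; linarith
  have hlog := (Real.log_le_log (by positivity) hle).trans_eq hexpand
  nlinarith

lemma sq_mul_exp_neg_le (hc : 0 < c) (hu : 0 ≤ u) :
    u ^ 2 * Real.exp (-(c * u)) ≤ (4 / c) ^ 2 * Real.exp (-(c / 2 * u)) := by
  have hsq : u ^ 2 ≤ (4 / c) ^ 2 * Real.exp (c / 2 * u) := by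
    calc u ^ 2 = (4 / c) ^ 2 * (c * u / 4) ^ 2 := by field_simp
      _ ≤ (4 / c) ^ 2 * Real.exp (c * u / 4) ^ 2 := by
          gcongr
          linarith [Real.add_one_le_exp (c * u / 4)]
      _ = (4 / c) ^ 2 * Real.exp (c / 2 * u) := by
          rw [← Real.exp_nat_mul]
          ring_nf
  calc u ^ 2 * Real.exp (-(c * u))
      ≤ (4 / c) ^ 2 * Real.exp (c / 2 * u) * Real.exp (-(c * u)) := by gcongr
    _ = (4 / c) ^ 2 * Real.exp (-(c / 2 * u)) := by
        rw [mul_assoc, ← Real.exp_add]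
        ring_nf

lemma exp_sq_rpow_one_add (hu : u ≠ 0) : Real.exp (u ^ 2) ^ (1 + c / u / 16) =
    Real.exp (u ^ 2) * Real.exp (-(c / 16 * u)) * Real.exp (c * u / 8) := by
  rw [← Real.exp_mul, ← Real.exp_add, ← Real.exp_add]
  congr 1
  field_simp
  ring

lemma exp_sq_rpow_one_sub_mul_le (hu : 0 < u) (hc : 0 ≤ c) :
    Real.exp (u ^ 2) ^ (1 - c / u / 2) * Real.exp (c * u / 8) ≤
      Real.exp (u ^ 2) * Real.exp (-(c / 16 * u)) := by
  rw [← Real.exp_mul, ← Real.exp_add, ← Real.exp_add]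
  refine Real.exp_le_exp.mpr ?_
  have hexponent : u ^ 2 * (1 - c / u / 2) = u ^ 2 - c * u / 2 := by field_simp
  have : 0 ≤ c * u := by positivity
  linarith

-- The bound of `ZeroFreeToHeight.norm_cesaroSum_vonMangoldtError_le` at `X = exp (u ^ 2)`,
-- `η = c / u`, `T = exp (c * u / 8)` and `K = A * u ^ 2 * T`.
lemma contour_bound_le {A : ℝ} (hA : 0 ≤ A) (hc : 0 < c) (hu : 0 < u) :
    8 * Real.exp (u ^ 2) ^ (1 + c / u / 16) * (3 / (c / u / 32) ^ 2) / Real.exp (c * u / 8) +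
      12 * Real.exp (u ^ 2) ^ (1 + c / u / 16) * (A * u ^ 2 * Real.exp (c * u / 8)) /
        Real.exp (c * u / 8) ^ 2 +
      4 * Real.pi * Real.exp (u ^ 2) ^ (1 - c / u / 2) * (A * u ^ 2 * Real.exp (c * u / 8)) ≤
    (24 * 1024 / c ^ 2 + 12 * A + 4 * Real.pi * A) * Real.exp (u ^ 2) *
      (u ^ 2 * Real.exp (-(c / 16 * u))) := by
  have hleft := exp_sq_rpow_one_sub_mul_le hu hc.le
  rw [exp_sq_rpow_one_add hu.ne']
  set T := Real.exp (c * u / 8)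
  set E := Real.exp (-(c / 16 * u))
  set X := Real.exp (u ^ 2)
  have hT : 0 < T := Real.exp_pos _
  have htails : 8 * (X * E * T) * (3 / (c / u / 32) ^ 2) / T =
      24 * 1024 / c ^ 2 * X * (u ^ 2 * E) := by
    field_simp
    ring
  have hhorizontal : 12 * (X * E * T) * (A * u ^ 2 * T) / T ^ 2 = 12 * A * X * (u ^ 2 * E) := by
    field_simp
  have hvertical : 4 * Real.pi * X ^ (1 - c / u / 2) * (A * u ^ 2 * T) ≤
      4 * Real.pi * A * X * (u ^ 2 * E) := by
    calc _ = 4 * Real.pi * A * u ^ 2 * (X ^ (1 - c / u / 2) * T) := by ring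
      _ ≤ 4 * Real.pi * A * u ^ 2 * (X * E) := by gcongr
      _ = _ := by ring
  rw [htails, hhorizontal]
  linarith

lemma norm_cesaroSum_vonMangoldtError_le_of_zeroFree (hM : 1 ≤ M) (hB : 0 ≤ B) (hc : 0 < c)
    (hc1 : c ≤ 1 / 100) (hu : 1 ≤ u) {q : ℕ} [NeZero q] (hq : (q : ℝ) ≤ M * (u ^ 2) ^ B)
    {χ : DirichletCharacter ℂ q} (hz : ZeroFreeToHeight χ (c / u) (Real.exp u + 1)) {A : ℝ}
    (hA : 63 * (Real.log M + 2 * B + 38 - 2 * Real.log c) / c + 7 ≤ A) :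
    ‖∑ n ∈ Finset.Icc 1 ⌊Real.exp (u ^ 2)⌋₊, vonMangoldtError χ n * (1 - n / Real.exp (u ^ 2))‖ ≤
      (24 * 1024 / c ^ 2 + 12 * A + 4 * Real.pi * A) * Real.exp (u ^ 2) *
        (u ^ 2 * Real.exp (-(c / 16 * u))) := by
  have hu0 : 0 < u := by linarith
  have hq0 : (0 : ℝ) < q := Nat.cast_pos.mpr (NeZero.pos q)
  set D := Real.log M + 2 * B + 38 - 2 * Real.log c
  set T := Real.exp (c * u / 8)
  have hD : 0 ≤ D := by
    have hlogM := Real.log_nonneg hM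
    have hlogc : Real.log c ≤ 0 := Real.log_nonpos hc.le (by linarith)
    linarith
  have hη : c / u ≤ c := div_le_self hc.le hu
  have hT1 : 1 ≤ T := Real.one_le_exp (by positivity)
  have hTu : T ≤ Real.exp u := Real.exp_le_exp.mpr (by nlinarith)
  have hK : 63 * Real.log (12 * q * (T + 4) ^ 2 / (c / u) ^ 2) / (c / u) + 7 * T ≤
      A * u ^ 2 * T := by
    calc _ ≤ 63 * (D * u) / (c / u) + 7 * T := by
          gcongr
          exact log_zeroFree_parameters_le hM hB hc (by linarith) hu hq0 hq
      _ = 63 * D / c * u ^ 2 * 1 + 7 * 1 * T := by field_simp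
      _ ≤ 63 * D / c * u ^ 2 * T + 7 * u ^ 2 * T := by
          gcongr
          exact one_le_pow₀ hu
      _ = (63 * D / c + 7) * u ^ 2 * T := by ring
      _ ≤ A * u ^ 2 * T := by gcongr
  have hA0 : 0 ≤ A := le_trans (by positivity) hA
  have hzT : ZeroFreeToHeight χ (c / u) (T + 1) := hz.mono (by linarith)
  exact (hzT.norm_cesaroSum_vonMangoldtError_le (by positivity) (by linarith) hT1
    (Real.one_le_exp (by positivity)) hK).trans (contour_bound_le hA0 hc hu0)

theorem exists_norm_cesaroSum_vonMangoldtError_le (hM : 1 ≤ M) (hB : 0 < B) :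
    ∃ c : ℝ, 0 < c ∧ c ≤ 1 ∧ ∃ C : ℝ, 0 < C ∧ ∀ X : ℝ, 0 < X → 1 ≤ Real.log X →
      ∀ (q : ℕ) [NeZero q], (q : ℝ) ≤ M * Real.log X ^ B → ∀ χ : DirichletCharacter ℂ q,
        ‖∑ n ∈ Finset.Icc 1 ⌊X⌋₊, vonMangoldtError χ n * (1 - n / X)‖ ≤
          C * X * Real.exp (-(c * √(Real.log X))) := by
  obtain ⟨c, hc, hc1, hz⟩ := exists_zeroFreeToHeight hM hB
  have hlogM := Real.log_nonneg hM
  have hlogc : Real.log c ≤ 0 := Real.log_nonpos hc.le (by linarith)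
  set A := 63 * (Real.log M + 2 * B + 38 - 2 * Real.log c) / c + 7 with hA
  have hA0 : 0 < A := by
    have : 0 < Real.log M + 2 * B + 38 - 2 * Real.log c := by linarith
    positivity
  set C₁ := 24 * 1024 / c ^ 2 + 12 * A + 4 * Real.pi * A
  refine ⟨c / 16 / 2, by positivity, by linarith, C₁ * (4 / (c / 16)) ^ 2, by positivity, ?_⟩
  intro X hX hlogX q _ hq χ
  set u := √(Real.log X)
  have hu : 1 ≤ u := Real.one_le_sqrt.mpr hlogX
  have hlog : Real.log X = u ^ 2 := (Real.sq_sqrt (by linarith)).symm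
  have hXu : Real.exp (u ^ 2) = X := by rw [← hlog, Real.exp_log hX]
  have hsum := norm_cesaroSum_vonMangoldtError_le_of_zeroFree hM hB.le hc hc1 hu (by rwa [← hlog])
    (hz _ hlogX q hq χ) hA.ge
  rw [hXu] at hsum
  calc _ ≤ C₁ * X * (u ^ 2 * Real.exp (-(c / 16 * u))) := hsum
    _ ≤ C₁ * X * ((4 / (c / 16)) ^ 2 * Real.exp (-(c / 16 / 2 * u))) := by
        gcongr C₁ * X * ?_
        exact sq_mul_exp_neg_le (by positivity) (by positivity)
    _ = C₁ * (4 / (c / 16)) ^ 2 * X * Real.exp (-(c / 16 / 2 * u)) := by ring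

end CesaroSum

section RieszSum

variable {f : ℕ → ℝ} {X h : ℝ}

/-- The Riesz sum `∑ f(n) (X - n)` over `n ≤ X`, i.e. the integral up to `X` of the summatory
function of `f`. -/
noncomputable def rieszSum (f : ℕ → ℝ) (X : ℝ) : ℝ := ∑ n ∈ Finset.Icc 1 ⌊X⌋₊, f n * (X - n)

lemma rieszSum_eq_mul_sum (hX : X ≠ 0) :
    rieszSum f X = X * ∑ n ∈ Finset.Icc 1 ⌊X⌋₊, f n * (1 - n / X) := by
  rw [rieszSum, Finset.mul_sum]
  refine Finset.sum_congr rfl fun n _ ↦ ?_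
  field_simp

-- Cutting at `⌊X⌋₊` keeps exactly the nonnegative terms.
lemma sum_mul_sub_le_rieszSum (hf : ∀ n, 0 ≤ f n) (hX : 0 ≤ X) (k : ℕ) :
    ∑ n ∈ Finset.Icc 1 k, f n * (X - n) ≤ rieszSum f X := by
  rcases le_total k ⌊X⌋₊ with hk | hk
  · refine Finset.sum_le_sum_of_subset_of_nonneg (Finset.Icc_subset_Icc_right hk) fun n hn _ ↦ ?_
    have hnX : (n : ℝ) ≤ X := (Nat.le_floor_iff hX).mp (Finset.mem_Icc.mp hn).2
    exact mul_nonneg (hf n) (sub_nonneg.mpr hnX)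
  · refine Finset.sum_le_sum_of_subset_of_nonpos' (Finset.Icc_subset_Icc_right hk) fun n hn hnX ↦ ?_
    have hXn : X < n := by
      by_contra! hle
      exact hnX (Finset.mem_Icc.mpr ⟨(Finset.mem_Icc.mp hn).1, Nat.le_floor hle⟩)
    exact mul_nonpos_of_nonneg_of_nonpos (hf n) (by linarith)

lemma mul_sum_le_rieszSum_sub (hf : ∀ n, 0 ≤ f n) (hX : 0 ≤ X + h) :
    h * ∑ n ∈ Finset.Icc 1 ⌊X⌋₊, f n ≤ rieszSum f (X + h) - rieszSum f X := by
  have hsplit : h * ∑ n ∈ Finset.Icc 1 ⌊X⌋₊, f n =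
      ∑ n ∈ Finset.Icc 1 ⌊X⌋₊, f n * (X + h - n) - rieszSum f X := by
    rw [rieszSum, Finset.mul_sum, ← Finset.sum_sub_distrib]
    exact Finset.sum_congr rfl fun n _ ↦ by ring
  linarith [sum_mul_sub_le_rieszSum hf hX ⌊X⌋₊]

theorem abs_sum_sub_le_of_rieszSum {A ε : ℝ} (hf : ∀ n, 0 ≤ f n) (h0 : 0 < h) (hX : h ≤ X)
    (hW : ∀ Y ∈ Icc (X - h) (X + h), |rieszSum f Y - A * Y ^ 2 / 2| ≤ ε) :
    |∑ n ∈ Finset.Icc 1 ⌊X⌋₊, f n - A * X| ≤ A * h / 2 + 2 * ε / h := by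
  set P := ∑ n ∈ Finset.Icc 1 ⌊X⌋₊, f n
  have hupper : h * P ≤ rieszSum f (X + h) - rieszSum f X :=
    mul_sum_le_rieszSum_sub hf (by linarith)
  have hlower : -h * P ≤ rieszSum f (X + -h) - rieszSum f X :=
    mul_sum_le_rieszSum_sub hf (by linarith)
  rw [← sub_eq_add_neg] at hlower
  have hmid := abs_le.mp (hW X ⟨by linarith, by linarith⟩)
  have hright := abs_le.mp (hW (X + h) ⟨by linarith, le_rfl⟩)
  have hleft := abs_le.mp (hW (X - h) ⟨le_rfl, by linarith⟩)
  rw [show A * h / 2 + 2 * ε / h = (A * h ^ 2 / 2 + 2 * ε) / h by field_simp, le_div_iff₀ h0,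
    ← abs_of_pos h0, ← abs_mul, abs_of_pos h0, abs_le]
  constructor <;> nlinarith

end RieszSum

section ResidueClass

open ArithmeticFunction.vonMangoldt (residueClass residueClass_apply)

variable {q : ℕ}

lemma sum_one_sub_div (X : ℝ) (k : ℕ) :
    ∑ n ∈ Finset.Icc 1 k, (1 - (n : ℝ) / X) = k - k * (k + 1) / (2 * X) := by
  induction k with
  | zero => simp
  | succ k ih =>
    rw [Finset.sum_Icc_succ_top (by omega), ih]
    push_cast
    ring

lemma abs_sum_one_sub_div_sub_le {X : ℝ} (hX : 0 < X) :
    |∑ n ∈ Finset.Icc 1 ⌊X⌋₊, (1 - (n : ℝ) / X) - X / 2| ≤ 1 := by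
  rw [sum_one_sub_div]
  set k : ℝ := (⌊X⌋₊ : ℝ)
  have hle : k ≤ X := Nat.floor_le hX.le
  have hlt : X < k + 1 := Nat.lt_floor_add_one X
  have hk : 0 ≤ k := Nat.cast_nonneg _
  have hnum : 0 ≤ k + (X - k) ^ 2 := add_nonneg hk (sq_nonneg _)
  have hsub : k - k * (k + 1) / (2 * X) - X / 2 = -(k + (X - k) ^ 2) / (2 * X) := by
    field_simp
    ring
  rw [hsub, abs_div, abs_neg, abs_of_nonneg hnum, abs_of_pos (by positivity),
    div_le_one (by positivity)]
  nlinarith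

variable {a : ZMod q}

lemma sum_char_inv_mul_poleOrder (ha : IsUnit a) :
    ∑ χ : DirichletCharacter ℂ q, χ a⁻¹ * (poleOrder χ : ℂ) = 1 := by
  have hunit : IsUnit (a⁻¹ : ZMod q) := by
    rw [← ha.unit_spec, ZMod.inv_coe_unit]
    exact Units.isUnit _
  rw [Finset.sum_eq_single 1 (fun χ _ hχ ↦ by rw [poleOrder_of_ne_one hχ, ofReal_zero, mul_zero])
    (fun h ↦ absurd (Finset.mem_univ _) h), MulChar.one_apply hunit, poleOrder_one, ofReal_one,
    one_mul]

variable [NeZero q]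

lemma one_le_totient_of_neZero : (1 : ℝ) ≤ q.totient :=
  Nat.one_le_cast.mpr (Nat.totient_pos.mpr (NeZero.pos q))

lemma sum_char_inv_mul_vonMangoldtError (ha : IsUnit a) (n : ℕ) :
    ∑ χ : DirichletCharacter ℂ q, χ a⁻¹ * vonMangoldtError χ n =
      q.totient * (residueClass a n : ℂ) - 1 := by
  have htotient : (q.totient : ℂ) ≠ 0 :=
    Nat.cast_ne_zero.mpr (Nat.totient_pos.mpr (NeZero.pos q)).ne'
  rw [residueClass_apply ha, mul_inv_cancel_left₀ htotient, ← sum_char_inv_mul_poleOrder ha,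
    ← Finset.sum_sub_distrib]
  refine Finset.sum_congr rfl fun χ _ ↦ ?_
  rw [vonMangoldtError]
  ring

lemma totient_mul_cesaroSum_sub (ha : IsUnit a) (X : ℝ) (k : ℕ) :
    (((q.totient : ℝ) * ∑ n ∈ Finset.Icc 1 k, residueClass a n * (1 - n / X) -
      ∑ n ∈ Finset.Icc 1 k, (1 - (n : ℝ) / X) : ℝ) : ℂ) =
    ∑ χ : DirichletCharacter ℂ q,
      χ a⁻¹ * ∑ n ∈ Finset.Icc 1 k, vonMangoldtError χ n * (1 - n / X) := by
  simp only [Finset.mul_sum]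
  rw [Finset.sum_comm, ← Finset.sum_sub_distrib, ofReal_sum]
  refine Finset.sum_congr rfl fun n _ ↦ ?_
  calc _ = (q.totient * (residueClass a n : ℂ) - 1) * (1 - n / X) := by
        push_cast
        ring
    _ = _ := by
        rw [← sum_char_inv_mul_vonMangoldtError ha, Finset.sum_mul]
        exact Finset.sum_congr rfl fun χ _ ↦ by ring

lemma abs_totient_mul_cesaroSum_sub_le (ha : IsUnit a) {X D : ℝ} (k : ℕ)
    (hD : ∀ χ : DirichletCharacter ℂ q,
      ‖∑ n ∈ Finset.Icc 1 k, vonMangoldtError χ n * (1 - n / X)‖ ≤ D) :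
    |(q.totient : ℝ) * ∑ n ∈ Finset.Icc 1 k, residueClass a n * (1 - n / X) -
      ∑ n ∈ Finset.Icc 1 k, (1 - (n : ℝ) / X)| ≤ q.totient * D := by
  have hcard : (Finset.univ : Finset (DirichletCharacter ℂ q)).card = q.totient := by
    rw [Finset.card_univ, ← Nat.card_eq_fintype_card]
    exact card_eq_totient_of_hasEnoughRootsOfUnity ℂ q
  rw [← Real.norm_eq_abs, ← norm_real, totient_mul_cesaroSum_sub ha, ← hcard, ← nsmul_eq_mul]
  refine (norm_sum_le _ _).trans (Finset.sum_le_card_nsmul _ _ _ fun χ _ ↦ ?_)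
  rw [norm_mul]
  exact (mul_le_of_le_one_left (norm_nonneg _) (χ.norm_le_one _)).trans (hD χ)

lemma one_le_mul_exp_neg_sqrt_log {X c : ℝ} (hX : 0 < X) (hlog : 1 ≤ Real.log X) (hc : c ≤ 1) :
    1 ≤ X * Real.exp (-(c * √(Real.log X))) := by
  have hsqrt : 1 ≤ √(Real.log X) := Real.one_le_sqrt.mpr hlog
  have hsq : √(Real.log X) ^ 2 = Real.log X := Real.sq_sqrt (by linarith)
  nth_rw 1 [← Real.exp_log hX]
  rw [← Real.exp_add]
  exact Real.one_le_exp (by nlinarith)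

theorem exists_abs_cesaroSum_residueClass_sub_le {M B : ℝ} (hM : 1 ≤ M) (hB : 0 < B) :
    ∃ c : ℝ, 0 < c ∧ c ≤ 1 ∧ ∃ C : ℝ, 0 < C ∧ ∀ X : ℝ, 0 < X → 1 ≤ Real.log X →
      ∀ (q : ℕ) [NeZero q], (q : ℝ) ≤ M * Real.log X ^ B → ∀ a : ZMod q, IsUnit a →
        |∑ n ∈ Finset.Icc 1 ⌊X⌋₊, residueClass a n * (1 - n / X) - X / (2 * q.totient)| ≤
          C * X * Real.exp (-(c * √(Real.log X))) := by
  obtain ⟨c, hc, hc1, C, hC, hchar⟩ := exists_norm_cesaroSum_vonMangoldtError_le hM hB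
  refine ⟨c, hc, hc1, C + 1, by positivity, ?_⟩
  intro X hX hlog q _ hq a ha
  have hone := one_le_mul_exp_neg_sqrt_log hX hlog hc1
  have hcount := abs_sum_one_sub_div_sub_le hX
  have hchar' := abs_totient_mul_cesaroSum_sub_le ha ⌊X⌋₊ (hchar X hX hlog q hq)
  set E := Real.exp (-(c * √(Real.log X)))
  set S := ∑ n ∈ Finset.Icc 1 ⌊X⌋₊, residueClass a n * (1 - n / X)
  set R := ∑ n ∈ Finset.Icc 1 ⌊X⌋₊, (1 - (n : ℝ) / X)
  have htotient := one_le_totient_of_neZero (q := q)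
  have htri : |(q.totient : ℝ) * S - X / 2| ≤ q.totient * ((C + 1) * X * E) := by
    have := abs_sub_le ((q.totient : ℝ) * S) R (X / 2)
    nlinarith
  have hdiv : S - X / (2 * q.totient) = ((q.totient : ℝ) * S - X / 2) / q.totient := by
    field_simp
  rw [hdiv, abs_div, abs_of_pos (show (0 : ℝ) < q.totient by linarith), div_le_iff₀ (by linarith)]
  linarith

end ResidueClass

section Chebyshev

open ArithmeticFunction.vonMangoldt (residueClass residueClass_nonneg residueClass_le)

variable {q : ℕ}

/-- Chebyshev's function `ψ(X; q, a)`, the sum of `Λ(n)` over the `n ≤ X` in a residue class. -/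
noncomputable def psiResidueClass (a : ZMod q) (X : ℝ) : ℝ :=
  ∑ n ∈ Finset.Icc 1 ⌊X⌋₊, residueClass a n

/-- Chebyshev's function `θ(X; q, a)`, the sum of `log p` over the primes `p ≤ X` in a residue
class. -/
noncomputable def thetaResidueClass (a : ZMod q) (X : ℝ) : ℝ :=
  ∑ p ∈ Finset.Icc 1 ⌊X⌋₊ with p.Prime ∧ ((p : ℕ) : ZMod q) = a, Real.log p

lemma half_log_le_log_of_half_le {X Y : ℝ} (hX : 0 < X) (hlog : 2 ≤ Real.log X) (hY : X / 2 ≤ Y) :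
    Real.log X / 2 ≤ Real.log Y := by
  have hle := Real.log_le_log (by positivity) hY
  rw [Real.log_div hX.ne' (by norm_num)] at hle
  linarith [Real.log_two_lt_d9]

lemma exp_neg_sqrt_log_le_sq {X Y c : ℝ} (hc : 0 ≤ c) (hX : 0 < X) (hlog : 2 ≤ Real.log X)
    (hY : X / 2 ≤ Y) :
    Real.exp (-(c * √(Real.log Y))) ≤ Real.exp (-(c / 4 * √(Real.log X))) ^ 2 := by
  have hsqrt : √(Real.log X) / 2 ≤ √(Real.log Y) := by
    refine Real.le_sqrt_of_sq_le ?_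
    rw [div_pow, Real.sq_sqrt (by linarith)]
    linarith [half_log_le_log_of_half_le hX hlog hY]
  rw [← Real.exp_nat_mul, Real.exp_le_exp]
  push_cast
  nlinarith

lemma exists_abs_rieszSum_residueClass_sub_le {M B : ℝ} (hM : 1 ≤ M) (hB : 0 < B) :
    ∃ c : ℝ, 0 < c ∧ c ≤ 1 / 4 ∧ ∃ C : ℝ, 0 < C ∧ ∀ X : ℝ, 0 < X → 2 ≤ Real.log X →
      ∀ (q : ℕ) [NeZero q], (q : ℝ) ≤ M * Real.log X ^ B → ∀ a : ZMod q, IsUnit a →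
        ∀ Y ∈ Icc (X / 2) (2 * X), |rieszSum (residueClass a) Y - 1 / q.totient * Y ^ 2 / 2| ≤
          C * X ^ 2 * Real.exp (-(c * √(Real.log X))) ^ 2 := by
  have hM' : 1 ≤ M * 2 ^ B :=
    one_le_mul_of_one_le_of_one_le hM (Real.one_le_rpow (by norm_num) hB.le)
  obtain ⟨c, hc, hc1, C, hC, hcesaro⟩ := exists_abs_cesaroSum_residueClass_sub_le hM' hB
  refine ⟨c / 4, by positivity, by linarith, 4 * C, by positivity, ?_⟩
  intro X hX hlog q _ hq a ha Y ⟨hXY, hYX⟩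
  have hY : 0 < Y := by linarith
  have hlogY := half_log_le_log_of_half_le hX hlog hXY
  have hqY : (q : ℝ) ≤ M * 2 ^ B * Real.log Y ^ B := by
    rw [mul_assoc, ← Real.mul_rpow (by norm_num) (by linarith)]
    refine hq.trans ?_
    gcongr
    linarith
  have hriesz : rieszSum (residueClass a) Y - 1 / q.totient * Y ^ 2 / 2 =
      Y * (∑ n ∈ Finset.Icc 1 ⌊Y⌋₊, residueClass a n * (1 - n / Y) - Y / (2 * q.totient)) := by
    rw [rieszSum_eq_mul_sum hY.ne']
    ring
  rw [hriesz, abs_mul, abs_of_pos hY]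
  calc _ ≤ Y * (C * Y * Real.exp (-(c * √(Real.log Y)))) := by
        gcongr
        exact hcesaro Y hY (by linarith) q hqY a ha
    _ ≤ 2 * X * (C * (2 * X) * Real.exp (-(c / 4 * √(Real.log X))) ^ 2) := by
        gcongr
        exact exp_neg_sqrt_log_le_sq hc.le hX hlog hXY
    _ = _ := by ring

theorem exists_abs_psiResidueClass_sub_le {M B : ℝ} (hM : 1 ≤ M) (hB : 0 < B) :
    ∃ c : ℝ, 0 < c ∧ c ≤ 1 / 4 ∧ ∃ C : ℝ, 0 < C ∧ ∀ X : ℝ, 0 < X → 2 ≤ Real.log X →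
      ∀ (q : ℕ) [NeZero q], (q : ℝ) ≤ M * Real.log X ^ B → ∀ a : ZMod q, IsUnit a →
        |psiResidueClass a X - X / q.totient| ≤ C * X * Real.exp (-(c * √(Real.log X))) := by
  obtain ⟨c, hc, hc1, C, hC, hriesz⟩ := exists_abs_rieszSum_residueClass_sub_le hM hB
  refine ⟨c, hc, hc1, 4 * C + 1, by positivity, ?_⟩
  intro X hX hlog q _ hq a ha
  specialize hriesz X hX hlog q hq a ha
  set δ := Real.exp (-(c * √(Real.log X)))
  have hδ0 : 0 < δ := Real.exp_pos _
  have hδ1 : δ ≤ 1 := Real.exp_le_one_iff.mpr (neg_nonpos.mpr (by positivity))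
  have hδX : δ * X ≤ X := mul_le_of_le_one_left hX.le hδ1
  have htotient : 1 / (q.totient : ℝ) ≤ 1 :=
    div_le_one_of_le₀ one_le_totient_of_neZero (Nat.cast_nonneg _)
  calc |psiResidueClass a X - X / q.totient|
      = |∑ n ∈ Finset.Icc 1 ⌊X⌋₊, residueClass a n - 1 / q.totient * X| := by
        rw [psiResidueClass, one_div_mul_eq_div]
    _ ≤ 1 / q.totient * (δ * X / 2) / 2 + 2 * (C * X ^ 2 * δ ^ 2) / (δ * X / 2) :=
        abs_sum_sub_le_of_rieszSum (residueClass_nonneg a) (by positivity) (by linarith)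
          fun Y hY ↦ hriesz Y ⟨by linarith [hY.1], by linarith [hY.2]⟩
    _ ≤ 1 * (δ * X / 2) / 2 + 2 * (C * X ^ 2 * δ ^ 2) / (δ * X / 2) := by gcongr
    _ = (4 * C + 1 / 4) * X * δ := by
        field_simp
        ring
    _ ≤ (4 * C + 1) * X * δ := by
        gcongr
        norm_num

variable (a : ZMod q) (X : ℝ)

lemma thetaResidueClass_nonneg : 0 ≤ thetaResidueClass a X :=
  Finset.sum_nonneg fun n _ ↦ Real.log_natCast_nonneg n

lemma thetaResidueClass_le_theta : thetaResidueClass a X ≤ Chebyshev.theta X :=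
  Finset.sum_le_sum_of_subset_of_nonneg
    (Finset.monotone_filter_right _ fun _ _ hp ↦ hp.1) fun n _ _ ↦ Real.log_natCast_nonneg n

lemma psiResidueClass_sub_thetaResidueClass :
    psiResidueClass a X - thetaResidueClass a X =
      ∑ n ∈ Finset.Icc 1 ⌊X⌋₊ with ¬ n.Prime, residueClass a n := by
  rw [psiResidueClass, thetaResidueClass, Finset.sum_filter, Finset.sum_filter,
    ← Finset.sum_sub_distrib]
  refine Finset.sum_congr rfl fun n _ ↦ ?_
  by_cases hn : n.Prime <;> by_cases hna : (n : ZMod q) = a <;>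
    simp [hn, hna, ArithmeticFunction.vonMangoldt_apply_prime]

lemma abs_psiResidueClass_sub_thetaResidueClass_le {X : ℝ} (hX : 1 ≤ X) :
    |psiResidueClass a X - thetaResidueClass a X| ≤ 2 * √X * Real.log X := by
  rw [psiResidueClass_sub_thetaResidueClass,
    abs_of_nonneg (Finset.sum_nonneg fun n _ ↦ residueClass_nonneg a n)]
  refine le_trans ?_ (Chebyshev.psi_sub_theta_le hX)
  rw [Chebyshev.psi_sub_theta_eq_sum_not_prime]
  exact Finset.sum_le_sum fun n _ ↦ residueClass_le a n

lemma sqrt_mul_log_le_mul_exp_neg_sqrt_log {X c : ℝ} (hlog : 1 ≤ Real.log X) (hX : 0 < X)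
    (hc : c ≤ 1 / 4) : √X * Real.log X ≤ 64 * X * Real.exp (-(c * √(Real.log X))) := by
  set u := √(Real.log X)
  have hu : 1 ≤ u := Real.one_le_sqrt.mpr hlog
  have hlogu : Real.log X = u ^ 2 := (Real.sq_sqrt (by linarith)).symm
  have hsqrt : √X = X * Real.exp (-(u ^ 2 / 2)) := by
    rw [← hlogu, Real.exp_neg, Real.exp_half, Real.exp_log hX, ← div_eq_mul_inv, Real.div_sqrt]
  calc √X * Real.log X = X * (u ^ 2 * Real.exp (-(u ^ 2 / 2))) := by rw [hsqrt, hlogu]; ring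
    _ ≤ X * (u ^ 2 * Real.exp (-(1 / 2 * u))) := by gcongr; nlinarith
    _ ≤ X * ((4 / (1 / 2)) ^ 2 * Real.exp (-(1 / 2 / 2 * u))) := by
        gcongr X * ?_
        exact sq_mul_exp_neg_le (by norm_num) (by linarith)
    _ ≤ X * ((4 / (1 / 2)) ^ 2 * Real.exp (-(c * u))) := by gcongr; linarith
    _ = 64 * X * Real.exp (-(c * u)) := by ring

lemma abs_thetaResidueClass_sub_le_of_log_le_two [NeZero q] {X c : ℝ} (hX : 0 < X)
    (hlog : Real.log X ≤ 2) (hc : 0 ≤ c) (hc1 : c ≤ 1 / 4) :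
    |thetaResidueClass a X - X / q.totient| ≤ 4 * X * Real.exp (-(c * √(Real.log X))) := by
  have hsqrt : √(Real.log X) ≤ 2 := Real.sqrt_le_iff.mpr ⟨by norm_num, by linarith⟩
  have hexp : 1 / 2 ≤ Real.exp (-(c * √(Real.log X))) := by
    have := Real.add_one_le_exp (-(c * √(Real.log X)))
    nlinarith [Real.sqrt_nonneg (Real.log X)]
  have hlog4 : Real.log 4 ≤ 2 := by
    rw [show (4 : ℝ) = 2 ^ 2 by norm_num, Real.log_pow]
    push_cast
    linarith [Real.log_two_lt_d9]
  have htheta : thetaResidueClass a X ≤ 2 * X :=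
    (thetaResidueClass_le_theta a X).trans ((Chebyshev.theta_le_log4_mul_x hX.le).trans (by gcongr))
  have hmain : X / q.totient ≤ X := div_le_self hX.le one_le_totient_of_neZero
  have hmain0 : 0 ≤ X / q.totient := by positivity
  have hnonneg := thetaResidueClass_nonneg a X
  calc |thetaResidueClass a X - X / q.totient| ≤ 4 * X * (1 / 2) :=
        abs_le.mpr ⟨by linarith, by linarith⟩
    _ ≤ _ := by gcongr

theorem siegel_walfisz {M B : ℝ} (hM : 1 ≤ M) (hB : 0 < B) :
    ∃ c : ℝ, 0 < c ∧ ∃ C : ℝ, 0 < C ∧ ∀ X : ℝ, 0 < X → 1 ≤ Real.log X →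
      ∀ (q : ℕ) [NeZero q], (q : ℝ) ≤ M * Real.log X ^ B → ∀ a : ZMod q, IsUnit a →
        |thetaResidueClass a X - X / q.totient| ≤ C * X * Real.exp (-(c * √(Real.log X))) := by
  obtain ⟨c, hc, hc1, C, hC, hpsi⟩ := exists_abs_psiResidueClass_sub_le hM hB
  refine ⟨c, hc, C + 128, by positivity, ?_⟩
  intro X hX hlog q _ hq a ha
  rcases le_total 2 (Real.log X) with hlarge | hsmall
  · have hX1 : 1 ≤ X := (Real.log_nonneg_iff hX).mp (by linarith)
    have hdiff := abs_psiResidueClass_sub_thetaResidueClass_le a hX1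
    rw [abs_sub_comm] at hdiff
    have hsqrt := sqrt_mul_log_le_mul_exp_neg_sqrt_log hlog hX hc1
    linarith [abs_sub_le (thetaResidueClass a X) (psiResidueClass a X) (X / q.totient),
      hpsi X hX hlarge q hq a ha]
  · refine (abs_thetaResidueClass_sub_le_of_log_le_two a hX hsmall hc.le hc1).trans ?_
    gcongr
    linarith

end Chebyshev

section Congruences

variable {m q : ℕ} {r s z : ℤ}

lemma exists_modEq_and_modEq (hrs : r ≡ s [ZMOD (q.gcd m : ℤ)]) :
    ∃ z : ℤ, z ≡ r [ZMOD (q : ℤ)] ∧ z ≡ s [ZMOD (m : ℤ)] := by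
  obtain ⟨k, hk⟩ := hrs.dvd
  rw [Nat.gcd_eq_gcd_ab q m] at hk
  refine ⟨r + q * (q.gcdA m) * k, Int.modEq_iff_dvd.mpr ⟨-(q.gcdA m * k), by ring⟩,
    Int.modEq_iff_dvd.mpr ⟨q.gcdB m * k, ?_⟩⟩
  linear_combination hk

lemma isCoprime_of_modEq {n : ℤ} (hzr : z ≡ r [ZMOD n]) (hr : IsCoprime r n) : IsCoprime z n := by
  obtain ⟨k, hk⟩ := hzr.dvd
  rw [show z = r + n * -k by linear_combination -hk]
  exact hr.add_mul_left_left (-k)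

lemma isUnit_intCast_zmod_lcm (hzr : z ≡ r [ZMOD (q : ℤ)]) (hzs : z ≡ s [ZMOD (m : ℤ)])
    (hr : IsCoprime r (q : ℤ)) (hs : IsCoprime s (m : ℤ)) : IsUnit (z : ZMod (q.lcm m)) := by
  rw [ZMod.coe_int_isUnit_iff_isCoprime]
  have hmul := (isCoprime_of_modEq hzr hr).mul_right (isCoprime_of_modEq hzs hs)
  exact (hmul.of_isCoprime_of_dvd_right (mod_cast Nat.lcm_dvd_mul q m)).symm

lemma div_gcd_mul_eq_lcm (q m : ℕ) : q / q.gcd m * m = q.lcm m := by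
  rw [Nat.lcm, Nat.div_mul_right_comm (Nat.gcd_dvd_left q m)]

lemma lcm_le_mul_of_le {K : ℝ} (hq : (q : ℝ) ≤ K) : (q.lcm m : ℝ) ≤ m * K := by
  calc (q.lcm m : ℝ) ≤ m * q := by
        rw [mul_comm]
        exact_mod_cast Nat.div_le_self (q * m) (q.gcd m)
    _ ≤ m * K := by gcongr

lemma one_le_log_of_le_rpow {x B : ℝ} (hx : 1 ≤ x) (hB : 0 < B) (hq : 0 < q)
    (hqx : (q : ℝ) ≤ Real.log x ^ B) : 1 ≤ Real.log x := by
  by_contra! hlt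
  have hlt_one := Real.rpow_lt_one (Real.log_nonneg hx) hlt hB
  have hone : (1 : ℝ) ≤ q := Nat.one_le_cast.mpr hq
  linarith

lemma thetaSum_eq_thetaResidueClass (x : ℝ) (hzr : z ≡ r [ZMOD (q : ℤ)])
    (hzs : z ≡ s [ZMOD (m : ℤ)]) :
    thetaSum m s x q r = thetaResidueClass (z : ZMod (q.lcm m)) x := by
  have hcrt (p : ℕ) : ((p : ℤ) ≡ r [ZMOD (q : ℤ)] ∧ (p : ℤ) ≡ s [ZMOD (m : ℤ)]) ↔
      (p : ZMod (q.lcm m)) = z := by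
    rw [← Int.cast_natCast (R := ZMod (q.lcm m)), ZMod.intCast_eq_intCast_iff,
      ← Int.lcm_natCast_natCast, ← Int.modEq_and_modEq_iff_modEq_lcm]
    exact and_congr ⟨fun h ↦ h.trans hzr.symm, fun h ↦ h.trans hzr⟩
      ⟨fun h ↦ h.trans hzs.symm, fun h ↦ h.trans hzs⟩
  refine Finset.sum_congr (Finset.ext fun p ↦ ?_) fun _ _ ↦ rfl
  simp only [Finset.mem_filter, Finset.mem_range, Finset.mem_Icc, Order.lt_add_one_iff, hcrt]
  exact ⟨fun ⟨hle, hp, hz⟩ ↦ ⟨⟨hp.one_le, hle⟩, hp, hz⟩, fun ⟨⟨_, hle⟩, hp, hz⟩ ↦ ⟨hle, hp, hz⟩⟩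

lemma thetaSum_eq_zero (x : ℝ) (hrs : ¬ r ≡ s [ZMOD (q.gcd m : ℤ)]) : thetaSum m s x q r = 0 := by
  rw [thetaSum, Finset.filter_false_of_mem, Finset.sum_empty]
  rintro p _ ⟨_, hpr, hps⟩
  have hr := hpr.of_dvd (Int.natCast_dvd_natCast.mpr (Nat.gcd_dvd_left q m))
  have hs := hps.of_dvd (Int.natCast_dvd_natCast.mpr (Nat.gcd_dvd_right q m))
  exact hrs (hr.symm.trans hs)

end Congruences

end SiegelWalfisz

/-- Siegel–Walfisz with the extra congruence mod `m`: for `q ≤ (log x)^B`, `gcd(r,q) = 1`,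
`d = gcd(q,m)`, `q₀ = q/d`:
`ϑ_s(x;q,r) = δ·x/φ(q₀m) + O(x·exp(-C√(log x)))` where `δ = [r ≡ s (mod d)]`. -/
theorem siegel_walfisz_with_congruence (m : ℕ) (hm : 0 < m) (s : ℤ)
    (hs : IsCoprime s (m : ℤ)) (B : ℝ) (hB : 0 < B) :
    ∃ C : ℝ, 0 < C ∧ ∃ C' : ℝ, 0 < C' ∧ ∀ x : ℝ, 2 ≤ x →
      ∀ q : ℕ, 0 < q → (q : ℝ) ≤ Real.log x ^ B →
      ∀ r : ℤ, IsCoprime r (q : ℤ) →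
        |thetaSum m s x q r -
          (if r ≡ s [ZMOD (Nat.gcd q m : ℤ)] then
            x / (Nat.totient ((q / Nat.gcd q m) * m) : ℝ) else 0)|
        ≤ C' * x * Real.exp (-C * Real.log x ^ ((1 : ℝ) / 2)) := by
  have hm' : (1 : ℝ) ≤ m := Nat.one_le_cast.mpr hm
  obtain ⟨c, hc, C, hC, htheta⟩ := SiegelWalfisz.siegel_walfisz hm' hB
  refine ⟨c, hc, C, hC, ?_⟩
  intro x hx q hq hqx r hr
  split_ifs with hrs
  · obtain ⟨z, hzr, hzs⟩ := SiegelWalfisz.exists_modEq_and_modEq hrs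
    have : NeZero (q.lcm m) := ⟨Nat.lcm_ne_zero hq.ne' hm.ne'⟩
    have hlog : 1 ≤ Real.log x :=
      SiegelWalfisz.one_le_log_of_le_rpow (by linarith) hB hq hqx
    rw [SiegelWalfisz.thetaSum_eq_thetaResidueClass x hzr hzs, SiegelWalfisz.div_gcd_mul_eq_lcm,
      ← Real.sqrt_eq_rpow, neg_mul]
    exact htheta x (by linarith) hlog _ (SiegelWalfisz.lcm_le_mul_of_le hqx) _
      (SiegelWalfisz.isUnit_intCast_zmod_lcm hzr hzs hr hs)
  · rw [SiegelWalfisz.thetaSum_eq_zero x hrs, sub_zero, abs_zero]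
    positivity
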